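/- Let A = F ⊕ A_1 ⊕ A_2 ⊕ ··· be a graded algebra generated in degree 1 which is piecewise-Koszul with period p = 3 and jump degree d > 3. Then there exists an A∞-structure {m_q} on the Koszul dual E(A), with m_1 = 0, m_2 the Yoneda product, and m_q = 0 unless q = k(d−3)+2 for some k ∈ ℕ, such that (E(A), {m_q}) is an A∞-algebra generated by E^1(A) = Ext^1_A(F,F). -/

import Mathlib

noncomputable section

/-- The jump function `δ^d_p(n) = ((n − (n mod p))/p)·d + (n mod p)`. -/
def jump (d p n : ℕ) : ℕ := (n - n % p) / p * d + n % p

/-- A positively graded `F`-algebra `A = ⊕_{i≥0} A_i`. -/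
structure GradedAlg (F : Type) [Field F] where
  A : Type
  [ringA : Ring A]
  [algA : Algebra F A]
  grading : ℕ → Submodule F A
  [graded : GradedAlgebra grading]

attribute [instance] GradedAlg.ringA GradedAlg.algA GradedAlg.graded

namespace GradedAlg

variable {F : Type} [Field F] (𝒜 : GradedAlg F)

/-- The graded Jacobson radical `J = ⊕_{i≥1} A_i`, i.e. the irrelevant ideal. -/
def jideal : Ideal 𝒜.A := (HomogeneousIdeal.irrelevant 𝒜.grading).toIdeal

/-- The standing assumptions: `A_0` is a semisimple Artin algebra, `A` is generated in
degrees 0 and 1 (`A_i · A_j = A_{i+j}`), and `A_1` is finite dimensional over `F`. -/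
structure Standing : Prop where
  semisimple : IsSemisimpleRing ↥(𝒜.grading 0)
  artinian : IsArtinianRing ↥(𝒜.grading 0)
  gen01 : ∀ i j : ℕ, 𝒜.grading i * 𝒜.grading j = 𝒜.grading (i + j)
  findim : FiniteDimensional F ↥(𝒜.grading 1)

/-- A (ℤ-)graded module over the graded algebra `𝒜`. -/
structure GMod where
  M : Type
  [acg : AddCommGroup M]
  [modF : Module F M]
  [modA : Module 𝒜.A M]
  [tower : IsScalarTower F 𝒜.A M]
  [scomm : SMulCommClass 𝒜.A F M]
  grading : ℤ → Submodule F M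
  sup_eq_top : (⨆ j : ℤ, grading j) = ⊤
  indep : iSupIndep grading
  smul_mem : ∀ {i : ℕ} {j : ℤ} {a : 𝒜.A} {m : M},
    a ∈ 𝒜.grading i → m ∈ grading j → a • m ∈ grading ((i : ℤ) + j)

attribute [instance] GMod.acg GMod.modF GMod.modA GMod.tower GMod.scomm

variable {𝒜}

/-- A degree-zero morphism of graded modules. -/
structure GHom (M N : 𝒜.GMod) where
  lin : M.M →ₗ[𝒜.A] N.M
  grad : ∀ (j : ℤ) (x : M.M), x ∈ M.grading j → lin x ∈ N.grading j

/-- A graded module is generated in degree `s` if `A · M_s = M`. -/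
def GMod.GenInDeg (M : 𝒜.GMod) (s : ℤ) : Prop :=
  Submodule.span 𝒜.A (M.grading s : Set M.M) = ⊤

/-- `T` is the trivial graded module `A_0 = A/J`, concentrated in degree `0`. -/
def IsTrivialGMod (T : 𝒜.GMod) : Prop :=
  (∀ j : ℤ, j ≠ 0 → T.grading j = ⊥) ∧
    Nonempty (T.M ≃ₗ[𝒜.A] (𝒜.A ⧸ 𝒜.jideal))

/-- A minimal graded projective resolution
`⋯ → P_{n+1} → P_n → ⋯ → P_0 → M → 0` of the graded module `M`,
with finitely generated terms. -/
structure MinRes (M : 𝒜.GMod) where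
  P : ℕ → 𝒜.GMod
  d : ∀ n : ℕ, GHom (P (n + 1)) (P n)
  aug : GHom (P 0) M
  fg : ∀ n, Module.Finite 𝒜.A (P n).M
  projective : ∀ n, Module.Projective 𝒜.A (P n).M
  aug_surj : Function.Surjective aug.lin
  exact_aug : LinearMap.range (d 0).lin = LinearMap.ker aug.lin
  exact : ∀ n, LinearMap.range (d (n + 1)).lin = LinearMap.ker (d n).lin
  minimal : ∀ n, LinearMap.range (d n).lin ≤ 𝒜.jideal • (⊤ : Submodule 𝒜.A (P n).M)

variable (𝒜)

/-- `M` is a piecewise-Koszul module (period `p`, jump degree `d`, shift `s`):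
it has a minimal graded projective resolution with `P_n` generated in degree `δ^d_p(n) + s`. -/
def IsPKMod (p d : ℕ) (s : ℤ) (M : 𝒜.GMod) : Prop :=
  ∃ R : MinRes M, ∀ n : ℕ, (R.P n).GenInDeg ((jump d p n : ℤ) + s)

/-- `A` is a piecewise-Koszul algebra (period `p`, jump degree `d`): the trivial module `T`
admits a minimal graded projective resolution with `P_n` generated in degree `δ^d_p(n)`. -/
def IsPKAlg (p d : ℕ) (T : 𝒜.GMod) : Prop := IsPKMod 𝒜 p d 0 T

/-- A Koszul module: a minimal graded projective resolution with `P_n` generated in degree `n`. -/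
def IsKoszulMod (M : 𝒜.GMod) : Prop :=
  ∃ R : MinRes M, ∀ n : ℕ, (R.P n).GenInDeg (n : ℤ)

variable {𝒜}

section Ext

variable (T : 𝒜.GMod) {M : 𝒜.GMod}

/-- The space of `A`-linear maps `P_n → T` (cochains). -/
abbrev HomSp (R : MinRes M) (n : ℕ) := (R.P n).M →ₗ[𝒜.A] T.M

/-- Precomposition, as an `F`-linear map on cochains. -/
def precompF {M₁ M₂ : 𝒜.GMod} (g : M₁.M →ₗ[𝒜.A] M₂.M) :
    (M₂.M →ₗ[𝒜.A] T.M) →ₗ[F] (M₁.M →ₗ[𝒜.A] T.M) where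
  toFun f := f ∘ₗ g
  map_add' f₁ f₂ := by ext x; simp
  map_smul' c f := by ext x; simp

/-- Cocycles: maps `P_n → T` vanishing on the image of `P_{n+1}`. -/
def cocyc (R : MinRes M) (n : ℕ) : Submodule F (HomSp T R n) :=
  LinearMap.ker (precompF T (R.d n).lin)

/-- Coboundaries: maps `P_n → T` factoring through `d_{n-1}`. -/
def cobound (R : MinRes M) : (n : ℕ) → Submodule F (HomSp T R n)
  | 0 => ⊥
  | n + 1 => LinearMap.range (precompF T (R.d n).lin)

/-- The coboundaries, viewed inside the cocycles. -/
def extRel (R : MinRes M) (n : ℕ) : Submodule F ↥(cocyc T R n) :=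
  (cobound T R n).comap (cocyc T R n).subtype

/-- `Ext^n_A(M, T)`, computed from the resolution `R` of `M`. -/
abbrev ExtQ (R : MinRes M) (n : ℕ) := ↥(cocyc T R n) ⧸ extRel T R n

/-- The class in `Ext^n_A(M,T)` of a cocycle. -/
def extCls {R : MinRes M} {n : ℕ} {f : HomSp T R n} (hf : f ∈ cocyc T R n) :
    ExtQ T R n :=
  Submodule.Quotient.mk ⟨f, hf⟩

/-- Cochains of shift-degree `j`: maps `P_n → T` vanishing on every `(P_n)_i` with `i ≠ j`. -/
def homDeg (R : MinRes M) (n : ℕ) (j : ℤ) : Submodule F (HomSp T R n) where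
  carrier := {f | ∀ i : ℤ, i ≠ j → ∀ x ∈ (R.P n).grading i, f x = 0}
  add_mem' := fun hf hg i hi x hx => by
    simp only [LinearMap.add_apply, hf i hi x hx, hg i hi x hx, add_zero]
  zero_mem' := fun i hi x hx => rfl
  smul_mem' := fun c f hf i hi x hx => by
    simp only [LinearMap.smul_apply, hf i hi x hx, smul_zero]

/-- The shift-degree `j` component `Ext^n_A(M,T)_j`. -/
def extComp (R : MinRes M) (n : ℕ) (j : ℤ) : Submodule F (ExtQ T R n) :=
  Submodule.map (extRel T R n).mkQ ((homDeg T R n j).comap (cocyc T R n).subtype)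

/-- Transport `Ext` along an equality of cohomological degrees. -/
def extCast (R : MinRes M) {a b : ℕ} (h : a = b) : ExtQ T R a ≃ₗ[F] ExtQ T R b :=
  h ▸ LinearEquiv.refl F (ExtQ T R a)

/-- A chain map lifting of a cochain `g : P_j → T` over the resolutions `RM` of `M`
and `RT` of `T`. -/
structure ChainLift (RT : MinRes T) (RM : MinRes M) (j : ℕ)
    (g : (RM.P j).M →ₗ[𝒜.A] T.M) where
  ℓ : ∀ m k : ℕ, m = k + j → ((RM.P m).M →ₗ[𝒜.A] (RT.P k).M)
  comm_aug : RT.aug.lin ∘ₗ ℓ j 0 (by omega) = g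
  comm : ∀ k : ℕ, (RT.d k).lin ∘ₗ ℓ (k + j + 1) (k + 1) (by omega) =
    ℓ (k + j) k rfl ∘ₗ (RM.d (k + j)).lin

/-- `μ` is the (bigraded family of) Yoneda product(s)
`Ext^i(T,T) ⊗ Ext^j(M,T) → Ext^{i+j}(M,T)`: it is computed by composing a cocycle
`f : P_i → T` with a chain lifting of a cocycle `g : Q_j → T`. -/
def IsYonedaMul (RT : MinRes T) (RM : MinRes M)
    (μ : ∀ i j : ℕ, ExtQ T RT i →ₗ[F] ExtQ T RM j →ₗ[F] ExtQ T RM (i + j)) : Prop :=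
  ∀ (i j : ℕ) (f : HomSp T RT i) (hf : f ∈ cocyc T RT i)
    (g : HomSp T RM j) (hg : g ∈ cocyc T RM j)
    (L : ChainLift T RT RM j g)
    (hc : f ∘ₗ L.ℓ (i + j) i (by omega) ∈ cocyc T RM (i + j)),
    μ i j (extCls T hf) (extCls T hg) = extCls T hc

/-- `E(A) = Ext^*_A(A_0,A_0)` is generated in the ext-degrees belonging to `S`. -/
def ExtGenIn (RT : MinRes T)
    (μ : ∀ i j : ℕ, ExtQ T RT i →ₗ[F] ExtQ T RT j →ₗ[F] ExtQ T RT (i + j))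
    (S : Set ℕ) : Prop :=
  ∀ W : (n : ℕ) → Submodule F (ExtQ T RT n),
    (∀ n ∈ S, W n = ⊤) →
    (∀ (i j : ℕ) (x : ExtQ T RT i) (y : ExtQ T RT j),
      x ∈ W i → y ∈ W j → μ i j x y ∈ W (i + j)) →
    ∀ n, W n = ⊤

/-- `E(M) = Ext^*_A(M,A_0)` is generated in degree `0` as a graded `E(A)`-module. -/
def ExtModGenInZero (RT : MinRes T) (RM : MinRes M)
    (μ : ∀ i j : ℕ, ExtQ T RT i →ₗ[F] ExtQ T RM j →ₗ[F] ExtQ T RM (i + j)) : Prop :=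
  ∀ W : (n : ℕ) → Submodule F (ExtQ T RM n),
    W 0 = ⊤ →
    (∀ (i j : ℕ) (x : ExtQ T RT i) (y : ExtQ T RM j),
      y ∈ W j → μ i j x y ∈ W (i + j)) →
    ∀ n, W n = ⊤

end Ext

/-- `JM` is (a graded module isomorphic to) the submodule `J·M` of `M`. -/
def IsJM (M JM : 𝒜.GMod) : Prop :=
  ∃ e : JM.M ≃ₗ[𝒜.A] ↥(𝒜.jideal • (⊤ : Submodule 𝒜.A M.M)),
    ∀ (j : ℤ) (x : JM.M), x ∈ JM.grading j ↔ ((e x : M.M) ∈ M.grading j)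

/-- `Q` is (a graded module isomorphic to) the quotient `M/JM`. -/
def IsQuotJM (M Q : 𝒜.GMod) : Prop :=
  ∃ e : Q.M ≃ₗ[𝒜.A] (M.M ⧸ (𝒜.jideal • (⊤ : Submodule 𝒜.A M.M))),
    ∀ j : ℤ, Q.grading j = Submodule.map
      ((e.symm.toLinearMap ∘ₗ (𝒜.jideal • (⊤ : Submodule 𝒜.A M.M)).mkQ).restrictScalars F)
      (M.grading j)

/-- `W` is (isomorphic to) the `n`-th syzygy `Ω^n(M)` of `M` in the minimal graded
projective resolution `R`. -/
def IsSyzygy {M : 𝒜.GMod} (R : MinRes M) : ℕ → 𝒜.GMod → Prop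
  | 0, W => ∃ e : W.M ≃ₗ[𝒜.A] M.M,
      ∀ (j : ℤ) (x : W.M), x ∈ W.grading j ↔ e x ∈ M.grading j
  | 1, W => ∃ e : W.M ≃ₗ[𝒜.A] ↥(LinearMap.ker R.aug.lin),
      ∀ (j : ℤ) (x : W.M), x ∈ W.grading j ↔ ((e x : (R.P 0).M) ∈ (R.P 0).grading j)
  | (n + 2), W => ∃ e : W.M ≃ₗ[𝒜.A] ↥(LinearMap.ker (R.d n).lin),
      ∀ (j : ℤ) (x : W.M), x ∈ W.grading j ↔ ((e x : (R.P (n + 1)).M) ∈ (R.P (n + 1)).grading j)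

end GradedAlg

namespace AInf

variable (F : Type) [Field F]

theorem mem_decomp_le {n : ℕ} {rs : ℕ × ℕ}
    (h : rs ∈ ((Finset.range (n + 1)) ×ˢ (Finset.Icc 1 n)).filter
      fun rs => rs.1 + rs.2 ≤ n) :
    rs.1 + rs.2 ≤ n := (Finset.mem_filter.mp h).2

theorem mem_decomp_one_le {n : ℕ} {rs : ℕ × ℕ}
    (h : rs ∈ ((Finset.range (n + 1)) ×ˢ (Finset.Icc 1 n)).filter
      fun rs => rs.1 + rs.2 ≤ n) :
    1 ≤ rs.2 :=
  (Finset.mem_Icc.mp (Finset.mem_product.mp (Finset.mem_filter.mp h).1).2).1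

/-- The tuple `(x_1, …, x_r, m_s(x_{r+1}, …, x_{r+s}), x_{r+s+1}, …, x_n)` appearing in
the Stasheff identity `SI(n)`. -/
def insertAt {V : Type} [AddCommGroup V] [Module F V]
    (m : (q : ℕ) → MultilinearMap F (fun _ : Fin q => V) V)
    (n r s : ℕ) (hrs : r + s ≤ n) (hs : 1 ≤ s) (x : Fin n → V) :
    Fin (r + 1 + (n - r - s)) → V := fun k =>
  if hk : (k : ℕ) < r then x ⟨(k : ℕ), by omega⟩
  else if hk' : (k : ℕ) = r then
    m s (fun l => x ⟨r + (l : ℕ), by have := l.isLt; omega⟩)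
  else x ⟨(k : ℕ) + s - 1, by have := k.isLt; omega⟩

/-- A (minimal, bigraded) `A_∞`-algebra over `F`: a bigraded vector space
`E = ⊕ E^n_j` (first degree the cohomological/ext degree, second degree the
shift degree) together with multilinear operations `m_q` of degree `(2 − q, 0)`
satisfying the Stasheff identities `SI(n)` (with Koszul signs) on homogeneous
elements, and with `m_1 = 0`. -/
structure BigradedAInfty where
  V : Type
  [acg : AddCommGroup V]
  [modF : Module F V]
  comp : ℤ → ℤ → Submodule F V
  m : (q : ℕ) → MultilinearMap F (fun _ : Fin q => V) V
  m_one : m 1 = 0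
  sup_comp : (⨆ n : ℤ, ⨆ j : ℤ, comp n j) = ⊤
  hom_degree : ∀ (q : ℕ), 1 ≤ q → ∀ (ι σ : Fin q → ℤ) (x : Fin q → V),
    (∀ t, x t ∈ comp (ι t) (σ t)) →
    m q x ∈ comp ((∑ t, ι t) + 2 - q) (∑ t, σ t)
  stasheff : ∀ (n : ℕ) (ι σ : Fin n → ℤ) (x : Fin n → V),
    (∀ t, x t ∈ comp (ι t) (σ t)) →
    ∑ rs ∈ (((Finset.range (n + 1)) ×ˢ (Finset.Icc 1 n)).filter
        fun rs => rs.1 + rs.2 ≤ n).attach,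
      (((Int.negOnePow ((rs.1.1 : ℤ) + (rs.1.2 : ℤ) * ((n - rs.1.1 - rs.1.2 : ℕ) : ℤ) +
          (rs.1.2 : ℤ) *
            ∑ t ∈ Finset.univ.filter (fun t : Fin n => (t : ℕ) < rs.1.1), ι t)) : ℤˣ) : ℤ) •
        m (rs.1.1 + 1 + (n - rs.1.1 - rs.1.2))
          (insertAt F m n rs.1.1 rs.1.2 (mem_decomp_le rs.2) (mem_decomp_one_le rs.2) x)
      = 0

attribute [instance] BigradedAInfty.acg BigradedAInfty.modF

variable {F}

/-- The ext-degree-`n` component `E^n = ⊕_j E^n_j`. -/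
def Edeg (S : BigradedAInfty F) (n : ℤ) : Submodule F S.V := ⨆ j : ℤ, S.comp n j

variable (F)

open GradedAlg in
/-- The bigraded `A_∞`-algebra `S` is an `A_∞`-structure *on the Koszul dual `E(A)`*:
its components vanish in negative ext-degrees and are identified with the bigraded Ext
groups `Ext^n_A(A_0,A_0)_j` in such a way that `m_2` is the Yoneda product `μ`. -/
structure AInftyOnExt {F : Type} [Field F] (𝒜 : GradedAlg F) (T : 𝒜.GMod)
    (R : GradedAlg.MinRes T)
    (μ : ∀ i j : ℕ, ExtQ T R i →ₗ[F] ExtQ T R j →ₗ[F] ExtQ T R (i + j))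
    (S : BigradedAInfty F) where
  comp_neg : ∀ n j : ℤ, n < 0 → S.comp n j = ⊥
  ψ : ∀ n : ℕ, ↥(Edeg S (n : ℤ)) ≃ₗ[F] ExtQ T R n
  ψ_comp : ∀ (n : ℕ) (j : ℤ),
    Submodule.map (ψ n).toLinearMap
        ((S.comp (n : ℤ) j).comap (Edeg S (n : ℤ)).subtype) = extComp T R n j
  ψ_mul : ∀ (i j : ℕ) (x y : S.V) (hx : x ∈ Edeg S (i : ℤ)) (hy : y ∈ Edeg S (j : ℤ))
    (hm : S.m 2 ![x, y] ∈ Edeg S ((i + j : ℕ) : ℤ)),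
    ψ (i + j) ⟨S.m 2 ![x, y], hm⟩ = μ i j (ψ i ⟨x, hx⟩) (ψ j ⟨y, hy⟩)

variable {F}

/-- `E` is generated by `E^1` as an `A_∞`-algebra: for every `n ≥ 2`,
`E^n = Σ_{i+j=n} m_2(E^i ⊗ E^j) + Σ m_q(E^{i_1} ⊗ ⋯ ⊗ E^{i_q})`, the sums running over
decompositions `i_1 + ⋯ + i_q + 2 − q = n` with all `i_t ≥ 1`. -/
def GeneratedByE1 (S : BigradedAInfty F) : Prop :=
  ∀ n : ℤ, 2 ≤ n →
    Edeg S n = Submodule.span F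
      {v : S.V | ∃ (q : ℕ) (ι : Fin q → ℤ) (x : Fin q → S.V),
        2 ≤ q ∧ (∀ t, 1 ≤ ι t ∧ x t ∈ Edeg S (ι t)) ∧
        ((∑ t, ι t) + 2 - q = n) ∧ v = S.m q x}

/-- A reduced `(2,l)`-algebra `E` is generated by `E^1`: for every `n ≥ 2`,
`E^n = Σ_{i+j=n, i,j≥1} m_2(E^i ⊗ E^j) + Σ m_l(E^{i_1} ⊗ ⋯ ⊗ E^{i_l})`, the second sum
over decompositions `i_1 + ⋯ + i_l + 2 − l = n` with all `i_t ≥ 1`. -/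
def ReducedGenByE1 (S : BigradedAInfty F) (l : ℕ) : Prop :=
  ∀ n : ℤ, 2 ≤ n →
    Edeg S n = Submodule.span F
      {v : S.V |
        (∃ (i j : ℤ) (x y : S.V), 1 ≤ i ∧ 1 ≤ j ∧ i + j = n ∧
          x ∈ Edeg S i ∧ y ∈ Edeg S j ∧ v = S.m 2 ![x, y]) ∨
        (∃ (ι : Fin l → ℤ) (x : Fin l → S.V),
          (∀ t, 1 ≤ ι t ∧ x t ∈ Edeg S (ι t)) ∧
          ((∑ t, ι t) + 2 - l = n) ∧ v = S.m l x)}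

end AInf

/-!
Let `X` be a homogeneous basis of the terms of positive homological degree in the minimal
resolution of the trivial module. The algebra `A` has a minimal model: one letter of `X` at a time,
one constructs a derivation of square zero on the free algebra on `X` whose linearization over `A`
is the resolution. Adjoin to `X` a letter of degree `-1`, dual to the unit, and perturb the
derivation by the commutator with it. The operations dual to the derivation are then an
`A_∞`-structure on the dual of the span of the letters, which is `Ext`: the Stasheff identities say
that the derivation has square zero, `m_1 = 0` is minimality, and `m_2` is the Yoneda product
because iterated Fox derivatives of the derivation provide the lifts of cochains to chain maps.

Generation by `E^1` is dual to the injectivity of the derivation on linear combinations of letters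
dual to `E^n`, `n ≥ 2`, even after discarding the words which contain the unit letter. This follows
from the exactness and the minimality of the resolution. Finally, `E^n` is concentrated in
shift-degree `w n`, and the operations preserve the shift-degree; when `w` is the function `δ^d_3`,
this leaves only the arities `k (d - 3) + 2`.
-/

namespace PiecewiseKoszul

open FreeAlgebra (ι algebraMapInv)

/-! ### Words in the free algebra -/

section Words

variable {R X M : Type*} [CommRing R] [AddCommGroup M] [Module R M]

variable (R) in
/-- The monomial of the free algebra spelled by a list of letters. -/
def word (l : List X) : FreeAlgebra R X := (l.map (ι R)).prod

@[simp] lemma word_nil : word R ([] : List X) = 1 := rfl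

lemma word_cons (x : X) (l : List X) : word R (x :: l) = ι R x * word R l := by simp [word]

lemma word_singleton (x : X) : word R [x] = ι R x := by simp [word]

lemma word_append (l l' : List X) : word R (l ++ l') = word R l * word R l' := by simp [word]

variable (R X) in
/-- The basis of the free algebra formed by the words. -/
def wordBasis : Module.Basis (List X) R (FreeAlgebra R X) :=
  (FreeAlgebra.basisFreeMonoid R X).reindex FreeMonoid.toList

lemma wordBasis_apply (l : List X) : wordBasis R X l = word R l := by
  simp only [wordBasis, Module.Basis.reindex_apply, FreeAlgebra.basisFreeMonoid]
  induction l with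
  | nil => simp [FreeAlgebra.equivMonoidAlgebraFreeMonoid]
  | cons x l ih =>
    rw [word_cons, ← ih]
    simp [FreeAlgebra.equivMonoidAlgebraFreeMonoid, FreeMonoid.lift_apply]

/-- The linear map on the free algebra with prescribed values on words. -/
def wordLift (f : List X → M) : FreeAlgebra R X →ₗ[R] M := (wordBasis R X).constr R f

@[simp] lemma wordLift_word (f : List X → M) (l : List X) : wordLift f (word R l) = f l := by
  rw [wordLift, ← wordBasis_apply, Module.Basis.constr_basis]

lemma span_range_word : Submodule.span R (Set.range (word R : List X → FreeAlgebra R X)) = ⊤ := by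
  rw [← (wordBasis R X).span_eq]
  congr 2
  exact funext fun l => (wordBasis_apply l).symm

lemma linearMap_ext_word {f g : FreeAlgebra R X →ₗ[R] M} (h : ∀ l, f (word R l) = g (word R l)) :
    f = g :=
  (wordBasis R X).ext fun l => by simpa only [wordBasis_apply] using h l

@[elab_as_elim]
lemma word_induction {p : FreeAlgebra R X → Prop} (zero : p 0)
    (add : ∀ t u, p t → p u → p (t + u)) (smul : ∀ (r : R) t, p t → p (r • t))
    (word : ∀ l, p (word R l)) (t : FreeAlgebra R X) : p t := by
  have ht : t ∈ Submodule.span R (Set.range (PiecewiseKoszul.word R)) := by simp [span_range_word]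
  induction ht using Submodule.span_induction with
  | mem _ h => obtain ⟨l, rfl⟩ := h; exact word l
  | zero => exact zero
  | add _ _ _ _ ht hu => exact add _ _ ht hu
  | smul r _ _ ht => exact smul r _ ht

end Words

/-! ### Koszul signs and derivations -/

section KoszulSign

variable (R : Type*) [CommRing R]

/-- The sign `(-1) ^ n` in `R`, for an integer `n`. -/
def koszulSign (n : ℤ) : R := ((n.negOnePow : ℤˣ) : ℤ)

variable {R}

lemma koszulSign_add (m n : ℤ) : koszulSign R (m + n) = koszulSign R m * koszulSign R n := by
  simp [koszulSign, Int.negOnePow_add]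

lemma koszulSign_two_mul (n : ℤ) : koszulSign R (2 * n) = 1 := by
  simp [koszulSign, Int.negOnePow_two_mul]

@[simp] lemma koszulSign_zero : koszulSign R 0 = 1 := by simp [koszulSign]

@[simp] lemma koszulSign_neg_one : koszulSign R (-1) = -1 := by
  simp [koszulSign, Int.negOnePow_neg]

@[simp] lemma koszulSign_one : koszulSign R 1 = -1 := by simp [koszulSign]

lemma koszulSign_sub_one (n : ℤ) : koszulSign R (n - 1) = -koszulSign R n := by
  rw [sub_eq_add_neg, koszulSign_add, koszulSign_neg_one, mul_neg_one]

lemma koszulSign_natCast_smul {M : Type*} [AddCommGroup M] [Module R M] (n : ℕ) (x : M) :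
    koszulSign R n • x = (-1 : ℤ) ^ n • x := by
  rw [koszulSign, ← Int.cast_smul_eq_zsmul R]
  simp [Int.negOnePow_def]

lemma koszulSign_mul_self (n : ℤ) : koszulSign R n * koszulSign R n = 1 := by
  rw [← koszulSign_add, ← two_mul, koszulSign_two_mul]

lemma prod_koszulSign {κ : Type*} (s : Finset κ) (f : κ → ℤ) :
    ∏ i ∈ s, koszulSign R (f i) = koszulSign R (∑ i ∈ s, f i) := by
  classical
  induction s using Finset.induction_on with
  | empty => simp
  | insert a s ha ih => rw [Finset.prod_insert ha, Finset.sum_insert ha, koszulSign_add, ih]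

lemma prod_map_koszulSign_sub_one (l : List ℤ) :
    (l.map fun n => koszulSign R (n - 1)).prod = koszulSign R (l.length + l.sum) := by
  induction l with
  | nil => simp
  | cons n l ih =>
    rw [List.map_cons, List.prod_cons, List.sum_cons, ih, List.length_cons, Nat.cast_add_one,
      show (l.length + 1 + (n + l.sum) : ℤ) = n + 1 + (l.length + l.sum) by ring,
      koszulSign_add (n + 1), koszulSign_sub_one, koszulSign_add n, koszulSign_one, mul_neg_one]

end KoszulSign

section Derivation

variable {R X : Type*} [CommRing R] (deg : X → ℤ) (c : X → FreeAlgebra R X)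

/-- The automorphism multiplying an element of degree `n` by `(-1) ^ n`. -/
def koszulAut : FreeAlgebra R X →ₐ[R] FreeAlgebra R X :=
  FreeAlgebra.lift R fun x => koszulSign R (deg x) • ι R x

@[simp] lemma koszulAut_ι (x : X) : koszulAut deg (ι R x) = koszulSign R (deg x) • ι R x := by
  simp [koszulAut]

/-- The value on a word of the odd derivation with values `c` on letters. -/
def koszulDerWord : List X → FreeAlgebra R X
  | [] => 0
  | x :: l => c x * word R l + koszulSign R (deg x) • (ι R x * koszulDerWord l)

/-- The odd derivation of the free algebra on graded letters which takes the values `c` on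
letters; the Koszul sign arises from moving the derivation past the left factor. -/
def koszulDer : FreeAlgebra R X →ₗ[R] FreeAlgebra R X := wordLift (koszulDerWord deg c)

@[simp] lemma koszulDer_one : koszulDer deg c 1 = 0 := by
  rw [← word_nil, koszulDer, wordLift_word, koszulDerWord]

@[simp] lemma koszulDer_algebraMap (r : R) : koszulDer deg c (algebraMap R _ r) = 0 := by
  rw [Algebra.algebraMap_eq_smul_one, map_smul, koszulDer_one, smul_zero]

@[simp] lemma koszulDer_ι (x : X) : koszulDer deg c (ι R x) = c x := by
  rw [← word_singleton, koszulDer, wordLift_word]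
  simp [koszulDerWord]

lemma koszulDer_ι_mul (x : X) (t : FreeAlgebra R X) :
    koszulDer deg c (ι R x * t) =
      c x * t + koszulSign R (deg x) • (ι R x * koszulDer deg c t) := by
  induction t using word_induction with
  | zero => simp
  | add t u ht hu => simp only [mul_add, map_add, ht, hu, smul_add]; abel
  | smul r t ht => simp only [mul_smul_comm, map_smul, ht, smul_add, smul_comm r]
  | word l => rw [← word_cons, koszulDer, wordLift_word, wordLift_word, koszulDerWord]

lemma koszulDer_mul (t u : FreeAlgebra R X) :
    koszulDer deg c (t * u) = koszulDer deg c t * u + koszulAut deg t * koszulDer deg c u := by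
  induction t using word_induction with
  | zero => simp
  | add t t' ht ht' => simp only [add_mul, map_add, ht, ht']; abel
  | smul r t ht => simp only [smul_mul_assoc, map_smul, ht, smul_add]
  | word l =>
    induction l with
    | nil => simp
    | cons x l ih =>
      rw [word_cons, mul_assoc, koszulDer_ι_mul, ih, koszulDer_ι_mul, map_mul, koszulAut_ι]
      simp only [mul_add, add_mul, mul_assoc, smul_add, smul_mul_assoc]
      abel

variable {deg c}

lemma koszulDer_koszulAut (hc : ∀ x, koszulAut deg (c x) = -(koszulSign R (deg x) • c x))
    (t : FreeAlgebra R X) :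
    koszulDer deg c (koszulAut deg t) = -koszulAut deg (koszulDer deg c t) := by
  induction t using FreeAlgebra.induction with
  | grade0 r => simp
  | grade1 x => simp [hc]
  | mul t u ht hu =>
    simp only [map_mul, koszulDer_mul, ht, hu, map_add]
    noncomm_ring
  | add t u ht hu => simp only [map_add, ht, hu, neg_add]

lemma koszulDer_koszulDer (hc : ∀ x, koszulAut deg (c x) = -(koszulSign R (deg x) • c x))
    (h : ∀ x, koszulDer deg c (c x) = 0) (t : FreeAlgebra R X) :
    koszulDer deg c (koszulDer deg c t) = 0 := by
  induction t using FreeAlgebra.induction with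
  | grade0 r => simp
  | grade1 x => simp [h]
  | mul t u ht hu => simp [ht, hu, koszulDer_mul, koszulDer_koszulAut hc]
  | add t u ht hu => simp [ht, hu]

end Derivation

/-! ### Fox derivatives -/

section Fox

variable {R X A : Type*} [CommRing R] [Ring A] [Algebra R A]

@[simp] lemma algebraMapInv_ι (x : X) : algebraMapInv (ι R x) = 0 := by simp [algebraMapInv]

@[simp] lemma lift_ι_self : FreeAlgebra.lift R (ι R : X → FreeAlgebra R X) = AlgHom.id R _ := by
  ext; simp

@[elab_as_elim]
lemma word_mul_ι_induction {p : FreeAlgebra R X → Prop} (zero : p 0)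
    (add : ∀ t u, p t → p u → p (t + u)) (smul : ∀ (r : R) t, p t → p (r • t))
    (one : p 1) (mul_ι : ∀ l x, p (word R l * ι R x)) (t : FreeAlgebra R X) : p t := by
  refine word_induction zero add smul (fun l => ?_) t
  rcases List.eq_nil_or_concat l with rfl | ⟨l, x, rfl⟩
  · simpa using one
  · rw [List.concat_eq_append, word_append, word_singleton]
    exact mul_ι l x

/-- The universal Fox derivative: it writes an element of the free algebra with zero constant
term as `∑ u_x x`, and returns the family of the left coefficients `u_x`. -/
def foxCoeff : FreeAlgebra R X →ₗ[R] (X →₀ FreeAlgebra R X) :=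
  wordLift fun l => if h : l = [] then 0 else Finsupp.single (l.getLast h) (word R l.dropLast)

/-- The Fox derivative `w x ↦ π(w) ⊗ x` with coefficients in `A`, where `π` is the algebra
homomorphism to `A` with values `a` on letters. -/
def foxDer (a : X → A) : FreeAlgebra R X →ₗ[R] (X →₀ A) :=
  Finsupp.mapRange.linearMap (FreeAlgebra.lift R a).toLinearMap ∘ₗ foxCoeff

@[simp] lemma foxCoeff_one : foxCoeff (1 : FreeAlgebra R X) = 0 := by
  rw [← word_nil, foxCoeff, wordLift_word, dif_pos rfl]

lemma foxCoeff_mul_ι (t : FreeAlgebra R X) (x : X) : foxCoeff (t * ι R x) = Finsupp.single x t := by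
  induction t using word_induction with
  | zero => simp
  | add t u ht hu => simp [add_mul, ht, hu]
  | smul r t ht => simp [ht]
  | word l => rw [← word_singleton, ← word_append, foxCoeff, wordLift_word]; simp

lemma foxDer_apply (a : X → A) (t : FreeAlgebra R X) (x : X) :
    foxDer a t x = FreeAlgebra.lift R a (foxCoeff t x) := by simp [foxDer]

@[simp] lemma foxDer_one (a : X → A) : foxDer a (1 : FreeAlgebra R X) = 0 := by simp [foxDer]

@[simp] lemma foxDer_mul_ι (a : X → A) (t : FreeAlgebra R X) (x : X) :
    foxDer a (t * ι R x) = Finsupp.single x (FreeAlgebra.lift R a t) := by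
  simp [foxDer, foxCoeff_mul_ι]

@[simp] lemma foxDer_ι (a : X → A) (x : X) : foxDer a (ι R x) = Finsupp.single x 1 := by
  simpa using foxDer_mul_ι (R := R) a 1 x

lemma foxDer_universal : foxDer (ι R) = (foxCoeff : FreeAlgebra R X →ₗ[R] _) := by
  ext t x
  simp [foxDer_apply]

lemma foxDer_mul (a : X → A) (t u : FreeAlgebra R X) :
    foxDer a (t * u) =
      FreeAlgebra.lift R a t • foxDer a u + algebraMapInv u • foxDer a t := by
  induction u using word_mul_ι_induction with
  | zero => simp
  | add u v hu hv => simp only [mul_add, map_add, hu, hv, smul_add, add_smul]; abel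
  | smul r u hu => simp only [mul_smul_comm, map_smul, hu, smul_add, smul_assoc, smul_comm r]
  | one => simp
  | mul_ι l x =>
    rw [← mul_assoc, foxDer_mul_ι, foxDer_mul_ι]
    simp

lemma lift_eq_linearCombination_foxDer (a : X → A) (t : FreeAlgebra R X) :
    FreeAlgebra.lift R a t = Finsupp.linearCombination A a (foxDer a t) +
      algebraMap R A (algebraMapInv t) := by
  induction t using word_mul_ι_induction with
  | zero => simp
  | add t u ht hu => simp only [map_add, ht, hu]; abel
  | smul r t ht =>
    rw [map_smul, map_smul (foxDer a), LinearMap.map_smul_of_tower, map_smul algebraMapInv, ht,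
      smul_add, smul_eq_mul, map_mul, Algebra.smul_def r (algebraMap R A _)]
  | one => simp
  | mul_ι l x => simp

lemma lift_eq_linearCombination_foxDer_of_augmentation_eq_zero (a : X → A) {t : FreeAlgebra R X}
    (ht : algebraMapInv t = 0) :
    FreeAlgebra.lift R a t = Finsupp.linearCombination A a (foxDer a t) := by
  rw [lift_eq_linearCombination_foxDer, ht, map_zero, add_zero]

lemma linearCombination_foxCoeff {t : FreeAlgebra R X} (ht : algebraMapInv t = 0) :
    Finsupp.linearCombination (FreeAlgebra R X) (ι R) (foxCoeff t) = t := by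
  rw [← foxDer_universal, ← lift_eq_linearCombination_foxDer_of_augmentation_eq_zero _ ht]
  simp

lemma foxCoeff_linearCombination (u : X →₀ FreeAlgebra R X) :
    foxCoeff (Finsupp.linearCombination (FreeAlgebra R X) (ι R) u) = u := by
  induction u using Finsupp.induction_linear with
  | zero => simp
  | add u v hu hv => simp [hu, hv]
  | single x t => simp [foxCoeff_mul_ι]

end Fox

/-! ### Bihomogeneous components -/

section Bigraded

variable {R X A : Type*} [CommRing R] [Ring A] [Algebra R A]

variable (R) in
/-- The span of the words of weight `N` and degree `j` in the free algebra on bigraded letters. -/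
def bigraded (wt deg : X → ℤ) (N j : ℤ) : Submodule R (FreeAlgebra R X) :=
  Submodule.span R (word R '' {l | (l.map wt).sum = N ∧ (l.map deg).sum = j})

variable {wt deg : X → ℤ} {N N' j j' : ℤ} {t u : FreeAlgebra R X}

lemma bigraded_le {S : Submodule R (FreeAlgebra R X)}
    (h : ∀ l : List X, (l.map wt).sum = N → (l.map deg).sum = j → word R l ∈ S) :
    bigraded R wt deg N j ≤ S :=
  Submodule.span_le.2 (Set.image_subset_iff.2 fun l hl => h l hl.1 hl.2)

lemma word_mem_bigraded (l : List X) :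
    word R l ∈ bigraded R wt deg (l.map wt).sum (l.map deg).sum :=
  Submodule.subset_span ⟨l, ⟨rfl, rfl⟩, rfl⟩

lemma ι_mem_bigraded (x : X) : ι R x ∈ bigraded R wt deg (wt x) (deg x) := by
  simpa [word_singleton] using word_mem_bigraded (R := R) (wt := wt) (deg := deg) [x]

lemma one_mem_bigraded : (1 : FreeAlgebra R X) ∈ bigraded R wt deg 0 0 :=
  word_mem_bigraded []

lemma mul_mem_bigraded (ht : t ∈ bigraded R wt deg N j) (hu : u ∈ bigraded R wt deg N' j') :
    t * u ∈ bigraded R wt deg (N + N') (j + j') := by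
  have hle : bigraded R wt deg N j * bigraded R wt deg N' j' ≤
      bigraded R wt deg (N + N') (j + j') := by
    rw [bigraded, bigraded, Submodule.span_mul_span, Submodule.span_le]
    rintro _ ⟨_, ⟨l, ⟨rfl, rfl⟩, rfl⟩, _, ⟨l', ⟨rfl, rfl⟩, rfl⟩, rfl⟩
    simpa [word_append] using word_mem_bigraded (R := R) (wt := wt) (deg := deg) (l ++ l')
  exact hle (Submodule.mul_mem_mul ht hu)

lemma bigraded_eq_bot_of_degree_neg (hdeg : ∀ x, 0 ≤ deg x) (hj : j < 0) :
    bigraded R wt deg N j = ⊥ :=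
  eq_bot_iff.2 <| bigraded_le fun l _ hl => absurd hl <| ne_of_gt <| hj.trans_le <|
    List.sum_nonneg <| by simpa using fun x _ => hdeg x

lemma bigraded_eq_bot_of_weight_neg (hwt : ∀ x, 0 < wt x) (hN : N < 0) :
    bigraded R wt deg N j = ⊥ :=
  eq_bot_iff.2 <| bigraded_le fun l hl _ => absurd hl <| ne_of_gt <| hN.trans_le <|
    List.sum_nonneg <| by simpa using fun x _ => (hwt x).le

lemma eq_algebraMap_of_mem_bigraded_zero (hwt : ∀ x, 0 < wt x) (ht : t ∈ bigraded R wt deg 0 j) :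
    t = algebraMap R _ (algebraMapInv t) := by
  suffices h : bigraded R wt deg 0 j ≤ LinearMap.eqLocus LinearMap.id
      (Algebra.linearMap R (FreeAlgebra R X) ∘ₗ algebraMapInv.toLinearMap) from h ht
  refine bigraded_le fun l hl _ => ?_
  cases l with
  | nil => simp
  | cons x l =>
    have : 0 ≤ (l.map wt).sum := List.sum_nonneg <| by simpa using fun y _ => (hwt y).le
    have := hwt x
    simp only [List.map_cons, List.sum_cons] at hl
    omega

lemma algebraMapInv_eq_zero_of_mem_bigraded (hN : N ≠ 0) (ht : t ∈ bigraded R wt deg N j) :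
    algebraMapInv t = 0 := by
  suffices h : bigraded R wt deg N j ≤ LinearMap.ker algebraMapInv.toLinearMap from h ht
  refine bigraded_le fun l hl _ => ?_
  cases l with
  | nil => exact absurd hl.symm hN
  | cons x l => simp [word_cons]

lemma koszulAut_of_mem_bigraded (ht : t ∈ bigraded R wt deg N j) :
    koszulAut deg t = koszulSign R j • t := by
  suffices h : bigraded R wt deg N j ≤ LinearMap.eqLocus (koszulAut deg).toLinearMap
      (koszulSign R j • LinearMap.id) from h ht
  clear ht
  refine bigraded_le fun l hN hl => ?_
  subst hN hl
  simp only [LinearMap.mem_eqLocus, AlgHom.toLinearMap_apply, LinearMap.smul_apply,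
    LinearMap.id_apply]
  induction l with
  | nil => simp
  | cons x l ih =>
    simp only [word_cons, map_mul, koszulAut_ι, ih, List.map_cons, List.sum_cons, koszulSign_add,
      smul_mul_smul_comm]

lemma lift_mem_of_mem_bigraded {𝒜 : ℤ → Submodule R A} [SetLike.GradedMonoid 𝒜] {a : X → A}
    (ha : ∀ x, a x ∈ 𝒜 (wt x)) (ht : t ∈ bigraded R wt deg N j) :
    FreeAlgebra.lift R a t ∈ 𝒜 N := by
  suffices h : bigraded R wt deg N j ≤ (𝒜 N).comap (FreeAlgebra.lift R a).toLinearMap from h ht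
  refine bigraded_le fun l hl _ => ?_
  subst hl
  rw [Submodule.mem_comap, AlgHom.toLinearMap_apply, word, map_list_prod, List.map_map]
  exact SetLike.list_prod_map_mem_graded l wt _ fun x _ => by simpa using ha x

lemma lift_eq_zero_of_mem_bigraded {a : X → A} (ha : ∀ x, deg x ≠ 0 → a x = 0) (hj : j ≠ 0)
    (ht : t ∈ bigraded R wt deg N j) : FreeAlgebra.lift R a t = 0 := by
  suffices h : bigraded R wt deg N j ≤ LinearMap.ker (FreeAlgebra.lift R a).toLinearMap from h ht
  refine bigraded_le fun l _ hl => ?_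
  obtain ⟨x, hx, hx0⟩ : ∃ x ∈ l, deg x ≠ 0 := by
    by_contra! h0
    exact hj (hl ▸ List.sum_eq_zero (by simpa using h0))
  rw [LinearMap.mem_ker, AlgHom.toLinearMap_apply, word, map_list_prod, List.map_map]
  exact List.prod_eq_zero (List.mem_map.2 ⟨x, hx, by simpa using ha x hx0⟩)

lemma lift_koszulAut {a : X → A} (ha : ∀ x, koszulSign R (deg x) • a x = a x)
    (t : FreeAlgebra R X) :
    FreeAlgebra.lift R a (koszulAut deg t) = FreeAlgebra.lift R a t := by
  suffices h : (FreeAlgebra.lift R a).comp (koszulAut deg) = FreeAlgebra.lift R a from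
    DFunLike.congr_fun h t
  ext x
  simp [ha]

lemma foxCoeff_mem_bigraded (ht : t ∈ bigraded R wt deg N j) (x : X) :
    foxCoeff t x ∈ bigraded R wt deg (N - wt x) (j - deg x) := by
  suffices h : bigraded R wt deg N j ≤
      (bigraded R wt deg (N - wt x) (j - deg x)).comap (Finsupp.lapply x ∘ₗ foxCoeff) from h ht
  refine bigraded_le fun l hN hj => ?_
  rw [Submodule.mem_comap, LinearMap.comp_apply, Finsupp.lapply_apply]
  rcases List.eq_nil_or_concat l with rfl | ⟨l, y, rfl⟩
  · simp
  rw [List.concat_eq_append, word_append, word_singleton, foxCoeff_mul_ι]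
  rcases eq_or_ne y x with rfl | hyx
  · simp only [List.concat_eq_append, List.map_append, List.map_cons, List.map_nil,
      List.sum_append, List.sum_singleton] at hN hj
    rw [Finsupp.single_eq_same, ← hN, ← hj, add_sub_cancel_right, add_sub_cancel_right]
    exact word_mem_bigraded l
  · rw [Finsupp.single_eq_of_ne hyx.symm]
    exact zero_mem _

lemma linearCombination_mem_bigraded {u : X →₀ FreeAlgebra R X}
    (hu : ∀ x, u x ∈ bigraded R wt deg (N - wt x) (j - deg x)) :
    Finsupp.linearCombination (FreeAlgebra R X) (ι R) u ∈ bigraded R wt deg N j := by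
  rw [Finsupp.linearCombination_apply]
  refine Submodule.sum_mem _ fun x _ => ?_
  simpa using mul_mem_bigraded (hu x) (ι_mem_bigraded x)

lemma koszulDer_mem_bigraded {c : X → FreeAlgebra R X}
    (hc : ∀ x, c x ∈ bigraded R wt deg (wt x) (deg x - 1)) (ht : t ∈ bigraded R wt deg N j) :
    koszulDer deg c t ∈ bigraded R wt deg N (j - 1) := by
  suffices h : bigraded R wt deg N j ≤
      (bigraded R wt deg N (j - 1)).comap (koszulDer deg c) from h ht
  clear ht
  refine bigraded_le fun l hN hj => ?_
  subst hN hj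
  rw [Submodule.mem_comap]
  induction l with
  | nil => simp
  | cons x l ih =>
    rw [word_cons, koszulDer_ι_mul, List.map_cons, List.map_cons, List.sum_cons, List.sum_cons]
    refine add_mem ?_ (Submodule.smul_mem _ _ ?_)
    · rw [add_sub_right_comm]
      exact mul_mem_bigraded (hc x) (word_mem_bigraded l)
    · rw [add_sub_assoc]
      exact mul_mem_bigraded (ι_mem_bigraded x) ih

lemma koszulDer_congr_of_mem_bigraded {c c' : X → FreeAlgebra R X} (hdeg : ∀ x, 0 ≤ deg x)
    (h : ∀ x, deg x ≤ j → c x = c' x) (ht : t ∈ bigraded R wt deg N j) :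
    koszulDer deg c t = koszulDer deg c' t := by
  suffices hle : bigraded R wt deg N j ≤
      LinearMap.eqLocus (koszulDer deg c) (koszulDer deg c') from hle ht
  clear ht
  refine bigraded_le fun l hN hj => ?_
  subst hN hj
  rw [LinearMap.mem_eqLocus]
  induction l with
  | nil => simp
  | cons x l ih =>
    have : 0 ≤ (l.map deg).sum := List.sum_nonneg <| by simpa using fun y _ => hdeg y
    have := hdeg x
    simp only [List.map_cons, List.sum_cons] at h
    rw [word_cons, koszulDer_ι_mul, koszulDer_ι_mul, h x (by omega),
      ih fun y hy => h y (by omega)]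

lemma koszulAut_of_mem_bigraded_sub_one {c : X → FreeAlgebra R X}
    (hc : ∀ x, c x ∈ bigraded R wt deg (wt x) (deg x - 1)) (x : X) :
    koszulAut deg (c x) = -(koszulSign R (deg x) • c x) := by
  rw [koszulAut_of_mem_bigraded (hc x), koszulSign_sub_one, neg_smul]

end Bigraded

/-! ### The minimal model of a graded algebra -/

section Choice

lemma exists_finsupp_forall {X M M' : Type*} [Zero M] [Zero M'] (u : X →₀ M)
    {P : X → M' → Prop} (zero : ∀ x, u x = 0 → P x 0) (h : ∀ x, u x ≠ 0 → ∃ v, P x v) :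
    ∃ V : X →₀ M', ∀ x, P x (V x) := by
  classical
  choose! v hv using h
  refine ⟨Finsupp.onFinset u.support (fun x => if u x = 0 then 0 else v x) (by simp +contextual),
    fun x => ?_⟩
  by_cases hx : u x = 0
  · simpa [hx] using zero x hx
  · simpa [hx] using hv x hx

lemma exists_forall_of_wellFounded {X M : Type*} [Zero M] {r : X → X → Prop}
    [DecidableRel r] (wf : WellFounded r) {Q : X → (X → M) → M → Prop}
    (step : ∀ x (c : X → M), (∀ y, r y x → Q y (fun z => if r z y then c z else 0) (c y)) →
      ∃ z, Q x (fun z => if r z x then c z else 0) z) :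
    ∃ c : X → M, ∀ x, Q x (fun z => if r z x then c z else 0) (c x) := by
  let c : X → M := wf.fix fun x c => Classical.epsilon (Q x fun z => if h : r z x then c z h else 0)
  refine ⟨c, fun x => ?_⟩
  induction x using wf.induction with
  | _ x ih =>
    have hx : c x = Classical.epsilon (Q x fun z => if r z x then c z else 0) := by
      exact wf.fix_eq _ x
    rw [hx]
    exact Classical.epsilon_spec (step x c ih)

end Choice

section FoxDerivation

variable {R X A : Type*} [CommRing R] [Ring A] [Algebra R A] {deg : X → ℤ}
  {c : X → FreeAlgebra R X} {a : X → A}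

lemma lift_koszulDer (hc : ∀ x, FreeAlgebra.lift R a (c x) = 0) (t : FreeAlgebra R X) :
    FreeAlgebra.lift R a (koszulDer deg c t) = 0 := by
  induction t using FreeAlgebra.induction with
  | grade0 r => simp
  | grade1 x => simp [hc]
  | mul t u ht hu => simp [koszulDer_mul, ht, hu]
  | add t u ht hu => simp [ht, hu]

/-- The differential of the free module on the letters determined by the values `c` of a
derivation of the free algebra: the linear part of `c`, with coefficients reduced to `A`. -/
def differentialOf (a : X → A) (c : X → FreeAlgebra R X) : (X →₀ A) →ₗ[A] (X →₀ A) :=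
  Finsupp.linearCombination A fun x => foxDer a (c x)

@[simp] lemma differentialOf_single (x : X) (r : A) :
    differentialOf a c (Finsupp.single x r) = r • foxDer a (c x) := by simp [differentialOf]

lemma foxDer_koszulDer (ha : ∀ x, koszulSign R (deg x) • a x = a x)
    (hc0 : ∀ x, algebraMapInv (c x) = 0) (hc : ∀ x, FreeAlgebra.lift R a (c x) = 0)
    (t : FreeAlgebra R X) :
    foxDer a (koszulDer deg c t) = differentialOf a c (foxDer a t) := by
  induction t using word_mul_ι_induction with
  | zero => simp
  | add t u ht hu => simp only [map_add, ht, hu]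
  | smul r t ht => rw [map_smul, map_smul, ht, map_smul, LinearMap.map_smul_of_tower]
  | one => simp
  | mul_ι l x =>
    rw [koszulDer_mul, map_add, koszulDer_ι, foxDer_mul_ι, foxDer_mul_ι, lift_koszulDer hc,
      foxDer_mul, lift_koszulAut ha, hc0]
    simp

lemma foxCoeff_koszulDer (hc0 : ∀ x, algebraMapInv (c x) = 0) (t : FreeAlgebra R X) :
    foxCoeff (koszulDer deg c t) = Finsupp.mapRange.linearMap (koszulDer deg c) (foxCoeff t) +
      Finsupp.linearCombination (FreeAlgebra R X) (fun x => foxCoeff (c x))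
        (Finsupp.mapRange.linearMap (koszulAut deg).toLinearMap (foxCoeff t)) := by
  induction t using word_mul_ι_induction with
  | zero => simp
  | add t u ht hu => simp only [map_add, ht, hu]; abel
  | smul r t ht =>
    simp only [map_smul, ht, smul_add]
    rw [LinearMap.map_smul_of_tower (Finsupp.linearCombination _ _)]
  | one => simp
  | mul_ι l x =>
    rw [koszulDer_mul, map_add, koszulDer_ι, foxCoeff_mul_ι, foxCoeff_mul_ι, ← foxDer_universal,
      foxDer_mul, hc0]
    simp [foxDer_universal]

lemma foxCoeff_koszulDer_apply {wt : X → ℤ} (hdeg : ∀ x, 0 ≤ deg x) (hwt : ∀ x, 0 < wt x)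
    (hc : ∀ x, c x ∈ bigraded R wt deg (wt x) (deg x - 1)) {t : FreeAlgebra R X} {x : X}
    (ht : ∀ y, deg x < deg y → foxCoeff t y = 0) :
    foxCoeff (koszulDer deg c t) x = koszulDer deg c (foxCoeff t x) := by
  rw [foxCoeff_koszulDer fun y => algebraMapInv_eq_zero_of_mem_bigraded (hwt y).ne' (hc y),
    Finsupp.add_apply, Finsupp.linearCombination_apply, Finsupp.sum, Finsupp.finsetSum_apply,
    Finset.sum_eq_zero fun y hy => ?_]
  · simp
  have hyx : deg y ≤ deg x := by
    by_contra! h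
    simp [ht y h] at hy
  have hcy := foxCoeff_mem_bigraded (hc y) x
  rw [bigraded_eq_bot_of_degree_neg hdeg (by omega), Submodule.mem_bot] at hcy
  rw [Finsupp.smul_apply, hcy, smul_zero]

end FoxDerivation

section MinimalModel

variable {R X A : Type*} [CommRing R] [Ring A] [Algebra R A]

/-- The elements of weight `N` supported on the letters of degree `j` in the free `A`-module on
bigraded letters. -/
def homogeneous (𝒜 : ℤ → Submodule R A) (wt deg : X → ℤ) (N j : ℤ) : Submodule R (X →₀ A) where
  carrier := {p | ∀ x, p x ∈ 𝒜 (N - wt x) ∧ (deg x ≠ j → p x = 0)}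
  add_mem' hp hq x := ⟨add_mem (hp x).1 (hq x).1, fun hx => by simp [(hp x).2 hx, (hq x).2 hx]⟩
  zero_mem' x := by simp
  smul_mem' r p hp x := ⟨Submodule.smul_mem _ r (hp x).1, fun hx => by simp [(hp x).2 hx]⟩

/-- A positively graded, connected algebra `A` together with a graded free resolution of its
augmentation ideal: the letters `x` are the generators, in homological degree `deg x` and weight
`wt x`, `D` is the differential and `a` is the augmentation from homological degree `0`. -/
structure IsFreeResolution (𝒜 : ℤ → Submodule R A) (wt deg : X → ℤ)
    (D : (X →₀ A) →ₗ[A] (X →₀ A)) (a : X → A) : Prop where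
  eq_bot_of_neg : ∀ N < 0, 𝒜 N = ⊥
  zero_eq_span : 𝒜 0 = Submodule.span R {1}
  algebraMap_injective : Function.Injective (algebraMap R A)
  wt_pos : ∀ x, 0 < wt x
  deg_nonneg : ∀ x, 0 ≤ deg x
  D_mem : ∀ x, D (Finsupp.single x 1) ∈ homogeneous 𝒜 wt deg (wt x) (deg x - 1)
  a_mem : ∀ x, a x ∈ 𝒜 (wt x)
  a_eq_zero : ∀ x, deg x ≠ 0 → a x = 0
  a_D : ∀ p, Finsupp.linearCombination A a (D p) = 0
  D_D : ∀ p, D (D p) = 0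
  exact : ∀ N j, ∀ p ∈ homogeneous 𝒜 wt deg N j, D p = 0 → Finsupp.linearCombination A a p = 0 →
    ∃ q ∈ homogeneous 𝒜 wt deg N (j + 1), D q = p
  surjective : ∀ N ≠ 0, ∀ r ∈ 𝒜 N,
    ∃ p ∈ homogeneous 𝒜 wt deg N 0, Finsupp.linearCombination A a p = r

/-- The derivation with values `c` on the letters is a differential on the free algebra whose
linearization over `A` is the differential `D`: it makes the free algebra the minimal model of the
algebra resolved by `D`. -/
structure IsMinimalModel (wt deg : X → ℤ) (D : (X →₀ A) →ₗ[A] (X →₀ A)) (a : X → A)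
    (c : X → FreeAlgebra R X) : Prop where
  mem : ∀ x, c x ∈ bigraded R wt deg (wt x) (deg x - 1)
  koszulDer_self : ∀ x, koszulDer deg c (c x) = 0
  foxDer_eq : ∀ x, foxDer a (c x) = D (Finsupp.single x 1)

/-- The differential `c` of the minimal model of `A`, built on the letters of degree less than
`n`. -/
structure IsPartialModel (wt deg : X → ℤ) (D : (X →₀ A) →ₗ[A] (X →₀ A)) (a : X → A)
    (c : X → FreeAlgebra R X) (n : ℤ) : Prop where
  mem : ∀ x, c x ∈ bigraded R wt deg (wt x) (deg x - 1)
  koszulDer_self : ∀ x, koszulDer deg c (c x) = 0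
  foxDer_eq : ∀ x, deg x < n → foxDer a (c x) = D (Finsupp.single x 1)
  eq_zero : ∀ x, n ≤ deg x → c x = 0

/-- Acyclicity of the partial minimal model in weight `N`: a cycle of degree less than `n - 1` whose
image in `A` vanishes is a boundary. -/
def ExactInWeight (wt deg : X → ℤ) (a : X → A) (c : X → FreeAlgebra R X) (n N : ℤ) : Prop :=
  ∀ j, j + 1 < n → ∀ t ∈ bigraded R wt deg N j, FreeAlgebra.lift R a t = 0 →
    koszulDer deg c t = 0 → ∃ u ∈ bigraded R wt deg N (j + 1), koszulDer deg c u = t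

variable {𝒜 : ℤ → Submodule R A} {wt deg : X → ℤ} {D : (X →₀ A) →ₗ[A] (X →₀ A)} {a : X → A}
  {c : X → FreeAlgebra R X} {n N j : ℤ} {t : FreeAlgebra R X}

namespace IsFreeResolution

lemma koszulSign_smul (H : IsFreeResolution 𝒜 wt deg D a) (x : X) :
    koszulSign R (deg x) • a x = a x := by
  rcases eq_or_ne (deg x) 0 with hx | hx
  · simp [hx]
  · simp [H.a_eq_zero x hx]

lemma foxDer_mem [SetLike.GradedMonoid 𝒜] (H : IsFreeResolution 𝒜 wt deg D a)
    (ht : t ∈ bigraded R wt deg N j) : foxDer a t ∈ homogeneous 𝒜 wt deg N j := fun x => by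
  rw [foxDer_apply]
  exact ⟨lift_mem_of_mem_bigraded H.a_mem (foxCoeff_mem_bigraded ht x), fun hx =>
    lift_eq_zero_of_mem_bigraded H.a_eq_zero (sub_ne_zero.2 hx.symm) (foxCoeff_mem_bigraded ht x)⟩

lemma exists_foxDer_eq_of_lift (H : IsFreeResolution 𝒜 wt deg D a)
    (lift_surj : ∀ i < N, ∀ r ∈ 𝒜 i, ∃ t ∈ bigraded R wt deg i 0, FreeAlgebra.lift R a t = r)
    {p : X →₀ A} (hp : p ∈ homogeneous 𝒜 wt deg N j) :
    ∃ t ∈ bigraded R wt deg N j, foxDer a t = p := by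
  obtain ⟨V, hV⟩ := exists_finsupp_forall p
    (P := fun x v => v ∈ bigraded R wt deg (N - wt x) (j - deg x) ∧ FreeAlgebra.lift R a v = p x)
    (fun x hx => ⟨zero_mem _, by simp [hx]⟩) fun x hx => by
      have hdeg : j - deg x = 0 := sub_eq_zero.2 (not_imp_comm.1 (hp x).2 hx).symm
      simpa only [hdeg] using lift_surj (N - wt x) (by have := H.wt_pos x; omega) (p x) (hp x).1
  refine ⟨_, linearCombination_mem_bigraded fun x => (hV x).1, ?_⟩
  ext x
  rw [foxDer_apply, foxCoeff_linearCombination, (hV x).2]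

lemma exists_lift_eq (H : IsFreeResolution 𝒜 wt deg D a) {r : A} (hr : r ∈ 𝒜 N) :
    ∃ t ∈ bigraded R wt deg N 0, FreeAlgebra.lift R a t = r := by
  obtain ⟨M, hM⟩ : ∃ M : ℕ, N < M := ⟨(N + 1).toNat, by omega⟩
  induction M generalizing N r with
  | zero =>
    rw [H.eq_bot_of_neg N (by omega), Submodule.mem_bot] at hr
    exact ⟨0, zero_mem _, by simp [hr]⟩
  | succ M ih =>
    rcases eq_or_ne N 0 with rfl | hN
    · rw [H.zero_eq_span, Submodule.mem_span_singleton] at hr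
      obtain ⟨s, rfl⟩ := hr
      exact ⟨s • 1, Submodule.smul_mem _ _ one_mem_bigraded, by simp⟩
    · obtain ⟨p, hp, rfl⟩ := H.surjective N hN r hr
      obtain ⟨t, ht, rfl⟩ := H.exists_foxDer_eq_of_lift (fun i hi r hr => ih hr (by omega)) hp
      exact ⟨t, ht, lift_eq_linearCombination_foxDer_of_augmentation_eq_zero a
        (algebraMapInv_eq_zero_of_mem_bigraded hN ht)⟩

lemma exists_foxDer_eq (H : IsFreeResolution 𝒜 wt deg D a) {p : X →₀ A}
    (hp : p ∈ homogeneous 𝒜 wt deg N j) : ∃ t ∈ bigraded R wt deg N j, foxDer a t = p :=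
  H.exists_foxDer_eq_of_lift (fun _ _ _ => H.exists_lift_eq) hp

end IsFreeResolution

namespace IsPartialModel

lemma koszulDer_koszulDer (M : IsPartialModel wt deg D a c n) (t : FreeAlgebra R X) :
    koszulDer deg c (koszulDer deg c t) = 0 :=
  PiecewiseKoszul.koszulDer_koszulDer (koszulAut_of_mem_bigraded_sub_one M.mem) M.koszulDer_self t

variable (H : IsFreeResolution 𝒜 wt deg D a) (M : IsPartialModel wt deg D a c n)

include H M

lemma algebraMapInv_eq_zero (x : X) : algebraMapInv (c x) = 0 :=
  algebraMapInv_eq_zero_of_mem_bigraded (H.wt_pos x).ne' (M.mem x)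

lemma lift_eq_zero (x : X) : FreeAlgebra.lift R a (c x) = 0 := by
  rcases lt_or_ge (deg x) n with hx | hx
  · rw [lift_eq_linearCombination_foxDer_of_augmentation_eq_zero a (M.algebraMapInv_eq_zero H x),
      M.foxDer_eq x hx, H.a_D]
  · rw [M.eq_zero x hx, map_zero]

lemma foxDer_koszulDer (t : FreeAlgebra R X) :
    foxDer a (koszulDer deg c t) = differentialOf a c (foxDer a t) :=
  PiecewiseKoszul.foxDer_koszulDer H.koszulSign_smul (M.algebraMapInv_eq_zero H)
    (M.lift_eq_zero H) t

lemma foxDer_koszulDer_of_mem [SetLike.GradedMonoid 𝒜] (hj : j < n)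
    (ht : t ∈ bigraded R wt deg N j) :
    foxDer a (koszulDer deg c t) = D (foxDer a t) := by
  have hD : Finsupp.linearCombination A (fun x => D (Finsupp.single x 1)) = D := by
    ext
    simp
  rw [M.foxDer_koszulDer H, ← LinearMap.congr_fun hD, differentialOf,
    Finsupp.linearCombination_apply, Finsupp.linearCombination_apply]
  refine Finsupp.sum_congr fun x hx => ?_
  have hdeg : deg x = j :=
    not_imp_comm.1 (H.foxDer_mem ht x).2 (Finsupp.mem_support_iff.1 hx)
  rw [M.foxDer_eq x (hdeg ▸ hj)]

lemma exists_koszulDer_foxCoeff_eq (hj : j + 1 < n)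
    (IH : ∀ i < N, ExactInWeight wt deg a c n i) {m : ℤ} (ht : t ∈ bigraded R wt deg N j)
    (hfox : foxDer a t = 0) (hder : koszulDer deg c t = 0)
    (htop : ∀ x, m < deg x → foxCoeff t x = 0) :
    ∃ V : X →₀ FreeAlgebra R X, ∀ x, V x ∈ bigraded R wt deg (N - wt x) (j + 1 - deg x) ∧
      FreeAlgebra.lift R a (V x) = 0 ∧
      (deg x ≠ m → V x = 0) ∧ (deg x = m → koszulDer deg c (V x) = foxCoeff t x) := by
  refine exists_finsupp_forall (foxCoeff t) (P := fun x v =>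
    v ∈ bigraded R wt deg (N - wt x) (j + 1 - deg x) ∧ FreeAlgebra.lift R a v = 0 ∧
      (deg x ≠ m → v = 0) ∧ (deg x = m → koszulDer deg c v = foxCoeff t x))
    (fun x hx => by simp [hx]) fun x hx => ?_
  rcases ne_or_eq (deg x) m with hm | rfl
  · exact ⟨0, by simp [hm]⟩
  have hux := foxCoeff_mem_bigraded ht x
  have hjx : 0 ≤ j - deg x := by
    by_contra! h
    rw [bigraded_eq_bot_of_degree_neg H.deg_nonneg h] at hux
    exact hx hux
  have hder' : koszulDer deg c (foxCoeff t x) = 0 := by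
    rw [← foxCoeff_koszulDer_apply H.deg_nonneg H.wt_pos M.mem htop, hder, map_zero,
      Finsupp.zero_apply]
  obtain ⟨v, hv, hvu⟩ := IH (N - wt x) (by have := H.wt_pos x; omega) (j - deg x)
    (by have := H.deg_nonneg x; omega) _ hux (by rw [← foxDer_apply, hfox, Finsupp.zero_apply])
    hder'
  rw [sub_add_eq_add_sub] at hv
  exact ⟨v, hv, lift_eq_zero_of_mem_bigraded H.a_eq_zero (by omega) hv, fun h => absurd rfl h,
    fun _ => hvu⟩

lemma exists_koszulDer_eq_of_foxDer_eq_zero (hN : N ≠ 0) (hj : j + 1 < n)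
    (IH : ∀ i < N, ExactInWeight wt deg a c n i) (ht : t ∈ bigraded R wt deg N j)
    (hfox : foxDer a t = 0) (hder : koszulDer deg c t = 0) :
    ∃ k ∈ bigraded R wt deg N (j + 1), foxDer a k = 0 ∧ koszulDer deg c k = t := by
  -- descending induction on the largest degree of a last letter of `t`
  obtain ⟨m, htop⟩ : ∃ m : ℕ, ∀ x, (m : ℤ) ≤ deg x → foxCoeff t x = 0 := by
    refine ⟨(j + 1).toNat, fun x hx => ?_⟩
    have hux := foxCoeff_mem_bigraded ht x
    rwa [bigraded_eq_bot_of_degree_neg H.deg_nonneg (by omega), Submodule.mem_bot] at hux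
  induction m generalizing t with
  | zero =>
    have h0 : foxCoeff t = 0 := Finsupp.ext fun x => htop x (H.deg_nonneg x)
    refine ⟨0, zero_mem _, map_zero _, ?_⟩
    rw [map_zero, ← linearCombination_foxCoeff (algebraMapInv_eq_zero_of_mem_bigraded hN ht), h0,
      map_zero]
  | succ m ih =>
    obtain ⟨V, hV⟩ := M.exists_koszulDer_foxCoeff_eq H hj IH (m := m) ht hfox hder fun x hx =>
      htop x (by push_cast; omega)
    set y := Finsupp.linearCombination (FreeAlgebra R X) (ι R) V
    have hVy : foxCoeff y = V := foxCoeff_linearCombination V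
    have hy : y ∈ bigraded R wt deg N (j + 1) := linearCombination_mem_bigraded fun x => (hV x).1
    have hfoxy : foxDer a y = 0 := by
      ext x
      rw [foxDer_apply, hVy, (hV x).2.1, Finsupp.zero_apply]
    have hdy : koszulDer deg c y ∈ bigraded R wt deg N j := by
      simpa using koszulDer_mem_bigraded M.mem hy
    obtain ⟨k, hk, hfoxk, hderk⟩ := ih (t := t - koszulDer deg c y) (sub_mem ht hdy)
      (by rw [map_sub, hfox, M.foxDer_koszulDer H, hfoxy, map_zero, sub_zero])
      (by rw [map_sub, hder, M.koszulDer_koszulDer, sub_zero]) fun x hx => by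
        rw [map_sub, Finsupp.sub_apply, foxCoeff_koszulDer_apply H.deg_nonneg H.wt_pos M.mem
          fun z hz => by rw [hVy, (hV z).2.2.1 (by omega)], hVy]
        rcases eq_or_ne (deg x) m with hm | hm
        · rw [(hV x).2.2.2 hm, sub_self]
        · rw [(hV x).2.2.1 hm, htop x (by push_cast; omega), map_zero, sub_zero]
    exact ⟨k + y, add_mem hk hy, by rw [map_add, hfoxk, hfoxy, add_zero],
      by rw [map_add, hderk, sub_add_cancel]⟩

lemma exactInWeight [SetLike.GradedMonoid 𝒜] (N : ℤ) : ExactInWeight wt deg a c n N := by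
  obtain ⟨K, hK⟩ : ∃ K : ℕ, N < K := ⟨(N + 1).toNat, by omega⟩
  induction K generalizing N with
  | zero =>
    intro j _ t ht _ _
    rw [bigraded_eq_bot_of_weight_neg H.wt_pos (by omega), Submodule.mem_bot] at ht
    exact ⟨0, zero_mem _, by rw [map_zero, ht]⟩
  | succ K ih =>
    intro j hj t ht hlift hder
    rcases eq_or_ne N 0 with rfl | hN
    · have h0 := eq_algebraMap_of_mem_bigraded_zero H.wt_pos ht
      rw [h0, AlgHom.commutes, map_eq_zero_iff _ H.algebraMap_injective] at hlift
      exact ⟨0, zero_mem _, by rw [h0, hlift, map_zero, map_zero]⟩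
    obtain ⟨q, hq, hDq⟩ := H.exact N j (foxDer a t) (H.foxDer_mem ht)
      (by rw [← M.foxDer_koszulDer_of_mem H (by omega) ht, hder, map_zero])
      (by rw [← lift_eq_linearCombination_foxDer_of_augmentation_eq_zero a
        (algebraMapInv_eq_zero_of_mem_bigraded hN ht), hlift])
    obtain ⟨y, hy, rfl⟩ := H.exists_foxDer_eq hq
    have hdy : koszulDer deg c y ∈ bigraded R wt deg N j := by
      simpa using koszulDer_mem_bigraded M.mem hy
    obtain ⟨k, hk, -, hderk⟩ := M.exists_koszulDer_eq_of_foxDer_eq_zero H hN hj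
      (fun i hi => ih i (by omega)) (sub_mem ht hdy)
      (by rw [map_sub, M.foxDer_koszulDer_of_mem H hj hy, hDq, sub_self])
      (by rw [map_sub, hder, M.koszulDer_koszulDer, sub_zero])
    exact ⟨k + y, add_mem hk hy, by rw [map_add, hderk, sub_add_cancel]⟩

lemma exists_extension [SetLike.GradedMonoid 𝒜] {x : X} (hx : deg x = n) :
    ∃ z ∈ bigraded R wt deg (wt x) (deg x - 1), koszulDer deg c z = 0 ∧
      foxDer a z = D (Finsupp.single x 1) := by
  obtain ⟨z, hz, hfox⟩ := H.exists_foxDer_eq (H.D_mem x)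
  obtain ⟨k, hk, hfoxk, hderk⟩ := M.exists_koszulDer_eq_of_foxDer_eq_zero H (H.wt_pos x).ne'
    (j := deg x - 1 - 1) (by omega) (fun i _ => M.exactInWeight H i)
    (koszulDer_mem_bigraded M.mem hz)
    (by rw [M.foxDer_koszulDer_of_mem H (by omega) hz, hfox, H.D_D]) (M.koszulDer_koszulDer z)
  rw [sub_add_cancel] at hk
  exact ⟨z - k, sub_mem hz hk, by rw [map_sub, hderk, sub_self],
    by rw [map_sub, hfox, hfoxk, sub_zero]⟩

end IsPartialModel

theorem IsFreeResolution.exists_isMinimalModel [SetLike.GradedMonoid 𝒜]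
    (H : IsFreeResolution 𝒜 wt deg D a) :
    ∃ c : X → FreeAlgebra R X, IsMinimalModel wt deg D a c := by
  have wf : WellFounded fun y x : X => deg y < deg x :=
    Subrelation.wf (fun {y x} h => show (deg y).toNat < (deg x).toNat by
      have := H.deg_nonneg y; omega) (measure fun x => (deg x).toNat).wf
  have hcongr (c c' : X → FreeAlgebra R X) {x : X} (h : ∀ y, deg y < deg x → c y = c' y)
      {t : FreeAlgebra R X} (ht : t ∈ bigraded R wt deg (wt x) (deg x - 1)) :
      koszulDer deg c t = koszulDer deg c' t :=
    koszulDer_congr_of_mem_bigraded H.deg_nonneg (fun y hy => h y (by omega)) ht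
  obtain ⟨c, hc⟩ := exists_forall_of_wellFounded wf
    (Q := fun x c z => z ∈ bigraded R wt deg (wt x) (deg x - 1) ∧ koszulDer deg c z = 0 ∧
      foxDer a z = D (Finsupp.single x 1)) fun x c hc => by
    have M : IsPartialModel wt deg D a (fun y => if deg y < deg x then c y else 0) (deg x) := by
      refine ⟨fun y => ?_, fun y => ?_, fun y hy => ?_, fun y hy => if_neg hy.not_gt⟩
      · split_ifs with hy
        exacts [(hc y hy).1, zero_mem _]
      · split_ifs with hy
        · rw [← (hc y hy).2.1]
          exact hcongr _ _ (fun z hz => by rw [if_pos (hz.trans hy), if_pos hz]) (hc y hy).1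
        · exact map_zero _
      · rw [if_pos hy, (hc y hy).2.2]
    exact M.exists_extension H rfl
  refine ⟨c, fun x => (hc x).1, fun x => ?_, fun x => (hc x).2.2⟩
  rw [← (hc x).2.1]
  exact hcongr _ _ (fun y hy => by rw [if_pos hy]) (hc x).1

end MinimalModel

/-! ### Adjoining the unit -/

section ChainLift

variable {R Y A : Type*} [CommRing R] [Ring A] [Algebra R A]

/-- The iterated Fox derivative `w x y ↦ g(y) π(w) ⊗ x`. -/
def secondFoxDer (a : Y → A) (g : Y → R) : FreeAlgebra R Y →ₗ[R] (Y →₀ A) :=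
  Finsupp.lsum R (fun y => g y • foxDer a) ∘ₗ foxCoeff

/-- The `A`-linear endomorphism of the free module on the letters which, up to sign, lifts the
cochain `g` to a chain map for `differentialOf a c`. -/
def liftOf (a : Y → A) (c : Y → FreeAlgebra R Y) (g : Y → R) : (Y →₀ A) →ₗ[A] (Y →₀ A) :=
  Finsupp.linearCombination A fun y => secondFoxDer a g (c y)

@[simp] lemma liftOf_single (a : Y → A) (c : Y → FreeAlgebra R Y) (g : Y → R) (y : Y) (r : A) :
    liftOf a c g (Finsupp.single y r) = r • secondFoxDer a g (c y) := by simp [liftOf]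

@[simp] lemma secondFoxDer_one (a : Y → A) (g : Y → R) : secondFoxDer a g 1 = 0 := by
  simp [secondFoxDer]

@[simp] lemma secondFoxDer_mul_ι (a : Y → A) (g : Y → R) (t : FreeAlgebra R Y) (y : Y) :
    secondFoxDer a g (t * ι R y) = g y • foxDer a t := by simp [secondFoxDer, foxCoeff_mul_ι]

lemma secondFoxDer_mul (a : Y → A) (g : Y → R) (t : FreeAlgebra R Y) {u : FreeAlgebra R Y}
    (hu : algebraMapInv u = 0) (hu' : ∀ y, algebraMapInv (foxCoeff u y) = 0) :
    secondFoxDer a g (t * u) = FreeAlgebra.lift R a t • secondFoxDer a g u := by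
  have hmul : foxCoeff (t * u) = t • foxCoeff u := by
    rw [← foxDer_universal, foxDer_mul, hu, zero_smul, add_zero, lift_ι_self, AlgHom.id_apply]
  have hsmul : t • foxCoeff u = (foxCoeff u).mapRange (fun w => t * w) (by simp) := by ext y; simp
  rw [secondFoxDer, LinearMap.comp_apply, LinearMap.comp_apply, hmul, hsmul, Finsupp.lsum_apply,
    Finsupp.lsum_apply, Finsupp.sum_mapRange_index (by simp), Finsupp.smul_sum]
  refine Finsupp.sum_congr fun y _ => ?_
  rw [LinearMap.smul_apply, LinearMap.smul_apply, foxDer_mul, hu' y, zero_smul, add_zero, smul_comm]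

variable {a : Y → A} {deg : Y → ℤ} {c : Y → FreeAlgebra R Y}

lemma secondFoxDer_koszulDer (ha : ∀ y, koszulSign R (deg y) • a y = a y)
    (hc0 : ∀ y, algebraMapInv (c y) = 0) (hc0' : ∀ x y, algebraMapInv (foxCoeff (c x) y) = 0)
    (hc : ∀ y, FreeAlgebra.lift R a (c y) = 0) (g : Y → R) (t : FreeAlgebra R Y) :
    secondFoxDer a g (koszulDer deg c t) =
      differentialOf a c (secondFoxDer a g t) + liftOf a c g (foxDer a t) := by
  induction t using word_mul_ι_induction with
  | zero => simp
  | add t u ht hu => simp only [map_add, ht, hu]; abel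
  | smul r t ht =>
    simp only [map_smul, ht, smul_add]
    rw [LinearMap.map_smul_of_tower (differentialOf a c),
      LinearMap.map_smul_of_tower (liftOf a c g)]
  | one => simp
  | mul_ι l x =>
    rw [foxDer_mul_ι, koszulDer_mul, map_add, secondFoxDer_mul_ι, foxDer_koszulDer ha hc0 hc,
      koszulDer_ι, secondFoxDer_mul _ _ _ (hc0 x) (hc0' x), secondFoxDer_mul_ι,
      LinearMap.map_smul_of_tower, lift_koszulAut ha, liftOf_single]

lemma differentialOf_liftOf (ha : ∀ y, koszulSign R (deg y) • a y = a y)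
    (hc0 : ∀ y, algebraMapInv (c y) = 0) (hc0' : ∀ x y, algebraMapInv (foxCoeff (c x) y) = 0)
    (hc : ∀ y, FreeAlgebra.lift R a (c y) = 0) (hd : ∀ y, koszulDer deg c (c y) = 0)
    (g : Y → R) (p : Y →₀ A) :
    differentialOf a c (liftOf a c g p) = -liftOf a c g (differentialOf a c p) := by
  rw [eq_neg_iff_add_eq_zero]
  induction p using Finsupp.induction_linear with
  | zero => simp
  | add p q hp hq =>
    simp only [map_add]
    rw [add_add_add_comm, hp, hq, add_zero]
  | single y r =>
    rw [liftOf_single, differentialOf_single, map_smul, map_smul, ← smul_add,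
      ← secondFoxDer_koszulDer ha hc0 hc0' hc, hd, map_zero, smul_zero]

end ChainLift

section Unit

variable {R X A : Type*} [CommRing R] [Ring A] [Algebra R A]

/-- The degrees of the letters after adjoining a letter of degree `-1`, which is dual to the unit
of the Koszul dual. -/
def unitalDeg (deg : X → ℤ) (y : Option X) : ℤ := y.elim (-1) deg

@[simp] lemma unitalDeg_none (deg : X → ℤ) : unitalDeg deg none = -1 := rfl

@[simp] lemma unitalDeg_some (deg : X → ℤ) (x : X) : unitalDeg deg (some x) = deg x := rfl

variable (R X) in
/-- The inclusion of the free algebra without the unit letter. -/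
def inclSome : FreeAlgebra R X →ₐ[R] FreeAlgebra R (Option X) :=
  FreeAlgebra.lift R fun x => ι R (some x)

@[simp] lemma inclSome_ι (x : X) : inclSome R X (ι R x) = ι R (some x) := by simp [inclSome]

lemma inclSome_word (l : List X) : inclSome R X (word R l) = word R (l.map some) := by
  simp [word, map_list_prod, Function.comp_def]

/-- The derivation `c` perturbed by the commutator with the unit letter. -/
def unitalDer (deg : X → ℤ) (c : X → FreeAlgebra R X) : Option X → FreeAlgebra R (Option X)
  | none => ι R none * ι R none
  | some x => inclSome R X (c x) + ι R none * ι R (some x) -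
      koszulSign R (deg x) • (ι R (some x) * ι R none)

variable {deg : X → ℤ} {c : X → FreeAlgebra R X} {a : X → A}

lemma koszulAut_inclSome (t : FreeAlgebra R X) :
    koszulAut (unitalDeg deg) (inclSome R X t) = inclSome R X (koszulAut deg t) := by
  suffices h : (koszulAut (unitalDeg deg)).comp (inclSome R X) =
      (inclSome R X).comp (koszulAut deg) from DFunLike.congr_fun h t
  ext x
  simp

lemma koszulDer_inclSome (t : FreeAlgebra R X) :
    koszulDer (unitalDeg deg) (unitalDer deg c) (inclSome R X t) =
      inclSome R X (koszulDer deg c t) + ι R none * inclSome R X t -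
        koszulAut (unitalDeg deg) (inclSome R X t) * ι R none := by
  induction t using FreeAlgebra.induction with
  | grade0 r => simp [Algebra.commutes]
  | grade1 x => simp [unitalDer]
  | mul t u ht hu =>
    simp only [map_mul, koszulDer_mul, ht, hu, map_add, koszulAut_inclSome]
    noncomm_ring
  | add t u ht hu => simp only [map_add, ht, hu, mul_add, add_mul]; abel

lemma koszulDer_unitalDer (hc : ∀ x, koszulAut deg (c x) = -(koszulSign R (deg x) • c x))
    (hd : ∀ x, koszulDer deg c (c x) = 0) (y : Option X) :
    koszulDer (unitalDeg deg) (unitalDer deg c) (unitalDer deg c y) = 0 := by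
  cases y with
  | none => simp [unitalDer, koszulDer_ι_mul, mul_assoc]
  | some x =>
    rw [unitalDer]
    simp only [map_add, map_sub, map_smul, koszulDer_inclSome, koszulDer_ι_mul, koszulDer_ι, hd,
      koszulAut_inclSome, hc, unitalDer, unitalDeg_none, unitalDeg_some, koszulSign_neg_one,
      map_neg, mul_add, add_mul, sub_mul, map_zero, mul_sub, smul_add, smul_sub, smul_mul_assoc,
      mul_smul_comm, mul_assoc, neg_mul, neg_smul, one_smul]
    abel

/-- The values on letters extended by zero to the unit letter. -/
def extendZero (a : X → A) (y : Option X) : A := y.elim 0 a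

@[simp] lemma extendZero_none (a : X → A) : extendZero a none = 0 := rfl

@[simp] lemma extendZero_some (a : X → A) (x : X) : extendZero a (some x) = a x := rfl

lemma lift_inclSome (a : X → A) (t : FreeAlgebra R X) :
    FreeAlgebra.lift R (extendZero a) (inclSome R X t) = FreeAlgebra.lift R a t := by
  suffices h : (FreeAlgebra.lift R (extendZero a)).comp (inclSome R X) = FreeAlgebra.lift R a from
    DFunLike.congr_fun h t
  ext x
  simp

lemma foxDer_inclSome (a : X → A) (t : FreeAlgebra R X) :
    foxDer (extendZero a) (inclSome R X t) = Finsupp.mapDomain some (foxDer a t) := by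
  induction t using word_mul_ι_induction with
  | zero => simp
  | add t u ht hu => simp only [map_add, ht, hu, Finsupp.mapDomain_add]
  | smul r t ht => simp only [map_smul, ht, Finsupp.mapDomain_smul]
  | one => simp
  | mul_ι l x => simp [lift_inclSome, Finsupp.mapDomain_single]

lemma foxDer_unitalDer_none : foxDer (extendZero a) (unitalDer deg c none) = 0 := by
  simp [unitalDer]

lemma foxDer_unitalDer_some (x : X) :
    foxDer (extendZero a) (unitalDer deg c (some x)) =
      Finsupp.mapDomain some (foxDer a (c x)) -
        koszulSign R (deg x) • Finsupp.single none (a x) := by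
  simp [unitalDer, foxDer_inclSome]

lemma lift_unitalDer (hc : ∀ x, FreeAlgebra.lift R a (c x) = 0) (y : Option X) :
    FreeAlgebra.lift R (extendZero a) (unitalDer deg c y) = 0 := by
  cases y with
  | none => simp [unitalDer]
  | some x => simp [unitalDer, lift_inclSome, hc]

lemma secondFoxDer_inclSome_none (a : X → A) (g : Option X → R) (t : FreeAlgebra R X) :
    secondFoxDer (extendZero a) g (inclSome R X t) none = 0 := by
  induction t using word_mul_ι_induction with
  | zero => simp
  | add t u ht hu => simp [ht, hu]
  | smul r t ht => simp [ht]
  | one => simp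
  | mul_ι l x => simp [foxDer_inclSome, Finsupp.mapDomain_of_notMem_range]

lemma secondFoxDer_unitalDer_none (g : Option X → R) (y : Option X) :
    secondFoxDer (extendZero a) g (unitalDer deg c y) none = algebraMap R A (g y) := by
  cases y with
  | none => simp [unitalDer, Algebra.smul_def]
  | some x =>
    rw [unitalDer, map_sub, map_add, map_smul, secondFoxDer_mul_ι, secondFoxDer_mul_ι]
    simp [secondFoxDer_inclSome_none, Algebra.smul_def]

end Unit

/-! ### Evaluation of tensors on lists of functionals -/

section DualEval

variable {R Y : Type*} [CommRing R]

/-- Contraction of the first tensor factor with a functional on the letters. -/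
def contract : (Y → R) →ₗ[R] FreeAlgebra R Y →ₗ[R] FreeAlgebra R Y where
  toFun f := wordLift fun
    | [] => 0
    | y :: l => f y • word R l
  map_add' f g := linearMap_ext_word fun l => by cases l <;> simp [add_smul, -word_nil]
  map_smul' r f := linearMap_ext_word fun l => by cases l <;> simp [mul_smul, -word_nil]

@[simp] lemma contract_one (f : Y → R) : contract f (1 : FreeAlgebra R Y) = 0 := by
  rw [← word_nil]
  exact wordLift_word _ _

@[simp] lemma contract_ι_mul (f : Y → R) (y : Y) (t : FreeAlgebra R Y) :
    contract f (ι R y * t) = f y • t := by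
  induction t using word_induction with
  | zero => simp
  | add t u ht hu => simp only [mul_add, map_add, ht, hu, smul_add]
  | smul r t ht => rw [mul_smul_comm, map_smul, ht, smul_comm]
  | word l =>
    rw [← word_cons]
    exact wordLift_word _ _

lemma contract_mul (f : Y → R) (t u : FreeAlgebra R Y) :
    contract f (t * u) = contract f t * u + algebraMapInv t • contract f u := by
  induction t using word_induction with
  | zero => simp
  | add t t' ht ht' => simp only [add_mul, map_add, ht, ht', add_smul]; abel
  | smul r t ht => simp only [smul_mul_assoc, map_smul, ht, smul_add, smul_eq_mul, mul_smul]
  | word l =>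
    cases l with
    | nil => simp
    | cons y l => simp [word_cons, mul_assoc]

/-- The value of a tensor on the tensor product of a list of functionals on the letters. -/
def dualEval : List (Y → R) → FreeAlgebra R Y →ₗ[R] R
  | [] => algebraMapInv.toLinearMap
  | f :: L => dualEval L ∘ₗ contract f

@[simp] lemma dualEval_nil (t : FreeAlgebra R Y) : dualEval [] t = algebraMapInv t := rfl

lemma dualEval_cons (f : Y → R) (L : List (Y → R)) (t : FreeAlgebra R Y) :
    dualEval (f :: L) t = dualEval L (contract f t) := rfl

lemma dualEval_of_ne_nil_one {L : List (Y → R)} (hL : L ≠ []) :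
    dualEval L (1 : FreeAlgebra R Y) = 0 := by
  obtain ⟨f, L, rfl⟩ := List.exists_cons_of_ne_nil hL
  rw [dualEval_cons, contract_one, map_zero]

lemma dualEval_mul (L : List (Y → R)) (t u : FreeAlgebra R Y) :
    dualEval L (t * u) =
      ∑ k ∈ Finset.range (L.length + 1), dualEval (L.take k) t * dualEval (L.drop k) u := by
  induction L generalizing t with
  | nil => simp
  | cons f L ih =>
    rw [dualEval_cons, contract_mul, map_add, ih, map_smul, List.length_cons,
      Finset.sum_range_succ' _ (L.length + 1)]
    simp [dualEval_cons]

lemma dualEval_append_add (L L' : List (Y → R)) (f g : Y → R) (t : FreeAlgebra R Y) :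
    dualEval (L ++ (f + g) :: L') t = dualEval (L ++ f :: L') t + dualEval (L ++ g :: L') t := by
  induction L generalizing t with
  | nil => simp [dualEval_cons]
  | cons _ _ ih => exact ih _

lemma dualEval_append_smul (L L' : List (Y → R)) (r : R) (f : Y → R) (t : FreeAlgebra R Y) :
    dualEval (L ++ (r • f) :: L') t = r * dualEval (L ++ f :: L') t := by
  induction L generalizing t with
  | nil => simp [dualEval_cons]
  | cons _ _ ih => exact ih _

lemma dualEval_append_zero (L L' : List (Y → R)) (t : FreeAlgebra R Y) :
    dualEval (L ++ 0 :: L') t = 0 := by simpa using dualEval_append_smul L L' 0 0 t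

/-- The operation on functionals dual to the map `c` from letters to tensors. -/
def dualOp (c : Y → FreeAlgebra R Y) (L : List (Y → R)) (y : Y) : R := dualEval L (c y)

lemma dualEval_koszulDer (deg : Y → ℤ) (c : Y → FreeAlgebra R Y) (L : List (Y → R))
    (t : FreeAlgebra R Y) :
    dualEval L (koszulDer deg c t) =
      ∑ r ∈ Finset.range (L.length + 1), ∑ k ∈ Finset.range (L.length - r + 1),
        dualEval ((L.take r).map ((fun y => koszulSign R (deg y)) * ·) ++
          dualOp c ((L.drop r).take k) :: L.drop (r + k)) t := by
  induction t using word_induction with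
  | zero => simp
  | add t u ht hu => simp only [map_add, ht, hu, Finset.sum_add_distrib]
  | smul r t ht => simp only [map_smul, ht, smul_eq_mul, Finset.mul_sum]
  | word l =>
    induction l generalizing L with
    | nil =>
      rw [word_nil, koszulDer_one, map_zero]
      exact (Finset.sum_eq_zero fun r _ => Finset.sum_eq_zero fun k _ =>
        dualEval_of_ne_nil_one (by simp)).symm
    | cons y l ih =>
      rw [word_cons, koszulDer_ι_mul, map_add, map_smul, dualEval_mul, add_comm]
      conv_rhs => rw [Finset.sum_range_succ']
      congr 1
      · cases L with
        | nil => simp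
        | cons f L =>
          rw [dualEval_cons, contract_ι_mul, map_smul, ih, List.length_cons, smul_smul,
            Finset.smul_sum]
          refine Finset.sum_congr rfl fun r _ => ?_
          rw [Finset.smul_sum, Nat.add_sub_add_right]
          refine Finset.sum_congr rfl fun k _ => ?_
          simp [dualEval_cons, Nat.add_right_comm r 1 k]
      · simp [dualEval_cons, dualOp]

lemma dualEval_map_mul {s : Y → R} {ε : ℤ → R} {L : List (Y → R)} {I : List ℤ}
    (h : List.Forall₂ (fun f i => s * f = ε i • f) L I) (L' : List (Y → R))
    (t : FreeAlgebra R Y) :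
    dualEval (L.map (s * ·) ++ L') t = (I.map ε).prod * dualEval (L ++ L') t := by
  induction h generalizing t with
  | nil => simp
  | cons hf _ ih =>
    rw [List.map_cons, hf, List.cons_append, dualEval_cons, map_smul, LinearMap.smul_apply,
      map_smul, ih, List.map_cons, List.prod_cons, smul_eq_mul, mul_assoc, List.cons_append,
      dualEval_cons]

lemma forall₂_of_dualEval_word_ne_zero {L : List (Y → R)} {l : List Y}
    (h : dualEval L (word R l) ≠ 0) : List.Forall₂ (fun f y => f y ≠ 0) L l := by
  induction L generalizing l with
  | nil =>
    cases l with
    | nil => exact .nil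
    | cons y l => simp [word_cons] at h
  | cons f L ih =>
    cases l with
    | nil => exact absurd (dualEval_of_ne_nil_one (by simp)) h
    | cons y l =>
      rw [word_cons, dualEval_cons, contract_ι_mul, map_smul, smul_eq_mul] at h
      exact .cons (left_ne_zero_of_mul h) (ih (right_ne_zero_of_mul h))

lemma exists_word_of_dualEval_ne_zero {wt deg : Y → ℤ} {N j : ℤ} {t : FreeAlgebra R Y}
    (ht : t ∈ bigraded R wt deg N j) {L : List (Y → R)} (h : dualEval L t ≠ 0) :
    ∃ l, List.Forall₂ (fun f y => f y ≠ 0) L l ∧ (l.map wt).sum = N ∧ (l.map deg).sum = j := by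
  by_contra! hl
  have hle : bigraded R wt deg N j ≤ LinearMap.ker (dualEval L) :=
    bigraded_le fun l hN hj => by
      by_contra hne
      exact hl l (forall₂_of_dualEval_word_ne_zero hne) hN hj
  exact h (hle ht)

lemma dualEval_single (l : List Y) (t : FreeAlgebra R Y) :
    dualEval (l.map fun y => ⇑(Finsupp.single y (1 : R))) t = (wordBasis R Y).repr t l := by
  classical
  suffices h : dualEval (l.map fun y => ⇑(Finsupp.single y (1 : R))) =
      Finsupp.lapply l ∘ₗ (wordBasis R Y).repr.toLinearMap from DFunLike.congr_fun h t
  refine linearMap_ext_word fun l' => ?_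
  rw [LinearMap.comp_apply, LinearEquiv.coe_coe, ← wordBasis_apply, Module.Basis.repr_self,
    wordBasis_apply, Finsupp.lapply_apply]
  induction l generalizing l' with
  | nil => cases l' <;> simp [word_cons]
  | cons x l ih =>
    cases l' with
    | nil => simpa using dualEval_of_ne_nil_one (by simp)
    | cons y l' =>
      rw [List.map_cons, word_cons, dualEval_cons, contract_ι_mul, map_smul, ih, smul_eq_mul]
      simp only [Finsupp.single_apply, List.cons.injEq]
      split_ifs <;> simp_all

end DualEval

/-! ### The operations dual to a derivation -/

section Lists

variable {α R : Type*}

lemma ofFn_update {n : ℕ} [DecidableEq (Fin n)] (x : Fin n → α) (i : Fin n) (u : α) :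
    List.ofFn (fun j => Function.update x i u j) =
      (List.ofFn x).take i ++ u :: (List.ofFn x).drop (i + 1) := by
  rw [← List.set_eq_take_cons_drop u (by simp)]
  refine List.ext_getElem (by simp) fun k _ _ => ?_
  simp [List.getElem_set, Function.update_apply, Fin.ext_iff, eq_comm]

lemma finite_forall₂_ne_zero [Zero R] {L : List (α → R)}
    (hL : ∀ f ∈ L, (Function.support f).Finite) :
    {l | List.Forall₂ (fun f y => f y ≠ 0) L l}.Finite := by
  induction L with
  | nil => exact (Set.finite_singleton []).subset fun l hl => List.forall₂_nil_left_iff.1 hl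
  | cons f L ih =>
    refine ((hL f (by simp)).image2 List.cons (ih fun g hg => hL g (by simp [hg]))).subset ?_
    intro l hl
    obtain ⟨y, l, hy, hl', rfl⟩ := List.forall₂_cons_left_iff.1 hl
    exact Set.mem_image2_of_mem hy hl'

end Lists

/-- A derivation of square zero of the free algebra on a bigraded set of letters which preserves
the weight, lowers the degree by one, and has neither constant nor linear part. It is determined
by its values `c` on the letters. -/
structure CobarDatum (R Y : Type*) [CommRing R] where
  wt : Y → ℤ
  deg : Y → ℤ
  c : Y → FreeAlgebra R Y
  c_mem : ∀ y, c y ∈ bigraded R wt deg (wt y) (deg y - 1)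
  koszulDer_c : ∀ y, koszulDer deg c (c y) = 0
  two_le_length : ∀ (l : List Y) (y : Y),
    (l.map wt).sum = wt y → (l.map deg).sum = deg y - 1 → 2 ≤ l.length
  finite : ∀ n, {y | deg y = n}.Finite

namespace CobarDatum

section Ops

variable {R Y : Type*} [CommRing R] (Z : CobarDatum R Y)

lemma algebraMapInv_c (y : Y) : algebraMapInv (Z.c y) = 0 := by
  suffices h : bigraded R Z.wt Z.deg (Z.wt y) (Z.deg y - 1) ≤
      LinearMap.ker algebraMapInv.toLinearMap from h (Z.c_mem y)
  refine bigraded_le fun l hN hj => ?_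
  cases l with
  | nil => simpa using Z.two_le_length [] y hN hj
  | cons z l => simp [word_cons]

lemma finite_support_dualOp {L : List (Y → R)} (hL : ∀ f ∈ L, (Function.support f).Finite) :
    (Function.support (dualOp Z.c L)).Finite := by
  refine ((finite_forall₂_ne_zero hL).biUnion fun l _ =>
    Z.finite ((l.map Z.deg).sum + 1)).subset fun y hy => ?_
  obtain ⟨l, hl, -, hj⟩ := exists_word_of_dualEval_ne_zero (Z.c_mem y) hy
  exact Set.mem_biUnion hl (by simp [hj])

/-- The operations dual to the derivation, before desuspension. -/
def barOp (q : ℕ) : MultilinearMap R (fun _ : Fin q => Y →₀ R) (Y →₀ R) where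
  toFun x := Finsupp.ofSupportFinite (dualOp Z.c (List.ofFn fun i => ⇑(x i)))
    (Z.finite_support_dualOp (by simp [List.mem_ofFn]))
  map_update_add' x i u v := by
    ext y
    simp only [Finsupp.ofSupportFinite_coe, Finsupp.add_apply, dualOp,
      Function.apply_update (fun _ (f : Y →₀ R) => ⇑f), ofFn_update, Finsupp.coe_add,
      dualEval_append_add]
  map_update_smul' x i r u := by
    ext y
    simp only [Finsupp.ofSupportFinite_coe, Finsupp.smul_apply, dualOp, smul_eq_mul,
      Function.apply_update (fun _ (f : Y →₀ R) => ⇑f), ofFn_update, Finsupp.coe_smul,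
      dualEval_append_smul]

lemma coe_barOp (q : ℕ) (x : Fin q → (Y →₀ R)) :
    ⇑(Z.barOp q x) = dualOp Z.c (List.ofFn fun i => ⇑(x i)) := rfl

lemma exists_letters_of_barOp_ne_zero {q : ℕ} {x : Fin q → (Y →₀ R)} {y : Y}
    (h : Z.barOp q x y ≠ 0) :
    ∃ w : Fin q → Y, (∀ t, x t (w t) ≠ 0) ∧ ∑ t, Z.wt (w t) = Z.wt y ∧
      ∑ t, Z.deg (w t) = Z.deg y - 1 := by
  obtain ⟨l, hl, hN, hj⟩ := exists_word_of_dualEval_ne_zero (Z.c_mem y) h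
  obtain rfl : q = l.length := by simpa using hl.length_eq
  refine ⟨l.get, fun t => ?_, ?_, ?_⟩
  · simpa using (List.forall₂_iff_get.1 hl).2 t (by simp) t.2
  · rw [← hN]
    exact Fin.sum_univ_fun_getElem l Z.wt
  · rw [← hj]
    exact Fin.sum_univ_fun_getElem l Z.deg

/-- The elements of cohomological degree `n`; a letter of degree `j` has cohomological degree
`j + 1`. -/
def degreePart (n : ℤ) : Submodule R (Y →₀ R) := Finsupp.supported R R {y | Z.deg y + 1 = n}

/-- The elements of cohomological degree `n` and weight `j`. -/
def comp (n j : ℤ) : Submodule R (Y →₀ R) :=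
  Finsupp.supported R R {y | Z.deg y + 1 = n ∧ Z.wt y = j}

variable {Z} {n j : ℤ} {f : Y →₀ R}

lemma mem_degreePart : f ∈ Z.degreePart n ↔ ∀ y, f y ≠ 0 → Z.deg y + 1 = n := by
  simp [degreePart, Finsupp.mem_supported, Set.subset_def]

lemma mem_comp : f ∈ Z.comp n j ↔ ∀ y, f y ≠ 0 → Z.deg y + 1 = n ∧ Z.wt y = j := by
  simp [comp, Finsupp.mem_supported, Set.subset_def]

lemma comp_le_degreePart : Z.comp n j ≤ Z.degreePart n :=
  Finsupp.supported_mono fun _ h => h.1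

variable (Z) in
lemma iSup_comp (n : ℤ) : ⨆ j, Z.comp n j = Z.degreePart n := by
  simp only [comp, degreePart, ← Finsupp.supported_iUnion]
  congr 1
  ext y
  simp

variable (Z) in
lemma iSup_iSup_comp : ⨆ n, ⨆ j, Z.comp n j = ⊤ := by
  simp only [iSup_comp, degreePart, ← Finsupp.supported_iUnion]
  rw [← Finsupp.supported_univ]
  congr 1
  ext y
  simp

variable {q : ℕ} {I J : Fin q → ℤ} {x : Fin q → (Y →₀ R)}

lemma barOp_mem_degreePart (hx : ∀ t, x t ∈ Z.degreePart (I t)) :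
    Z.barOp q x ∈ Z.degreePart ((∑ t, I t) + 2 - q) := by
  refine mem_degreePart.2 fun y hy => ?_
  obtain ⟨w, hw, -, hj⟩ := Z.exists_letters_of_barOp_ne_zero hy
  have hI : ∑ t, I t = ∑ t, (Z.deg (w t) + 1) :=
    Finset.sum_congr rfl fun t _ => (mem_degreePart.1 (hx t) _ (hw t)).symm
  rw [hI, Finset.sum_add_distrib, hj, Finset.sum_const, Finset.card_univ, Fintype.card_fin,
    nsmul_one]
  ring

lemma barOp_mem_comp (hx : ∀ t, x t ∈ Z.comp (I t) (J t)) :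
    Z.barOp q x ∈ Z.comp ((∑ t, I t) + 2 - q) (∑ t, J t) := by
  refine mem_comp.2 fun y hy => ⟨mem_degreePart.1 (barOp_mem_degreePart fun t =>
    comp_le_degreePart (hx t)) y hy, ?_⟩
  obtain ⟨w, hw, hN, -⟩ := Z.exists_letters_of_barOp_ne_zero hy
  rw [← hN]
  exact Finset.sum_congr rfl fun t _ => (mem_comp.1 (hx t) _ (hw t)).2

lemma barOp_eq_zero (h : ∀ (l : List Y) (y : Y), (l.map Z.wt).sum = Z.wt y →
    (l.map Z.deg).sum = Z.deg y - 1 → l.length ≠ q) : Z.barOp q = 0 := by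
  ext x y
  by_contra hne
  obtain ⟨w, -, hN, hj⟩ := Z.exists_letters_of_barOp_ne_zero hne
  refine h (List.ofFn w) y ?_ ?_ List.length_ofFn
  · rw [List.map_ofFn, List.sum_ofFn, ← hN]; rfl
  · rw [List.map_ofFn, List.sum_ofFn, ← hj]; rfl

variable (Z) in
/-- The automorphism `(-1) ^ (k n)` in cohomological degree `n`. -/
def signTwist (k : ℕ) : (Y →₀ R) →ₗ[R] (Y →₀ R) :=
  Finsupp.lsum R fun y => koszulSign R (k * (Z.deg y + 1)) • Finsupp.lsingle y

lemma signTwist_of_mem_degreePart (hf : f ∈ Z.degreePart n) (k : ℕ) :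
    Z.signTwist k f = koszulSign R (k * n) • f := by
  conv_rhs => rw [← Finsupp.sum_single f, Finsupp.smul_sum]
  refine Finsupp.sum_congr fun y hy => ?_
  rw [← mem_degreePart.1 hf y (Finsupp.mem_support_iff.1 hy)]
  rfl

variable (Z) in
/-- The `A_∞`-operations: the operations dual to the derivation, with the signs of the suspension
`m_q = s⁻¹ ∘ b_q ∘ s^{⊗ q}`. -/
def ainfOp (q : ℕ) : MultilinearMap R (fun _ : Fin q => Y →₀ R) (Y →₀ R) :=
  (Z.barOp q).compLinearMap fun i => Z.signTwist (q - 1 - (i : ℕ))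

lemma ainfOp_eq_zero (h : Z.barOp q = 0) : Z.ainfOp q = 0 := by
  rw [ainfOp, h]
  rfl

lemma ainfOp_one : Z.ainfOp 1 = 0 :=
  ainfOp_eq_zero <| barOp_eq_zero fun l y hN hj h => by
    have := Z.two_le_length l y hN hj
    omega

/-- The exponent `∑ (q - 1 - i) n_i` of the sign of the suspension on elements of degrees
`n_0, …, n_{q-1}`. -/
def suspensionExponent : List ℤ → ℤ
  | [] => 0
  | n :: l => l.length * n + suspensionExponent l

lemma suspensionExponent_append (l l' : List ℤ) :
    suspensionExponent (l ++ l') =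
      suspensionExponent l + l'.length * l.sum + suspensionExponent l' := by
  induction l with
  | nil => simp [suspensionExponent]
  | cons n l ih =>
    simp only [List.cons_append, suspensionExponent, ih, List.length_append, List.sum_cons]
    push_cast
    ring

lemma suspensionExponent_ofFn (I : Fin q → ℤ) :
    suspensionExponent (List.ofFn I) = ∑ i : Fin q, ((q - 1 - (i : ℕ) : ℕ) : ℤ) * I i := by
  induction q with
  | zero => simp [suspensionExponent]
  | succ q ih =>
    rw [List.ofFn_succ, suspensionExponent, ih, Fin.sum_univ_succ, List.length_ofFn]
    congr 1
    refine Finset.sum_congr rfl fun i _ => ?_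
    rw [Fin.val_succ, Nat.add_sub_cancel, Nat.sub_sub, Nat.add_comm 1]

lemma ainfOp_apply (hx : ∀ t, x t ∈ Z.degreePart (I t)) :
    Z.ainfOp q x = koszulSign R (suspensionExponent (List.ofFn I)) • Z.barOp q x := by
  rw [ainfOp, MultilinearMap.compLinearMap_apply]
  simp only [signTwist_of_mem_degreePart (hx _)]
  rw [MultilinearMap.map_smul_univ, prod_koszulSign, suspensionExponent_ofFn]

lemma ainfOp_mem_degreePart (hx : ∀ t, x t ∈ Z.degreePart (I t)) :
    Z.ainfOp q x ∈ Z.degreePart ((∑ t, I t) + 2 - q) := by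
  rw [ainfOp_apply hx]
  exact Submodule.smul_mem _ _ (barOp_mem_degreePart hx)

lemma ainfOp_mem_comp (hx : ∀ t, x t ∈ Z.comp (I t) (J t)) :
    Z.ainfOp q x ∈ Z.comp ((∑ t, I t) + 2 - q) (∑ t, J t) := by
  rw [ainfOp_apply fun t => comp_le_degreePart (hx t)]
  exact Submodule.smul_mem _ _ (barOp_mem_comp hx)

end Ops

end CobarDatum

section InsertTuple

variable {α β : Type*} {n r s : ℕ}

/-- The tuple obtained from `x` by replacing the entries with index in `[r, r + s)` by the single
entry `u`. -/
def insertTuple (n r s : ℕ) (hrs : r + s ≤ n) (hs : 1 ≤ s) (x : Fin n → α) (u : α) :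
    Fin (r + 1 + (n - r - s)) → α := fun k =>
  if hk : (k : ℕ) < r then x ⟨k, by omega⟩
  else if (k : ℕ) = r then u
  else x ⟨(k : ℕ) + s - 1, by have := k.isLt; omega⟩

/-- The entries of `x` with index in `[r, r + s)`. -/
def slice (n r s : ℕ) (hrs : r + s ≤ n) (x : Fin n → α) : Fin s → α :=
  fun l => x ⟨r + l, by have := l.isLt; omega⟩

variable (hrs : r + s ≤ n) (hs : 1 ≤ s) (x : Fin n → α)

lemma ofFn_insertTuple (u : α) :
    List.ofFn (insertTuple n r s hrs hs x u) =
      (List.ofFn x).take r ++ u :: (List.ofFn x).drop (r + s) := by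
  have hlen : ((List.ofFn x).take r).length = r := by simp; omega
  refine List.ext_getElem (by simp; omega) fun k h₁ h₂ => ?_
  rw [List.getElem_ofFn]
  rcases lt_trichotomy k r with hk | rfl | hk
  · rw [List.getElem_append_left (by omega)]
    simp [insertTuple, hk]
  · rw [List.getElem_append_right (by omega)]
    simp [insertTuple, hlen]
  · rw [List.getElem_append_right (by omega)]
    obtain ⟨j, rfl⟩ : ∃ j, k = r + 1 + j := ⟨k - (r + 1), by omega⟩
    simp only [hlen, show r + 1 + j - r = j + 1 by omega, List.getElem_cons_succ,
      List.getElem_drop, List.getElem_ofFn, insertTuple, show ¬ r + 1 + j < r by omega,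
      show r + 1 + j ≠ r by omega, dite_false, if_false]
    congr 2
    omega

lemma ofFn_slice : List.ofFn (slice n r s hrs x) = ((List.ofFn x).drop r).take s :=
  List.ext_getElem (by simp; omega) fun k _ _ => by simp [slice]

lemma apply_insertTuple (f : α → β) (u : α) (k) :
    f (insertTuple n r s hrs hs x u k) =
      insertTuple n r s hrs hs (fun t => f (x t)) (f u) k := by
  simp only [insertTuple]
  split_ifs <;> rfl

lemma insertTuple_forall₂ {p : α → β → Prop} {y : Fin n → β} {u : α} {v : β}
    (h : ∀ t, p (x t) (y t)) (hu : p u v) (k) :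
    p (insertTuple n r s hrs hs x u k) (insertTuple n r s hrs hs y v k) := by
  simp only [insertTuple]
  split_ifs
  exacts [h _, hu, h _]

end InsertTuple

lemma sum_subintervals {G : Type*} [AddCommMonoid G] (n : ℕ) (g : ℕ → ℕ → G)
    (h : ∀ r, g r 0 = 0) :
    ∑ rs ∈ (Finset.range (n + 1) ×ˢ Finset.Icc 1 n).filter (fun rs => rs.1 + rs.2 ≤ n),
        g rs.1 rs.2 =
      ∑ r ∈ Finset.range (n + 1), ∑ k ∈ Finset.range (n - r + 1), g r k := by
  rw [Finset.sum_filter, Finset.sum_product]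
  refine Finset.sum_congr rfl fun r hr => ?_
  rw [← Finset.sum_filter]
  refine Finset.sum_subset (fun k hk => ?_) fun k hk hk' => ?_
  · simp only [Finset.mem_filter, Finset.mem_Icc, Finset.mem_range] at hk hr ⊢
    omega
  · obtain rfl : k = 0 := by
      simp only [Finset.mem_filter, Finset.mem_Icc, Finset.mem_range] at hk hk' hr
      omega
    exact h r

namespace CobarDatum

variable {R Y : Type*} [CommRing R] {Z : CobarDatum R Y}

lemma stasheff_sign (A B C : List ℤ) :
    koszulSign R (A.length + B.length * C.length + B.length * A.sum) *
        (koszulSign R (suspensionExponent (A ++ (B.sum + 2 - B.length) :: C)) *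
          koszulSign R (suspensionExponent B)) =
      koszulSign R (suspensionExponent (A ++ (B ++ C))) * koszulSign R (A.length + A.sum) := by
  simp only [← koszulSign_add, suspensionExponent_append, suspensionExponent, List.length_append,
    List.length_cons]
  conv_rhs => rw [← mul_one (koszulSign R _), ← koszulSign_two_mul (C.length : ℤ),
    ← koszulSign_add]
  congr 1
  push_cast
  ring

lemma koszulSign_mul_coe {i : ℤ} {f : Y →₀ R} (hf : f ∈ Z.degreePart i) :
    (fun y => koszulSign R (Z.deg y)) * ⇑f = koszulSign R (i - 1) • ⇑f := by
  ext y
  by_cases hy : f y = 0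
  · simp [hy]
  · simp [← mem_degreePart.1 hf y hy]

lemma dualOp_nil : dualOp Z.c [] = 0 := funext Z.algebraMapInv_c

variable {n : ℕ} {I : Fin n → ℤ} {x : Fin n → (Y →₀ R)}

lemma ainfOp_insertTuple_apply (hx : ∀ t, x t ∈ Z.degreePart (I t)) {r k : ℕ} (hrk : r + k ≤ n)
    (hk : 1 ≤ k) (y : Y) :
    koszulSign R (r + k * (n - r - k : ℕ) + k * ((List.ofFn I).take r).sum) *
        Z.ainfOp (r + 1 + (n - r - k))
          (insertTuple n r k hrk hk x (Z.ainfOp k (slice n r k hrk x))) y =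
      koszulSign R (suspensionExponent (List.ofFn I)) *
        dualEval (((List.ofFn fun t => ⇑(x t)).take r).map
            ((fun y => koszulSign R (Z.deg y)) * ·) ++
          dualOp Z.c (((List.ofFn fun t => ⇑(x t)).drop r).take k) ::
            (List.ofFn fun t => ⇑(x t)).drop (r + k)) (Z.c y) := by
  have hslice : ∀ t, slice n r k hrk x t ∈ Z.degreePart (slice n r k hrk I t) := fun t => hx _
  have hall : List.Forall₂ (fun f i => (fun y => koszulSign R (Z.deg y)) * f =
      koszulSign R (i - 1) • f) (List.ofFn fun t => ⇑(x t)) (List.ofFn I) := by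
    rw [List.forall₂_iff_get]
    exact ⟨by simp, fun t h₁ h₂ => by simpa using koszulSign_mul_coe (hx ⟨t, by simpa using h₁⟩)⟩
  have hsum : ∑ t, slice n r k hrk I t = (((List.ofFn I).drop r).take k).sum := by
    rw [← ofFn_slice hrk I, List.sum_ofFn]
  rw [dualEval_map_mul (List.forall₂_take r hall), prod_map_koszulSign_sub_one,
    ainfOp_apply (insertTuple_forall₂ hrk hk x (p := fun f i => f ∈ Z.degreePart i) hx
       (ainfOp_mem_degreePart hslice)),
    ofFn_insertTuple, Finsupp.smul_apply, coe_barOp, ainfOp_apply hslice]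
  simp only [apply_insertTuple hrk hk x (fun f : Y →₀ R => ⇑f), ofFn_insertTuple,
    Finsupp.coe_smul, coe_barOp, dualOp, dualEval_append_smul]
  have hsliceCoe : (List.ofFn fun t => ⇑(slice n r k hrk x t)) =
      ((List.ofFn fun t => ⇑(x t)).drop r).take k := ofFn_slice hrk fun t => ⇑(x t)
  rw [hsliceCoe, hsum, ofFn_slice hrk I]
  have hA : ((List.ofFn I).take r).length = r := by simp; omega
  have hB : (((List.ofFn I).drop r).take k).length = k := by simp; omega
  have hC : ((List.ofFn I).drop (r + k)).length = n - r - k := by simp; omega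
  have hsplit : (List.ofFn I).take r ++ (((List.ofFn I).drop r).take k ++
      (List.ofFn I).drop (r + k)) = List.ofFn I := by
    rw [← List.drop_drop, List.take_append_drop, List.take_append_drop]
  have hsign := stasheff_sign (R := R) ((List.ofFn I).take r) (((List.ofFn I).drop r).take k)
    ((List.ofFn I).drop (r + k))
  rw [hsplit, hA, hB, hC] at hsign
  rw [hA, ← mul_assoc (koszulSign R _), ← hsign, smul_eq_mul]
  simp only [mul_assoc]

lemma stasheff (hx : ∀ t, x t ∈ Z.degreePart (I t)) :
    ∑ rs ∈ ((Finset.range (n + 1) ×ˢ Finset.Icc 1 n).filter fun rs => rs.1 + rs.2 ≤ n).attach,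
      koszulSign R (rs.1.1 + rs.1.2 * (n - rs.1.1 - rs.1.2 : ℕ) +
          rs.1.2 * ((List.ofFn I).take rs.1.1).sum) •
        Z.ainfOp (rs.1.1 + 1 + (n - rs.1.1 - rs.1.2))
          (insertTuple n rs.1.1 rs.1.2 (AInf.mem_decomp_le rs.2) (AInf.mem_decomp_one_le rs.2) x
            (Z.ainfOp rs.1.2 (slice n rs.1.1 rs.1.2 (AInf.mem_decomp_le rs.2) x))) = 0 := by
  ext y
  set L := List.ofFn fun t => ⇑(x t) with hL
  have hlen : L.length = n := by simp [hL]
  set g : ℕ → ℕ → R := fun r k => koszulSign R (suspensionExponent (List.ofFn I)) *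
    dualEval ((L.take r).map ((fun y => koszulSign R (Z.deg y)) * ·) ++
      dualOp Z.c ((L.drop r).take k) :: L.drop (r + k)) (Z.c y) with hg
  rw [Finsupp.finsetSum_apply, Finset.sum_congr rfl fun rs _ => (ainfOp_insertTuple_apply hx
    (AInf.mem_decomp_le rs.2) (AInf.mem_decomp_one_le rs.2) y : _ = g rs.1.1 rs.1.2),
    Finset.sum_attach _ fun rs : ℕ × ℕ => g rs.1 rs.2, sum_subintervals]
  · have hder := dualEval_koszulDer Z.deg Z.c L (Z.c y)
    rw [Z.koszulDer_c, map_zero, hlen] at hder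
    simp only [hg, ← Finset.mul_sum]
    rw [← hder, mul_zero, Finsupp.zero_apply]
  · intro r
    simp only [hg, List.take_zero, dualOp_nil, dualEval_append_zero, mul_zero]

end CobarDatum

/-- The `A_∞`-algebra dual to a derivation of square zero of the free algebra. -/
def CobarDatum.toAInfty {F Y : Type} [Field F] (Z : CobarDatum F Y) : AInf.BigradedAInfty F where
  V := Y →₀ F
  comp := Z.comp
  m := Z.ainfOp
  m_one := ainfOp_one
  sup_comp := Z.iSup_iSup_comp
  hom_degree _ _ _ _ _ hx := ainfOp_mem_comp hx
  stasheff n I _ x hx := by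
    rw [← stasheff fun t => comp_le_degreePart (hx t)]
    refine Finset.sum_congr rfl fun rs _ => ?_
    rw [← List.sum_take_ofFn, ← Int.cast_smul_eq_zsmul F]
    rfl

/-! ### Generation in degree one -/

lemma eq_supported_of_pairing {K Y : Type*} [Field K] {s : Set Y} (hs : s.Finite)
    {W : Submodule K (Y →₀ K)} (hW : W ≤ Finsupp.supported K K s)
    (h : ∀ u ∈ Finsupp.supported K K s,
      (∀ v ∈ W, Finsupp.linearCombination K ⇑v u = 0) → u = 0) :
    W = Finsupp.supported K K s := by
  refine hW.antisymm fun φ hφ => ?_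
  by_contra hφW
  obtain ⟨f, hfφ, hfW⟩ := Submodule.exists_le_ker_of_notMem hφW
  set u : Y →₀ K := ∑ y ∈ hs.toFinset, Finsupp.single y (f (Finsupp.single y 1)) with hu
  have hpair : ∀ v ∈ Finsupp.supported K K s, Finsupp.linearCombination K ⇑v u = f v := by
    intro v hv
    have hsupp : v.support ⊆ hs.toFinset := fun y hy => hs.mem_toFinset.2 (hv hy)
    conv_rhs => rw [← Finsupp.sum_single v, Finsupp.sum_of_support_subset v hsupp _ (by simp),
      map_sum]
    rw [hu, map_sum]
    refine Finset.sum_congr rfl fun y _ => ?_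
    rw [Finsupp.linearCombination_single, smul_eq_mul, mul_comm, ← smul_eq_mul, ← map_smul,
      Finsupp.smul_single_one]
  refine hfφ ?_
  rw [← hpair φ hφ, h u (Submodule.sum_mem _ fun y hy => Finsupp.single_mem_supported K _
    (by simpa using hy)) fun v hv => (hpair v (hW hv)).trans (hfW hv), map_zero]

namespace CobarDatum

lemma repr_linearCombination_c {R Y : Type*} [CommRing R] (Z : CobarDatum R Y) (u : Y →₀ R)
    (l : List Y) :
    (wordBasis R Y).repr (Finsupp.linearCombination R Z.c u) l =
      Finsupp.linearCombination R
        ⇑(Z.barOp l.length fun t => Finsupp.single (l.get t) 1) u := by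
  have hL : (List.ofFn fun t : Fin l.length => ⇑(Finsupp.single (l.get t) (1 : R))) =
      l.map fun y => ⇑(Finsupp.single y (1 : R)) := by
    conv_rhs => rw [← List.ofFn_get l, List.map_ofFn]
    rfl
  rw [← dualEval_single, Finsupp.apply_linearCombination, coe_barOp, hL]
  rfl

lemma degreePart_eq_span {K Y : Type*} [Field K] (Z : CobarDatum K Y) {n : ℤ}
    (hgen : ∀ u ∈ Z.degreePart n, (∀ l : List Y, (∀ y ∈ l, 0 ≤ Z.deg y) →
      (wordBasis K Y).repr (Finsupp.linearCombination K Z.c u) l = 0) → u = 0) :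
    Z.degreePart n = Submodule.span K
      {v | ∃ (q : ℕ) (I : Fin q → ℤ) (x : Fin q → (Y →₀ K)),
        2 ≤ q ∧ (∀ t, 1 ≤ I t ∧ x t ∈ Z.degreePart (I t)) ∧
        (∑ t, I t) + 2 - q = n ∧ v = Z.ainfOp q x} := by
  refine (eq_supported_of_pairing ((Z.finite (n - 1)).subset fun y hy => ?_) ?_
    fun u hu huW => hgen u hu fun l hl => ?_).symm
  · exact eq_sub_of_add_eq hy
  · rw [Submodule.span_le]
    rintro _ ⟨q, I, x, -, hx, rfl, rfl⟩
    exact ainfOp_mem_degreePart fun t => (hx t).2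
  rw [repr_linearCombination_c]
  set x : Fin l.length → (Y →₀ K) := fun t => Finsupp.single (l.get t) 1
  have hx : ∀ t, x t ∈ Z.degreePart (Z.deg (l.get t) + 1) := fun t =>
    Finsupp.single_mem_supported K _ rfl
  by_cases hdeg : ∑ t, (Z.deg (l.get t) + 1) + 2 - l.length = n
  · by_cases hq : 2 ≤ l.length
    · have hpair := huW _ (Submodule.smul_mem _
        (koszulSign K (suspensionExponent (List.ofFn fun t => Z.deg (l.get t) + 1)))
        (Submodule.subset_span ⟨_, _, x, hq, fun t =>
          ⟨by simpa using hl _ (l.get_mem t), hx t⟩, hdeg, rfl⟩))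
      rwa [ainfOp_apply hx, smul_smul, koszulSign_mul_self, one_smul] at hpair
    · rw [barOp_eq_zero fun l' y hN hj (h : _ = l.length) => hq (h ▸ Z.two_le_length l' y hN hj)]
      simp
  · rw [Finsupp.linearCombination_apply]
    refine Finset.sum_eq_zero fun y _ => ?_
    by_contra hne
    exact hdeg <| (mem_degreePart.1 (barOp_mem_degreePart hx) y
      (right_ne_zero_of_mul hne)).symm.trans (mem_degreePart.1 hu y (left_ne_zero_of_mul hne))

lemma edeg_toAInfty {F Y : Type} [Field F] (Z : CobarDatum F Y) (n : ℤ) :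
    AInf.Edeg Z.toAInfty n = Z.degreePart n :=
  Z.iSup_comp n

theorem generatedByE1_toAInfty {F Y : Type} [Field F] (Z : CobarDatum F Y)
    (hgen : ∀ n, 2 ≤ n → ∀ u ∈ Z.degreePart n,
      (∀ l : List Y, (∀ y ∈ l, 0 ≤ Z.deg y) →
        (wordBasis F Y).repr (Finsupp.linearCombination F Z.c u) l = 0) → u = 0) :
    AInf.GeneratedByE1 Z.toAInfty := fun n hn => by
  simp only [edeg_toAInfty]
  exact Z.degreePart_eq_span (hgen n hn)

end CobarDatum

section Coefficients

variable {R X : Type*} [CommRing R]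

lemma repr_inclSome_map_some (t : FreeAlgebra R X) (l : List X) :
    (wordBasis R (Option X)).repr (inclSome R X t) (l.map some) = (wordBasis R X).repr t l := by
  induction t using word_induction with
  | zero => simp
  | add t u ht hu => simp [ht, hu]
  | smul r t ht => simp [ht]
  | word l' =>
    rw [inclSome_word, ← wordBasis_apply, ← wordBasis_apply, Module.Basis.repr_self,
      Module.Basis.repr_self, ← Finsupp.single_apply_left (Option.some_injective X).list_map]

lemma repr_unitalDer_map_some (deg : X → ℤ) (c : X → FreeAlgebra R X) (x : X) (l : List X) :
    (wordBasis R (Option X)).repr (unitalDer deg c (some x)) (l.map some) =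
      (wordBasis R X).repr (c x) l := by
  have hword : ∀ y z : Option X, ι R y * ι R z = wordBasis R (Option X) [y, z] := fun y z => by
    simp [wordBasis_apply, word_cons]
  have hcomm : ∀ l' : List (Option X), none ∈ l' →
      (wordBasis R (Option X)).repr (wordBasis R (Option X) l') (l.map some) = 0 := fun l' hl' => by
    rw [Module.Basis.repr_self, Finsupp.single_eq_of_ne']
    rintro rfl
    simp at hl'
  simp [unitalDer, hword, repr_inclSome_map_some, hcomm, -Module.Basis.repr_self]

end Coefficients

/-! ### Minimal resolutions of graded modules -/

open GradedAlg

section Component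

variable {F M κ : Type*} [Field F] [AddCommGroup M] [Module F M] [DecidableEq κ]
  (ℳ : κ → Submodule F M) [DirectSum.Decomposition ℳ]

/-- The projection of a graded vector space onto its component of degree `i`, as an
endomorphism. -/
def component (i : κ) : M →ₗ[F] M :=
  (ℳ i).subtype ∘ₗ DirectSum.component F κ (fun i => ↥(ℳ i)) i ∘ₗ
    (DirectSum.decomposeLinearEquiv ℳ).toLinearMap

lemma component_apply (i : κ) (m : M) :
    component ℳ i m = (DirectSum.decompose ℳ m i : M) := rfl

lemma component_mem (i : κ) (m : M) : component ℳ i m ∈ ℳ i :=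
  (DirectSum.decompose ℳ m i).2

variable {ℳ}

lemma component_of_mem {i : κ} {m : M} (hm : m ∈ ℳ i) : component ℳ i m = m :=
  DirectSum.decompose_of_mem_same ℳ hm

lemma component_of_mem_ne {i j : κ} {m : M} (hm : m ∈ ℳ i) (hij : i ≠ j) :
    component ℳ j m = 0 :=
  DirectSum.decompose_of_mem_ne ℳ hm hij

lemma eq_zero_of_component {m : M} (h : ∀ i, component ℳ i m = 0) : m = 0 :=
  (DirectSum.decompose ℳ).injective <| by
    rw [DirectSum.decompose_zero]
    ext i
    exact h i

end Component

section Resolutions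

variable {F : Type} [Field F] {𝒜 : GradedAlg F}

section Filtration

variable (𝒜) in
/-- The elements of `𝒜` all of whose components of degree less than `n` vanish. -/
def degreeGE (n : ℕ) : Submodule F 𝒜.A :=
  ⨅ i : Fin n, LinearMap.ker (component 𝒜.grading i)

lemma mem_degreeGE {n : ℕ} {a : 𝒜.A} :
    a ∈ degreeGE 𝒜 n ↔ ∀ i < n, component 𝒜.grading i a = 0 := by
  simp [degreeGE, Fin.forall_iff]

lemma mul_mem_degreeGE {m n : ℕ} {a b : 𝒜.A} (ha : a ∈ degreeGE 𝒜 m)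
    (hb : b ∈ degreeGE 𝒜 n) : a * b ∈ degreeGE 𝒜 (m + n) := by
  classical
  rw [mem_degreeGE] at ha hb ⊢
  intro k hk
  rw [component_apply, DirectSum.decompose_mul, DirectSum.coe_mul_apply]
  refine Finset.sum_eq_zero fun ij hij => ?_
  obtain ⟨-, hsum⟩ := Finset.mem_filter.1 hij
  rcases lt_or_ge ij.1 m with hi | hi
  · rw [← component_apply, ha _ hi, zero_mul]
  · rw [← component_apply 𝒜.grading ij.2, hb _ (by omega), mul_zero]

lemma eq_zero_of_forall_mem_degreeGE {a : 𝒜.A} (h : ∀ n, a ∈ degreeGE 𝒜 n) : a = 0 :=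
  eq_zero_of_component fun i => mem_degreeGE.1 (h (i + 1)) i i.lt_succ_self

lemma mem_jideal {a : 𝒜.A} : a ∈ 𝒜.jideal ↔ component 𝒜.grading 0 a = 0 :=
  HomogeneousIdeal.mem_irrelevant_iff 𝒜.grading a

lemma mul_mem_jideal {a : 𝒜.A} (ha : a ∈ 𝒜.jideal) (b : 𝒜.A) : a * b ∈ 𝒜.jideal := by
  rw [mem_jideal] at ha ⊢
  have hmul := map_mul (GradedRing.projZeroRingHom 𝒜.grading) a b
  simp only [GradedRing.projZeroRingHom_apply, ← component_apply] at hmul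
  rw [hmul, ha, zero_mul]

lemma mem_degreeGE_one {a : 𝒜.A} : a ∈ degreeGE 𝒜 1 ↔ a ∈ 𝒜.jideal := by
  simp [mem_degreeGE, mem_jideal]

end Filtration

section GradedModule

instance (M : 𝒜.GMod) : DirectSum.Decomposition M.grading :=
  ((DirectSum.isInternal_submodule_iff_iSupIndep_and_iSup_eq_top _).2
    ⟨M.indep, M.sup_eq_top⟩).chooseDecomposition

lemma component_map {M N : 𝒜.GMod} (f : GHom M N) (j : ℤ) (m : M.M) :
    component N.grading j (f.lin m) = f.lin (component M.grading j m) := by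
  induction m using DirectSum.Decomposition.inductionOn M.grading with
  | zero => simp
  | @homogeneous l m =>
    rcases eq_or_ne l j with rfl | hl
    · rw [component_of_mem m.2, component_of_mem (f.grad _ _ m.2)]
    · rw [component_of_mem_ne m.2 hl, component_of_mem_ne (f.grad _ _ m.2) hl, map_zero]
  | add m m' h h' => simp only [map_add, h, h']

variable {M : 𝒜.GMod} {s : ℤ} {m : M.M}

lemma component_smul (hm : m ∈ M.grading s) (k : ℕ) (a : 𝒜.A) :
    component M.grading (k + s) (a • m) = component 𝒜.grading k a • m := by
  induction a using DirectSum.Decomposition.inductionOn 𝒜.grading with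
  | zero => simp
  | @homogeneous l a =>
    rcases eq_or_ne l k with rfl | hl
    · rw [component_of_mem a.2, component_of_mem (M.smul_mem a.2 hm)]
    · rw [component_of_mem_ne a.2 hl, component_of_mem_ne (M.smul_mem a.2 hm) (by omega),
        zero_smul]
  | add a b ha hb => simp only [map_add, add_smul, ha, hb]

lemma component_smul_self (hm : m ∈ M.grading s) (a : 𝒜.A) :
    component M.grading s (a • m) = component 𝒜.grading 0 a • m := by
  simpa using component_smul hm 0 a

lemma component_smul_of_lt (hm : m ∈ M.grading s) {j : ℤ} (hj : j < s) (a : 𝒜.A) :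
    component M.grading j (a • m) = 0 := by
  induction a using DirectSum.Decomposition.inductionOn 𝒜.grading with
  | zero => simp
  | homogeneous a => exact component_of_mem_ne (M.smul_mem a.2 hm) (by omega)
  | add a b ha hb => simp only [map_add, add_smul, ha, hb, add_zero]

lemma eq_natCast_add_or_lt (j s : ℤ) : (∃ k : ℕ, j = k + s) ∨ j < s :=
  (lt_or_ge j s).symm.imp_left fun h => ⟨(j - s).toNat, by omega⟩

lemma component_mem_span {x : M.M}
    (hx : x ∈ Submodule.span 𝒜.A (M.grading s : Set M.M)) (j : ℤ) :
    component M.grading j x ∈ Submodule.span 𝒜.A (M.grading s : Set M.M) := by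
  induction hx using Submodule.closure_induction with
  | zero => simp
  | add x y _ _ h h' => rw [map_add]; exact add_mem h h'
  | smul_mem a x hx =>
    obtain ⟨k, rfl⟩ | hj := eq_natCast_add_or_lt j s
    · rw [component_smul hx]
      exact Submodule.smul_mem _ _ (Submodule.subset_span hx)
    · rw [component_smul_of_lt hx hj]
      exact zero_mem _

lemma component_eq_zero_of_mem_jideal_smul_top (hs : M.GenInDeg s) {w : M.M}
    (hw : w ∈ 𝒜.jideal • (⊤ : Submodule 𝒜.A M.M)) : component M.grading s w = 0 := by
  induction hw using Submodule.smul_induction_on' with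
  | smul a ha m _ =>
    have hm : m ∈ Submodule.span 𝒜.A (M.grading s : Set M.M) := hs ▸ Submodule.mem_top
    induction hm using Submodule.closure_induction with
    | zero => simp
    | add x y _ _ h h' => rw [smul_add, map_add, h trivial, h' trivial, add_zero]
    | smul_mem b x hx =>
      rw [smul_smul, component_smul_self hx, mem_jideal.1 (mul_mem_jideal ha b), zero_smul]
  | add x _ y _ h h' => rw [map_add, h, h', add_zero]

end GradedModule

section Free

lemma exists_component_zero_eq_smul_one (h0 : 𝒜.grading 0 = Submodule.span F {1}) (a : 𝒜.A) :
    ∃ r : F, component 𝒜.grading 0 a = r • (1 : 𝒜.A) := by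
  obtain ⟨r, hr⟩ := Submodule.mem_span_singleton.1 (h0 ▸ component_mem 𝒜.grading 0 a)
  exact ⟨r, hr.symm⟩

lemma injective_of_ker_coeff_mem_jideal {I M : Type*} [AddCommGroup M] [Module 𝒜.A M]
    [Module.Projective 𝒜.A M] {φ : (I →₀ 𝒜.A) →ₗ[𝒜.A] M} (hφ : Function.Surjective φ)
    (hker : ∀ x, φ x = 0 → ∀ i, x i ∈ 𝒜.jideal) : Function.Injective φ := by
  obtain ⟨σ, hσ⟩ := Module.projective_lifting_property φ LinearMap.id hφ
  let π : (I →₀ 𝒜.A) →ₗ[𝒜.A] (I →₀ 𝒜.A) := LinearMap.id - σ ∘ₗ φ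
  have hφπ (x) : φ (π x) = 0 := by
    simpa [π, sub_eq_zero] using (LinearMap.congr_fun hσ (φ x)).symm
  -- A projection onto the kernel multiplies coefficients by elements of `J`, so an element of
  -- the kernel, being fixed by it, lies arbitrarily deep in the filtration by degree.
  have hstep (n x) (hx : ∀ i, x i ∈ degreeGE 𝒜 n) (i) : π x i ∈ degreeGE 𝒜 (n + 1) := by
    have hsum : π x = x.sum fun j a => a • π (Finsupp.single j 1) := by
      conv_lhs => rw [← Finsupp.sum_single x, Finsupp.sum, map_sum]
      refine Finset.sum_congr rfl fun j _ => ?_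
      change π _ = x j • π _
      rw [← map_smul, Finsupp.smul_single_one]
    rw [hsum, Finsupp.sum, Finsupp.finsetSum_apply]
    exact Submodule.sum_mem _ fun j _ =>
      mul_mem_degreeGE (hx j) (mem_degreeGE_one.2 (hker _ (hφπ _) i))
  refine (injective_iff_map_eq_zero φ).2 fun x hx => ?_
  have hfix : π x = x := by simp [π, hx]
  have hdeep (n : ℕ) : ∀ i, x i ∈ degreeGE 𝒜 n := by
    induction n with
    | zero => simp [mem_degreeGE]
    | succ n ih => exact hfix ▸ hstep n x ih
  ext i
  exact eq_zero_of_forall_mem_degreeGE fun n => hdeep n i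

lemma exists_basis_of_genInDeg (h0 : 𝒜.grading 0 = Submodule.span F {1}) {M : 𝒜.GMod}
    (hp : Module.Projective 𝒜.A M.M) {s : ℤ} (hs : M.GenInDeg s) :
    ∃ (I : Type) (b : Module.Basis I 𝒜.A M.M), ∀ i, b i ∈ M.grading s := by
  let B := Module.Basis.ofVectorSpace F ↥(M.grading s)
  let v (i) : M.M := B i
  have hv (i) : v i ∈ M.grading s := (B i).2
  have hvF : LinearIndependent F v := B.linearIndependent.map' (M.grading s).subtype (by simp)
  have hspan : ⊤ ≤ Submodule.span 𝒜.A (Set.range v) := by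
    rw [← hs, Submodule.span_le]
    intro m hm
    have hmF := Submodule.mem_map_of_mem (f := (M.grading s).subtype) (B.mem_span ⟨m, hm⟩)
    rw [Submodule.map_span, ← Set.range_comp] at hmF
    exact Submodule.span_subset_span F 𝒜.A _ hmF
  have hker (x) (hx : Finsupp.linearCombination 𝒜.A v x = 0) (i) : x i ∈ 𝒜.jideal := by
    choose r hr using fun i => exists_component_zero_eq_smul_one h0 (x i)
    have hsum : ∑ i ∈ x.support, r i • v i = 0 := by
      have hcomp := congrArg (component M.grading s) hx
      rw [map_zero, Finsupp.linearCombination_apply, Finsupp.sum, map_sum] at hcomp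
      rw [← hcomp]
      refine Finset.sum_congr rfl fun i _ => ?_
      rw [component_smul_self (hv i), hr, smul_assoc, one_smul]
    rw [mem_jideal]
    by_cases hi : i ∈ x.support
    · rw [hr, linearIndependent_iff'.1 hvF _ _ hsum i hi, zero_smul]
    · rw [Finsupp.notMem_support_iff.1 hi, map_zero]
  have hsurj : Function.Surjective (Finsupp.linearCombination 𝒜.A v) := by
    rwa [← LinearMap.range_eq_top, Finsupp.range_linearCombination, eq_top_iff]
  have hvA : LinearIndependent 𝒜.A v := injective_of_ker_coeff_mem_jideal hsurj hker
  refine ⟨_, Module.Basis.mk hvA hspan, fun i => ?_⟩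
  rw [Module.Basis.mk_apply]
  exact hv i

end Free

section Nakayama

variable {M : 𝒜.GMod} {s : ℤ}

lemma exists_grading_eq_bot_of_lt [Module.Finite 𝒜.A M.M] :
    ∃ m : ℤ, ∀ j < m, M.grading j = ⊥ := by
  have hbdd (x : M.M) : ∃ m : ℤ, ∀ j < m, ∀ a : 𝒜.A, component M.grading j (a • x) = 0 := by
    induction x using DirectSum.Decomposition.inductionOn M.grading with
    | zero => exact ⟨0, by simp⟩
    | @homogeneous i x => exact ⟨i, fun j hj a => component_smul_of_lt x.2 hj a⟩
    | add x y hx hy =>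
      obtain ⟨m, hm⟩ := hx
      obtain ⟨n, hn⟩ := hy
      refine ⟨min m n, fun j hj a => ?_⟩
      rw [smul_add, map_add, hm j (by omega), hn j (by omega), add_zero]
  obtain ⟨S, hS⟩ := Module.finite_def.1 ‹Module.Finite 𝒜.A M.M›
  choose m hm using hbdd
  obtain ⟨m₀, hm₀⟩ := (S.image m).bddBelow
  refine ⟨m₀, fun j hj => (Submodule.eq_bot_iff _).2 fun x hx => ?_⟩
  have hspan : x ∈ Submodule.span 𝒜.A (S : Set M.M) := hS ▸ Submodule.mem_top
  rw [← component_of_mem hx]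
  clear hx
  induction hspan using Submodule.closure_induction with
  | zero => simp
  | add x y _ _ hx hy => rw [map_add, hx, hy, add_zero]
  | smul_mem a x hx =>
    exact hm x j (hj.trans_le (hm₀ (Finset.mem_coe.2 (Finset.mem_image_of_mem m hx)))) a

lemma component_mem_span_of_mem_jideal_smul_top {j : ℤ}
    (hlt : ∀ k < j, (M.grading k : Set M.M) ⊆
      Submodule.span 𝒜.A (M.grading s : Set M.M)) {w : M.M}
    (hw : w ∈ 𝒜.jideal • (⊤ : Submodule 𝒜.A M.M)) :
    component M.grading j w ∈ Submodule.span 𝒜.A (M.grading s : Set M.M) := by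
  induction hw using Submodule.smul_induction_on' with
  | smul a ha y _ =>
    induction y using DirectSum.Decomposition.inductionOn M.grading with
    | zero => simp
    | @homogeneous k y =>
      rcases lt_trichotomy k j with hk | rfl | hk
      · exact component_mem_span (Submodule.smul_mem _ _ (hlt k hk y.2)) j
      · rw [component_smul_self y.2, mem_jideal.1 ha, zero_smul]
        exact zero_mem _
      · rw [component_smul_of_lt y.2 hk]
        exact zero_mem _
    | add y z hy hz => rw [smul_add, map_add]; exact add_mem (hy trivial) (hz trivial)
  | add y _ z _ hy hz => rw [map_add]; exact add_mem hy hz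

lemma genInDeg_of_sup_jideal_smul_top [Module.Finite 𝒜.A M.M]
    (h : Submodule.span 𝒜.A (M.grading s : Set M.M) ⊔
      𝒜.jideal • (⊤ : Submodule 𝒜.A M.M) = ⊤) : M.GenInDeg s := by
  obtain ⟨m, hm⟩ := exists_grading_eq_bot_of_lt (M := M)
  have hmem (n : ℕ) : ∀ j < m + n, (M.grading j : Set M.M) ⊆
      Submodule.span 𝒜.A (M.grading s : Set M.M) := by
    induction n with
    | zero =>
      intro j hj
      simp [hm j (by simpa using hj)]
    | succ n ih =>
      intro j hj x hx
      obtain ⟨q, hq, w, hw, rfl⟩ := Submodule.mem_sup.1 (h ▸ Submodule.mem_top : x ∈ _)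
      rw [← component_of_mem hx, map_add]
      exact add_mem (component_mem_span hq j) (component_mem_span_of_mem_jideal_smul_top
        (fun k hk => ih k (by push_cast at hj; omega)) hw)
  refine eq_top_iff.2 fun x _ => ?_
  induction x using DirectSum.Decomposition.inductionOn M.grading with
  | zero => exact zero_mem _
  | @homogeneous j x => exact hmem (j - m + 1).toNat j (by omega) x.2
  | add x y hx hy => exact add_mem (hx trivial) (hy trivial)

end Nakayama

section Comparison

variable {P Q N : 𝒜.GMod} {s : ℤ}

lemma map_mem_grading_of_span {S : Set P.M} (hS : S ⊆ P.grading s)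
    (hspan : Submodule.span 𝒜.A S = ⊤) {g : P.M →ₗ[𝒜.A] Q.M}
    (hg : ∀ x ∈ S, g x ∈ Q.grading s) (j : ℤ) (x : P.M) (hx : x ∈ P.grading j) :
    g x ∈ Q.grading j := by
  suffices hcomm : component Q.grading j (g x) = g (component P.grading j x) by
    rw [← component_of_mem hx, ← hcomm]
    exact component_mem _ _ _
  clear hx
  have hx : x ∈ Submodule.span 𝒜.A S := hspan ▸ Submodule.mem_top
  induction hx using Submodule.closure_induction with
  | zero => simp
  | add x y _ _ h h' => simp only [map_add, h, h']
  | smul_mem a x hx =>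
    rw [map_smul]
    obtain ⟨k, rfl⟩ | hj := eq_natCast_add_or_lt j s
    · rw [component_smul (hg x hx), component_smul (hS hx), map_smul]
    · rw [component_smul_of_lt (hg x hx) hj, component_smul_of_lt (hS hx) hj, map_zero]

lemma exists_mem_grading_of_mem_range (p : GHom P N) {y : N.M} (hy : y ∈ N.grading s)
    (hrange : y ∈ LinearMap.range p.lin) : ∃ z ∈ P.grading s, p.lin z = y := by
  obtain ⟨z, rfl⟩ := hrange
  exact ⟨_, component_mem _ s z, by rw [← component_map, component_of_mem hy]⟩

lemma exists_lift_of_basis (p : GHom P N) (q : GHom Q N)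
    (hrange : LinearMap.range p.lin ≤ LinearMap.range q.lin) {I : Type*}
    (b : Module.Basis I 𝒜.A P.M) (hb : ∀ i, b i ∈ P.grading s) :
    ∃ g : GHom P Q, q.lin ∘ₗ g.lin = p.lin := by
  choose z hz hqz using fun i =>
    exists_mem_grading_of_mem_range q (p.grad _ _ (hb i)) (hrange ⟨_, rfl⟩)
  refine ⟨⟨b.constr ℕ z, map_mem_grading_of_span (Set.range_subset_iff.2 hb) b.span_eq ?_⟩,
    b.ext fun i => by simp [hqz]⟩
  rintro _ ⟨i, rfl⟩
  rw [Module.Basis.constr_basis]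
  exact hz i

lemma eq_id_of_ker_le (p : GHom P N) (hs : P.GenInDeg s)
    (hker : LinearMap.ker p.lin ≤ 𝒜.jideal • (⊤ : Submodule 𝒜.A P.M)) (g : GHom P P)
    (hg : p.lin ∘ₗ g.lin = p.lin) : g.lin = LinearMap.id := by
  refine LinearMap.ext_on hs fun x hx => ?_
  have hsub : g.lin x - x ∈ LinearMap.ker p.lin := by
    rw [LinearMap.mem_ker, map_sub, ← LinearMap.comp_apply, hg, sub_self]
  have hzero := component_eq_zero_of_mem_jideal_smul_top hs (hker hsub)
  rw [component_of_mem (sub_mem (g.grad _ _ hx) hx)] at hzero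
  exact sub_eq_zero.1 hzero

lemma genInDeg_of_range_eq [Module.Finite 𝒜.A Q.M] (p : GHom P N) (q : GHom Q N)
    (hrange : LinearMap.range p.lin = LinearMap.range q.lin)
    (hker : LinearMap.ker q.lin ≤ 𝒜.jideal • (⊤ : Submodule 𝒜.A Q.M)) (hs : P.GenInDeg s) :
    Q.GenInDeg s := by
  refine genInDeg_of_sup_jideal_smul_top (eq_top_iff.2 fun x _ => ?_)
  have hle : LinearMap.range p.lin ≤
      (Submodule.span 𝒜.A (Q.grading s : Set Q.M)).map q.lin := by
    rw [LinearMap.range_eq_map, ← hs, Submodule.map_span, Submodule.span_le]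
    rintro _ ⟨y, hy, rfl⟩
    obtain ⟨z, hz, hqz⟩ := exists_mem_grading_of_mem_range q (p.grad _ _ hy) (hrange ▸ ⟨y, rfl⟩)
    exact ⟨z, Submodule.subset_span hz, hqz⟩
  obtain ⟨z, hz, hqz⟩ := hle (hrange ▸ ⟨x, rfl⟩ : q.lin x ∈ _)
  rw [← add_sub_cancel z x]
  exact Submodule.add_mem_sup hz (hker (by rw [LinearMap.mem_ker, map_sub, hqz, sub_self]))

lemma exists_bijective_lift (h0 : 𝒜.grading 0 = Submodule.span F {1})
    (p : GHom P N) (q : GHom Q N) (hrange : LinearMap.range p.lin = LinearMap.range q.lin)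
    (hp : LinearMap.ker p.lin ≤ 𝒜.jideal • (⊤ : Submodule 𝒜.A P.M))
    (hq : LinearMap.ker q.lin ≤ 𝒜.jideal • (⊤ : Submodule 𝒜.A Q.M))
    (hP : Module.Projective 𝒜.A P.M) (hQ : Module.Projective 𝒜.A Q.M)
    (hPs : P.GenInDeg s) (hQs : Q.GenInDeg s) :
    ∃ g : GHom P Q, Function.Bijective g.lin ∧ q.lin ∘ₗ g.lin = p.lin := by
  obtain ⟨I, b, hb⟩ := exists_basis_of_genInDeg h0 hP hPs
  obtain ⟨I', b', hb'⟩ := exists_basis_of_genInDeg h0 hQ hQs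
  obtain ⟨g, hg⟩ := exists_lift_of_basis p q hrange.le b hb
  obtain ⟨h, hh⟩ := exists_lift_of_basis q p hrange.ge b' hb'
  have hhg := eq_id_of_ker_le p hPs hp ⟨h.lin ∘ₗ g.lin, fun j x hx => h.grad _ _ (g.grad j x hx)⟩
    (by rw [← LinearMap.comp_assoc, hh, hg])
  have hgh := eq_id_of_ker_le q hQs hq ⟨g.lin ∘ₗ h.lin, fun j x hx => g.grad _ _ (h.grad j x hx)⟩
    (by rw [← LinearMap.comp_assoc, hg, hh])
  exact ⟨g, Function.bijective_iff_has_inverse.2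
    ⟨h.lin, LinearMap.congr_fun hhg, LinearMap.congr_fun hgh⟩, hg⟩

lemma map_ker_of_comp_eq {R P Q N : Type*} [Semiring R] [AddCommMonoid P] [AddCommMonoid Q]
    [AddCommMonoid N] [Module R P] [Module R Q] [Module R N] {p : P →ₗ[R] N} {q : Q →ₗ[R] N}
    {g : P →ₗ[R] Q} (hg : Function.Surjective g) (h : q ∘ₗ g = p) :
    (LinearMap.ker p).map g = LinearMap.ker q := by
  rw [← h, LinearMap.ker_comp, Submodule.map_comap_eq_of_surjective hg]

end Comparison

lemma exists_bijective_map_range_eq {T : 𝒜.GMod}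
    (h0 : 𝒜.grading 0 = Submodule.span F {1}) (R R' : MinRes T) {s : ℕ → ℤ}
    (hs : ∀ n, (R.P n).GenInDeg (s n)) (n : ℕ) :
    (R'.P n).GenInDeg (s n) ∧ ∃ g : GHom (R.P n) (R'.P n), Function.Bijective g.lin ∧
      (LinearMap.range (R.d n).lin).map g.lin = LinearMap.range (R'.d n).lin := by
  have := R'.fg
  induction n with
  | zero =>
    have hrange : LinearMap.range R.aug.lin = LinearMap.range R'.aug.lin := by
      rw [LinearMap.range_eq_top.2 R.aug_surj, LinearMap.range_eq_top.2 R'.aug_surj]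
    have hker := R.exact_aug ▸ R.minimal 0
    have hker' := R'.exact_aug ▸ R'.minimal 0
    have hs' := genInDeg_of_range_eq R.aug R'.aug hrange hker' (hs 0)
    obtain ⟨g, hg, hcomp⟩ := exists_bijective_lift h0 R.aug R'.aug hrange hker hker'
      (R.projective 0) (R'.projective 0) (hs 0) hs'
    exact ⟨hs', g, hg, by rw [R.exact_aug, R'.exact_aug, map_ker_of_comp_eq hg.2 hcomp]⟩
  | succ n ih =>
    obtain ⟨-, g, hg, hmap⟩ := ih
    let p : GHom (R.P (n + 1)) (R'.P n) :=
      ⟨g.lin ∘ₗ (R.d n).lin, fun j x hx => g.grad _ _ ((R.d n).grad j x hx)⟩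
    have hrange : LinearMap.range p.lin = LinearMap.range (R'.d n).lin := by
      rw [← hmap]
      exact LinearMap.range_comp _ _
    have hkerp : LinearMap.ker p.lin = LinearMap.ker (R.d n).lin :=
      LinearMap.ker_comp_of_ker_eq_bot _ (LinearMap.ker_eq_bot.2 hg.1)
    have hker := (hkerp.trans (R.exact n).symm) ▸ R.minimal (n + 1)
    have hker' := R'.exact n ▸ R'.minimal (n + 1)
    have hs' := genInDeg_of_range_eq p (R'.d n) hrange hker' (hs _)
    obtain ⟨f, hf, hcomp⟩ := exists_bijective_lift h0 p (R'.d n) hrange hker hker'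
      (R.projective _) (R'.projective _) (hs _) hs'
    exact ⟨hs', f, hf, by rw [R.exact, R'.exact, ← hkerp, map_ker_of_comp_eq hf.2 hcomp]⟩

lemma genInDeg_of_genInDeg {T : 𝒜.GMod} (h0 : 𝒜.grading 0 = Submodule.span F {1})
    (R R' : MinRes T) {s : ℕ → ℤ} (hs : ∀ n, (R.P n).GenInDeg (s n)) (n : ℕ) :
    (R'.P n).GenInDeg (s n) :=
  (exists_bijective_map_range_eq h0 R R' hs n).1

end Resolutions

section Generators

variable {F : Type} [Field F]

section IntGrading

variable {A : Type*} [Semiring A] [Algebra F A] (𝒢 : ℕ → Submodule F A)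

/-- A grading by the natural numbers, extended by zero to the integers. -/
def intGrading : ℤ → Submodule F A
  | .ofNat n => 𝒢 n
  | .negSucc _ => ⊥

@[simp] lemma intGrading_natCast (n : ℕ) : intGrading 𝒢 n = 𝒢 n := rfl

lemma intGrading_of_neg {N : ℤ} (hN : N < 0) : intGrading 𝒢 N = ⊥ := by
  obtain ⟨n, rfl⟩ := Int.eq_negSucc_of_lt_zero hN
  rfl

instance [SetLike.GradedMonoid 𝒢] : SetLike.GradedMonoid (intGrading 𝒢) where
  one_mem := SetLike.GradedOne.one_mem (A := 𝒢)
  mul_mem i j a b ha hb := by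
    rcases lt_or_ge i 0 with hi | hi
    · rw [intGrading_of_neg 𝒢 hi, Submodule.mem_bot] at ha
      simp [ha]
    rcases lt_or_ge j 0 with hj | hj
    · rw [intGrading_of_neg 𝒢 hj, Submodule.mem_bot] at hb
      simp [hb]
    lift i to ℕ using hi
    lift j to ℕ using hj
    exact SetLike.GradedMul.mul_mem (A := 𝒢) ha hb

end IntGrading

lemma basis_induction {ι S M : Type*} [Semiring S] [AddCommMonoid M] [Module S M]
    (b : Module.Basis ι S M) {p : M → Prop} (zero : p 0) (add : ∀ m m', p m → p m' → p (m + m'))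
    (smul : ∀ (a : S) i, p (a • b i)) (m : M) : p m := by
  rw [← b.linearCombination_repr m]
  induction b.repr m using Finsupp.induction_linear with
  | zero => simpa using zero
  | add f g hf hg => simpa only [map_add] using add _ _ hf hg
  | single i a => simpa only [Finsupp.linearCombination_single] using smul a i

variable {𝒜 : GradedAlg F}

lemma mem_jideal_of_mem_intGrading {N : ℤ} (hN : N ≠ 0) {a : 𝒜.A}
    (ha : a ∈ intGrading 𝒜.grading N) : a ∈ 𝒜.jideal := by
  rcases lt_or_ge N 0 with hneg | hN'
  · rw [intGrading_of_neg _ hneg, Submodule.mem_bot] at ha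
    exact ha ▸ zero_mem _
  · lift N to ℕ using hN'
    exact mem_jideal.2 (component_of_mem_ne (ℳ := 𝒜.grading) ha (by exact_mod_cast hN))

section Basis

variable {M : 𝒜.GMod} {s N : ℤ} {I : Type*} {b : Module.Basis I 𝒜.A M.M}

lemma smul_mem_of_mem_intGrading {a : 𝒜.A} (ha : a ∈ intGrading 𝒜.grading (N - s)) {m : M.M}
    (hm : m ∈ M.grading s) : a • m ∈ M.grading N := by
  obtain ⟨k, rfl⟩ | hN := eq_natCast_add_or_lt N s
  · rw [add_sub_cancel_right, intGrading_natCast] at ha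
    exact M.smul_mem ha hm
  · rw [intGrading_of_neg _ (by omega), Submodule.mem_bot] at ha
    simp [ha]

lemma repr_component (hb : ∀ i, b i ∈ M.grading s) (k : ℕ) (m : M.M) (i : I) :
    b.repr (component M.grading (k + s) m) i = component 𝒜.grading k (b.repr m i) := by
  induction m using basis_induction b with
  | zero => simp
  | add m m' h h' => simp only [map_add, Finsupp.add_apply, h, h']
  | smul a j =>
    classical
    rw [component_smul (hb j)]
    simp only [map_smul, Module.Basis.repr_self, Finsupp.smul_apply, Finsupp.single_apply]
    split_ifs <;> simp

lemma component_eq_zero_of_basis (hb : ∀ i, b i ∈ M.grading s) (hN : N < s) (m : M.M) :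
    component M.grading N m = 0 := by
  induction m using basis_induction b with
  | zero => simp
  | add m m' h h' => rw [map_add, h, h', add_zero]
  | smul a j => exact component_smul_of_lt (hb j) hN a

lemma mem_grading_iff_repr_mem (hb : ∀ i, b i ∈ M.grading s) {m : M.M} :
    m ∈ M.grading N ↔ ∀ i, b.repr m i ∈ intGrading 𝒜.grading (N - s) := by
  refine ⟨fun hm i => ?_, fun h => ?_⟩
  · rw [← component_of_mem hm]
    obtain ⟨k, rfl⟩ | hN := eq_natCast_add_or_lt N s
    · rw [repr_component hb, add_sub_cancel_right]
      exact component_mem 𝒜.grading k _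
    · simp [component_eq_zero_of_basis hb hN]
  · rw [← b.linearCombination_repr m]
    exact Submodule.sum_mem _ fun i _ => smul_mem_of_mem_intGrading (h i) (hb i)

end Basis

section ResidueField

variable {P T : Type*} [AddCommGroup P] [Module 𝒜.A P] [AddCommGroup T] [Module 𝒜.A T]
  {I : Type*}

lemma repr_mem_jideal (b : Module.Basis I 𝒜.A P) {m : P}
    (hm : m ∈ 𝒜.jideal • (⊤ : Submodule 𝒜.A P)) (i : I) : b.repr m i ∈ 𝒜.jideal := by
  induction hm using Submodule.smul_induction_on' with
  | smul a ha m _ =>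
    rw [map_smul, Finsupp.smul_apply, smul_eq_mul]
    exact mul_mem_jideal ha _
  | add x _ y _ h h' => rw [map_add, Finsupp.add_apply]; exact add_mem h h'

lemma map_eq_zero_of_mem_jideal_smul_top (hT : ∀ a ∈ 𝒜.jideal, ∀ x : T, a • x = 0)
    (f : P →ₗ[𝒜.A] T) {m : P} (hm : m ∈ 𝒜.jideal • (⊤ : Submodule 𝒜.A P)) : f m = 0 := by
  induction hm using Submodule.smul_induction_on' with
  | smul a ha m _ => rw [map_smul, hT a ha]
  | add x _ y _ h h' => rw [map_add, h, h', add_zero]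

lemma algebraMap_mem_jideal [Nontrivial 𝒜.A] {r : F} :
    algebraMap F 𝒜.A r ∈ 𝒜.jideal ↔ r = 0 := by
  rw [mem_jideal, component_of_mem (SetLike.algebraMap_mem_graded 𝒜.grading r)]
  exact map_eq_zero_iff _ (algebraMap F 𝒜.A).injective

variable [Module F P] [IsScalarTower F 𝒜.A P] [Module F T] [IsScalarTower F 𝒜.A T]

lemma exists_smul_eq_smul (h0 : 𝒜.grading 0 = Submodule.span F {1})
    (hT : ∀ a ∈ 𝒜.jideal, ∀ x : T, a • x = 0) (a : 𝒜.A) : ∃ r : F, ∀ x : T, a • x = r • x := by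
  obtain ⟨r, hr⟩ := exists_component_zero_eq_smul_one h0 a
  refine ⟨r, fun x => ?_⟩
  have ha : a - r • 1 ∈ 𝒜.jideal := by
    rw [mem_jideal, map_sub, map_smul, component_of_mem SetLike.GradedOne.one_mem, hr, sub_self]
  have hx := hT _ ha x
  rwa [sub_smul, smul_assoc, one_smul, sub_eq_zero] at hx

/-- The basis of a module over the residue field `F` of `𝒜` formed by the images of a basis of a
projective cover. -/
def residueBasis [Nontrivial 𝒜.A] (h0 : 𝒜.grading 0 = Submodule.span F {1})
    (hT : ∀ a ∈ 𝒜.jideal, ∀ x : T, a • x = 0) (b : Module.Basis I 𝒜.A P) (f : P →ₗ[𝒜.A] T)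
    (hf : Function.Surjective f) (hker : LinearMap.ker f ≤ 𝒜.jideal • ⊤) :
    Module.Basis I F T :=
  .mk (v := fun i => f (b i))
    (by
      rw [linearIndependent_iff']
      intro s r hr i hi
      have hmem := repr_mem_jideal b (hker (show ∑ i ∈ s, r i • b i ∈ LinearMap.ker f by
        rw [LinearMap.mem_ker, map_sum, ← hr]
        exact Finset.sum_congr rfl fun i _ => f.map_smul_of_tower _ _)) i
      have hrepr : b.repr (∑ i ∈ s, r i • b i) i = algebraMap F 𝒜.A (r i) := by
        classical
        simp only [← algebraMap_smul 𝒜.A (_ : F) (b _), map_sum, map_smul, Finsupp.finsetSum_apply,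
          Module.Basis.repr_self, Finsupp.smul_apply, Finsupp.single_apply, smul_eq_mul, mul_ite,
          mul_one, mul_zero, Finset.sum_ite_eq', if_pos hi]
      rwa [hrepr, algebraMap_mem_jideal] at hmem)
    (by
      rintro x -
      obtain ⟨m, rfl⟩ := hf x
      induction m using basis_induction b with
      | zero => simp
      | add m m' h h' => rw [map_add]; exact add_mem h h'
      | smul a i =>
        obtain ⟨r, hr⟩ := exists_smul_eq_smul h0 hT a
        rw [map_smul, hr]
        exact Submodule.smul_mem _ r (Submodule.subset_span ⟨i, rfl⟩))

end ResidueField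

section Trivial

variable {T : 𝒜.GMod}

lemma smul_eq_zero_of_isTrivialGMod (hT : IsTrivialGMod T) : ∀ a ∈ 𝒜.jideal, ∀ x : T.M,
    a • x = 0 := by
  obtain ⟨-, ⟨e⟩⟩ := hT
  intro a ha x
  obtain ⟨b, hb⟩ := Submodule.Quotient.mk_surjective _ (e x)
  rw [← e.map_eq_zero_iff, map_smul, ← hb, ← Submodule.Quotient.mk_smul,
    Submodule.Quotient.mk_eq_zero]
  exact mul_mem_jideal ha b

lemma ker_aug_le (R : MinRes T) : LinearMap.ker R.aug.lin ≤ 𝒜.jideal • ⊤ :=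
  R.exact_aug ▸ R.minimal 0

variable [Nontrivial 𝒜.A]

/-- The one-element basis of the trivial module `A / J` over `F`. -/
def trivialBasis (h0 : 𝒜.grading 0 = Submodule.span F {1}) (hT : IsTrivialGMod T) :
    Module.Basis Unit F T.M :=
  residueBasis h0 (smul_eq_zero_of_isTrivialGMod hT) (.singleton Unit 𝒜.A)
    (hT.2.some.symm.toLinearMap ∘ₗ 𝒜.jideal.mkQ)
    (hT.2.some.symm.surjective.comp 𝒜.jideal.mkQ_surjective)
    (by
      rw [LinearMap.ker_comp, LinearEquiv.ker, Submodule.comap_bot, Submodule.ker_mkQ]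
      intro a ha
      simpa using Submodule.smul_mem_smul ha (Submodule.mem_top (x := (1 : 𝒜.A))))

/-- The basis of the trivial module formed by the images of a basis of its minimal cover. -/
def augBasis (h0 : 𝒜.grading 0 = Submodule.span F {1}) (hT : IsTrivialGMod T) (R : MinRes T)
    {I : Type*} (b : Module.Basis I 𝒜.A (R.P 0).M) : Module.Basis I F T.M :=
  residueBasis h0 (smul_eq_zero_of_isTrivialGMod hT) b R.aug.lin R.aug_surj (ker_aug_le R)

lemma augBasis_apply (h0 : 𝒜.grading 0 = Submodule.span F {1}) (hT : IsTrivialGMod T)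
    (R : MinRes T) {I : Type*} (b : Module.Basis I 𝒜.A (R.P 0).M) (i : I) :
    augBasis h0 hT R b i = R.aug.lin (b i) := by
  rw [augBasis, residueBasis, Module.Basis.mk_apply]

lemma nonempty_equiv_unit (h0 : 𝒜.grading 0 = Submodule.span F {1}) (hT : IsTrivialGMod T)
    (R : MinRes T) {I : Type*} (b : Module.Basis I 𝒜.A (R.P 0).M) : Nonempty (I ≃ Unit) :=
  ⟨(augBasis h0 hT R b).indexEquiv (trivialBasis h0 hT)⟩

end Trivial

end Generators

section Reduction

variable {R A X : Type*} [CommRing R] [Ring A] [Algebra R A]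
  (Δ : (Option X →₀ A) →ₗ[A] (Option X →₀ A))

/-- The differential induced by `Δ` on the quotient by the generator `none`. -/
def reducedDifferential : (X →₀ A) →ₗ[A] (X →₀ A) :=
  Finsupp.lcomapDomain some (Option.some_injective X) ∘ₗ Δ ∘ₗ Finsupp.lmapDomain A A some

/-- The component of `Δ` along the generator `none`, up to sign. -/
def reducedAugmentation (x : X) : A := -Δ (Finsupp.single (some x) 1) none

lemma mapDomain_some_comapDomain (q : Option X →₀ A) :
    Finsupp.mapDomain some (Finsupp.lcomapDomain (R := A) some (Option.some_injective X) q) =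
      q - Finsupp.single none (q none) := by
  ext (_ | x)
  · simp [Finsupp.mapDomain_of_notMem_range]
  · simp [Finsupp.mapDomain_apply (Option.some_injective X), Finsupp.lcomapDomain]

lemma eq_zero_of_mapDomain_some_eq_single {p : X →₀ A} {r : A}
    (h : Finsupp.mapDomain some p = Finsupp.single none r) : p = 0 := by
  ext x
  simpa [Finsupp.mapDomain_apply (Option.some_injective X)] using DFunLike.congr_fun h (some x)

lemma apply_mapDomain_some (p : X →₀ A) :
    Δ (Finsupp.mapDomain some p) = Finsupp.mapDomain some (reducedDifferential Δ p) -
      Finsupp.single none (Finsupp.linearCombination A (reducedAugmentation Δ) p) := by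
  have hnone : Finsupp.linearCombination A (reducedAugmentation Δ) p =
      -Δ (Finsupp.mapDomain some p) none := by
    induction p using Finsupp.induction_linear with
    | zero => simp
    | add p q hp hq =>
      rw [map_add, Finsupp.mapDomain_add, map_add, hp, hq, Finsupp.add_apply, neg_add]
    | single x r =>
      rw [Finsupp.mapDomain_single, ← mul_one r, ← smul_eq_mul, ← Finsupp.smul_single,
        ← Finsupp.smul_single, map_smul, map_smul]
      simp [reducedAugmentation]
  rw [hnone, Finsupp.single_neg, sub_neg_eq_add, ← sub_eq_iff_eq_add,
    ← mapDomain_some_comapDomain]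
  rfl

variable {Δ}

lemma reducedDifferential_eq_zero_and (hnone : Δ (Finsupp.single none 1) = 0)
    (hΔ : ∀ q, Δ (Δ q) = 0) (p : X →₀ A) :
    reducedDifferential Δ (reducedDifferential Δ p) = 0 ∧
      Finsupp.linearCombination A (reducedAugmentation Δ) (reducedDifferential Δ p) = 0 := by
  have hsingle (r : A) : Δ (Finsupp.single none r) = 0 := by
    rw [← mul_one r, ← smul_eq_mul, ← Finsupp.smul_single, map_smul, hnone, smul_zero]
  have h := hΔ (Finsupp.mapDomain some p)
  rw [apply_mapDomain_some, map_sub, hsingle, sub_zero, apply_mapDomain_some, sub_eq_zero] at h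
  have h' := eq_zero_of_mapDomain_some_eq_single h
  rw [h', Finsupp.mapDomain_zero, eq_comm, Finsupp.single_eq_zero] at h
  exact ⟨h', h⟩

variable {𝒜 : ℤ → Submodule R A} {wt : Option X → ℤ} {deg : X → ℤ} {N j : ℤ}

lemma mapDomain_some_mem_homogeneous {p : X →₀ A}
    (hp : p ∈ homogeneous 𝒜 (fun x => wt (some x)) deg N j) :
    Finsupp.mapDomain some p ∈ homogeneous 𝒜 wt (unitalDeg deg) N j := by
  rintro (_ | x)
  · simp [Finsupp.mapDomain_of_notMem_range]
  · simpa [Finsupp.mapDomain_apply (Option.some_injective X)] using hp x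

lemma lcomapDomain_some_mem_homogeneous {q : Option X →₀ A}
    (hq : q ∈ homogeneous 𝒜 wt (unitalDeg deg) N j) :
    Finsupp.lcomapDomain (R := A) some (Option.some_injective X) q ∈
      homogeneous 𝒜 (fun x => wt (some x)) deg N j :=
  fun x => hq (some x)

lemma exists_mapDomain_some_eq {q : Option X →₀ A}
    (hq : q ∈ homogeneous 𝒜 wt (unitalDeg deg) N j) (hj : 0 ≤ j) :
    ∃ p ∈ homogeneous 𝒜 (fun x => wt (some x)) deg N j, Finsupp.mapDomain some p = q := by
  refine ⟨_, lcomapDomain_some_mem_homogeneous hq, ?_⟩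
  rw [mapDomain_some_comapDomain, (hq none).2 (by rw [unitalDeg_none]; omega),
    Finsupp.single_zero, sub_zero]

lemma IsFreeResolution.of_total (eq_bot_of_neg : ∀ N < 0, 𝒜 N = ⊥)
    (zero_eq_span : 𝒜 0 = Submodule.span R {1})
    (algebraMap_injective : Function.Injective (algebraMap R A))
    (wt_none : wt none = 0) (wt_pos : ∀ x, 0 < wt (some x)) (deg_nonneg : ∀ x, 0 ≤ deg x)
    (hnone : Δ (Finsupp.single none 1) = 0) (hΔ : ∀ q, Δ (Δ q) = 0)
    (hmem : ∀ x, Δ (Finsupp.single (some x) 1) ∈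
      homogeneous 𝒜 wt (unitalDeg deg) (wt (some x)) (deg x - 1))
    (hexact : ∀ N j, 0 ≤ j → ∀ q ∈ homogeneous 𝒜 wt (unitalDeg deg) N j, Δ q = 0 →
      ∃ q' ∈ homogeneous 𝒜 wt (unitalDeg deg) N (j + 1), Δ q' = q)
    (hsurj : ∀ N ≠ 0, ∀ r ∈ 𝒜 N, ∃ q ∈ homogeneous 𝒜 wt (unitalDeg deg) N 0,
      Δ q = Finsupp.single none r) :
    IsFreeResolution 𝒜 (fun x => wt (some x)) deg (reducedDifferential Δ)
      (reducedAugmentation Δ) where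
  eq_bot_of_neg := eq_bot_of_neg
  zero_eq_span := zero_eq_span
  algebraMap_injective := algebraMap_injective
  wt_pos := wt_pos
  deg_nonneg := deg_nonneg
  D_mem x := by
    simpa [reducedDifferential] using lcomapDomain_some_mem_homogeneous (hmem x)
  a_mem x := by simpa [wt_none, reducedAugmentation] using (hmem x none).1
  a_eq_zero x hx := by
    rw [reducedAugmentation, (hmem x none).2 (by rw [unitalDeg_none]; omega), neg_zero]
  a_D p := (reducedDifferential_eq_zero_and hnone hΔ p).2
  D_D p := (reducedDifferential_eq_zero_and hnone hΔ p).1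
  exact N j p hp hD ha := by
    rcases lt_or_ge j 0 with hj | hj
    · have hp0 : p = 0 := Finsupp.ext fun x => (hp x).2 (by have := deg_nonneg x; omega)
      exact ⟨0, zero_mem _, by rw [hp0, map_zero]⟩
    obtain ⟨q, hq, hΔq⟩ := hexact N j hj _ (mapDomain_some_mem_homogeneous hp)
      (by rw [apply_mapDomain_some, hD, ha]; simp)
    obtain ⟨p', hp', rfl⟩ := exists_mapDomain_some_eq hq (by omega)
    rw [apply_mapDomain_some, sub_eq_iff_eq_add', ← sub_eq_iff_eq_add, ← Finsupp.mapDomain_sub]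
      at hΔq
    exact ⟨p', hp', sub_eq_zero.1 (eq_zero_of_mapDomain_some_eq_single hΔq)⟩
  surjective N hN r hr := by
    obtain ⟨q, hq, hΔq⟩ := hsurj N hN (-r) (neg_mem hr)
    obtain ⟨p, hp, rfl⟩ := exists_mapDomain_some_eq hq le_rfl
    refine ⟨p, hp, ?_⟩
    rw [apply_mapDomain_some] at hΔq
    simpa [Finsupp.mapDomain_of_notMem_range] using DFunLike.congr_fun hΔq none

end Reduction

section Alphabet

variable {F : Type} [Field F] {𝒜 : GradedAlg F} {T : 𝒜.GMod} {R : MinRes T} {w : ℕ → ℕ}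

/-- Bases of the terms `P_n` of a resolution by elements of weight `w n`, the basis of `P_0`
consisting of a single element. The basis elements are gathered in one alphabet `Option Letter`:
`none` generates `P_0`, and a letter `x` generates `P_{deg x + 1}`, so that degrees in the alphabet
are shifted by one from those in the resolution. -/
structure HomogeneousBasis (R : MinRes T) (w : ℕ → ℕ) where
  Letter : Type
  deg : Letter → ℕ
  basis : ∀ n : ℕ, Module.Basis
    {y : Option Letter // unitalDeg (fun x => (deg x : ℤ)) y + 1 = n} 𝒜.A (R.P n).M
  basis_mem : ∀ n y, basis n y ∈ (R.P n).grading (w n)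

lemma nonempty_homogeneousBasis [Nontrivial 𝒜.A] (h0 : 𝒜.grading 0 = Submodule.span F {1})
    (hT : IsTrivialGMod T) (hw : ∀ n, (R.P n).GenInDeg (w n)) :
    Nonempty (HomogeneousBasis R w) := by
  choose I b hb using fun n => exists_basis_of_genInDeg h0 (R.projective n) (hw n)
  obtain ⟨e₀⟩ := nonempty_equiv_unit h0 hT R (b 0)
  let deg : (Σ n, I (n + 1)) → ℤ := fun x => (x.1 : ℤ)
  have e (n : ℕ) : Nonempty (I n ≃ {y // unitalDeg deg y + 1 = n}) := by
    cases n with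
    | zero =>
      refine ⟨e₀.trans ⟨fun _ => ⟨none, by simp⟩, fun _ => (), fun _ => rfl, ?_⟩⟩
      rintro ⟨_ | x, hx⟩
      · rfl
      · simp only [unitalDeg_some, deg] at hx
        omega
    | succ n =>
      refine ⟨.ofBijective (fun i => ⟨some ⟨n, i⟩, by simp [deg]⟩) ⟨fun i j h => ?_, ?_⟩⟩
      · exact eq_of_heq (Sigma.mk.inj (Option.some.inj (congrArg Subtype.val h))).2
      · rintro ⟨_ | ⟨k, i⟩, hx⟩
        · simp only [unitalDeg_none] at hx
          omega
        · obtain rfl : k = n := by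
            simp only [unitalDeg_some, deg] at hx
            omega
          exact ⟨i, rfl⟩
  exact ⟨⟨_, Sigma.fst, fun n => (b n).reindex (e n).some, fun n y => by
    rw [Module.Basis.reindex_apply]
    exact hb n _⟩⟩

namespace HomogeneousBasis

variable (H : HomogeneousBasis R w) {n k : ℕ} {N j : ℤ}

/-- The degrees of the letters, as integers. -/
abbrev degree (x : H.Letter) : ℤ := H.deg x

/-- The weight of the generator `y`. -/
def wt (y : Option H.Letter) : ℤ := w (unitalDeg H.degree y + 1).toNat

/-- The inclusion of a term of the resolution into the free module on all generators. -/
def incl (n : ℕ) : (R.P n).M →ₗ[𝒜.A] (Option H.Letter →₀ 𝒜.A) :=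
  Finsupp.lmapDomain 𝒜.A 𝒜.A Subtype.val ∘ₗ (H.basis n).repr.toLinearMap

/-- The projection of the free module on all generators onto a term of the resolution. -/
def proj (n : ℕ) : (Option H.Letter →₀ 𝒜.A) →ₗ[𝒜.A] (R.P n).M :=
  (H.basis n).repr.symm.toLinearMap ∘ₗ Finsupp.lcomapDomain Subtype.val Subtype.val_injective

/-- The differential of the resolution on the free module on all generators. -/
def totalDifferential : (Option H.Letter →₀ 𝒜.A) →ₗ[𝒜.A] (Option H.Letter →₀ 𝒜.A) :=
  Finsupp.linearCombination 𝒜.A fun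
    | none => 0
    | some x => H.incl (H.deg x) ((R.d (H.deg x)).lin (H.basis (H.deg x + 1) ⟨some x, by simp⟩))

lemma incl_basis (y) : H.incl n (H.basis n y) = Finsupp.single y.1 1 := by
  simp [incl]

lemma repr_proj (p : Option H.Letter →₀ 𝒜.A) (y) : (H.basis n).repr (H.proj n p) y = p y := by
  simp [proj, Finsupp.lcomapDomain]

lemma incl_apply (m : (R.P n).M) (y : {y // unitalDeg H.degree y + 1 = n}) :
    H.incl n m y = (H.basis n).repr m y :=
  Finsupp.mapDomain_apply Subtype.val_injective _ _

lemma incl_apply_eq_zero (m : (R.P n).M) {y : Option H.Letter}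
    (hy : unitalDeg H.degree y + 1 ≠ n) : H.incl n m y = 0 :=
  Finsupp.mapDomain_of_notMem_range _ _ (by simpa using hy)

lemma proj_incl (m : (R.P n).M) : H.proj n (H.incl n m) = m :=
  (H.basis n).ext_elem fun y => by rw [repr_proj, incl_apply]

lemma proj_incl_of_ne (hnk : n ≠ k) (m : (R.P n).M) : H.proj k (H.incl n m) = 0 :=
  (H.basis k).ext_elem fun y => by
    rw [repr_proj, incl_apply_eq_zero _ _ (by rw [y.2]; exact_mod_cast hnk.symm), map_zero,
      Finsupp.zero_apply]

lemma incl_proj {p : Option H.Letter →₀ 𝒜.A}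
    (hp : ∀ y, unitalDeg H.degree y + 1 ≠ n → p y = 0) : H.incl n (H.proj n p) = p := by
  ext y
  by_cases hy : unitalDeg H.degree y + 1 = n
  · exact (H.incl_apply _ ⟨y, hy⟩).trans (H.repr_proj p ⟨y, hy⟩)
  · rw [incl_apply_eq_zero _ _ hy, hp y hy]

lemma proj_single_of_ne {y : Option H.Letter} (hy : unitalDeg H.degree y + 1 ≠ n) (r : 𝒜.A) :
    H.proj n (Finsupp.single y r) = 0 :=
  (H.basis n).ext_elem fun z => by
    have hz : y ≠ z := by rintro rfl; exact hy z.2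
    simp [repr_proj, Finsupp.single_eq_of_ne' hz]

lemma proj_single_one (y : {y // unitalDeg H.degree y + 1 = n}) :
    H.proj n (Finsupp.single y.1 1) = H.basis n y := by
  rw [← incl_basis, proj_incl]

lemma wt_of_degree {y : Option H.Letter} (hy : unitalDeg H.degree y + 1 = n) :
    H.wt y = w n := by
  rw [wt, hy, Int.toNat_natCast]

lemma incl_mem_homogeneous_iff {m : (R.P n).M} :
    H.incl n m ∈ homogeneous (intGrading 𝒜.grading) H.wt (unitalDeg H.degree) N (n - 1) ↔
      m ∈ (R.P n).grading N := by
  rw [mem_grading_iff_repr_mem (H.basis_mem n)]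
  refine ⟨fun h y => ?_, fun h y => ⟨?_, fun hy => H.incl_apply_eq_zero m (by omega)⟩⟩
  · simpa only [incl_apply, H.wt_of_degree y.2] using (h y).1
  · by_cases hy : unitalDeg H.degree y + 1 = n
    · simpa only [← H.incl_apply m ⟨y, hy⟩, H.wt_of_degree hy] using h ⟨y, hy⟩
    · simp [incl_apply_eq_zero _ _ hy]

lemma incl_proj_of_mem_homogeneous {p : Option H.Letter →₀ 𝒜.A}
    (hp : p ∈ homogeneous (intGrading 𝒜.grading) H.wt (unitalDeg H.degree) N (n - 1)) :
    H.incl n (H.proj n p) = p :=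
  H.incl_proj fun y hy => (hp y).2 (by omega)

lemma d_d (m : (R.P (n + 2)).M) : (R.d n).lin ((R.d (n + 1)).lin m) = 0 :=
  LinearMap.mem_ker.1 (R.exact n ▸ LinearMap.mem_range_self _ m)

@[simp]
lemma totalDifferential_single_none : H.totalDifferential (Finsupp.single none 1) = 0 := by
  simp [totalDifferential]

lemma totalDifferential_single_some (x : H.Letter) :
    H.totalDifferential (Finsupp.single (some x) 1) =
      H.incl (H.deg x) ((R.d (H.deg x)).lin (H.basis (H.deg x + 1) ⟨some x, by simp⟩)) := by
  simp [totalDifferential]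

lemma totalDifferential_incl_zero (m : (R.P 0).M) : H.totalDifferential (H.incl 0 m) = 0 := by
  refine LinearMap.congr_fun (f := H.totalDifferential ∘ₗ H.incl 0) (g := 0)
    ((H.basis 0).ext fun y => ?_) m
  obtain ⟨_ | x, hx⟩ := y
  · simp [incl_basis]
  · simp only [unitalDeg_some] at hx
    omega

lemma totalDifferential_incl_succ (m : (R.P (n + 1)).M) :
    H.totalDifferential (H.incl (n + 1) m) = H.incl n ((R.d n).lin m) := by
  refine LinearMap.congr_fun (f := H.totalDifferential ∘ₗ H.incl (n + 1))
    (g := H.incl n ∘ₗ (R.d n).lin) ((H.basis (n + 1)).ext fun y => ?_) m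
  obtain ⟨_ | x, hx⟩ := y
  · simp only [unitalDeg_none] at hx
    omega
  · obtain rfl : H.deg x = n := by
      simp only [unitalDeg_some] at hx
      omega
    simp only [LinearMap.comp_apply, incl_basis, totalDifferential_single_some]

lemma totalDifferential_incl_d (m : (R.P (n + 1)).M) :
    H.totalDifferential (H.incl n ((R.d n).lin m)) = 0 := by
  cases n with
  | zero => exact H.totalDifferential_incl_zero _
  | succ n => rw [totalDifferential_incl_succ, d_d, map_zero]

lemma totalDifferential_totalDifferential (p : Option H.Letter →₀ 𝒜.A) :
    H.totalDifferential (H.totalDifferential p) = 0 := by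
  refine LinearMap.congr_fun (f := H.totalDifferential ∘ₗ H.totalDifferential) (g := 0)
    (Finsupp.lhom_ext' fun y => LinearMap.ext_ring ?_) p
  rcases y with _ | x
  · simp
  · simp [totalDifferential_single_some, totalDifferential_incl_d]

lemma proj_totalDifferential (p : Option H.Letter →₀ 𝒜.A) :
    H.proj n (H.totalDifferential p) = (R.d n).lin (H.proj (n + 1) p) := by
  refine LinearMap.congr_fun (f := H.proj n ∘ₗ H.totalDifferential)
    (g := (R.d n).lin ∘ₗ H.proj (n + 1)) (Finsupp.lhom_ext' fun y => LinearMap.ext_ring ?_) p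
  simp only [LinearMap.comp_apply, Finsupp.lsingle_apply]
  by_cases hy : unitalDeg H.degree y + 1 = (n + 1 : ℕ)
  · rw [← H.incl_basis ⟨y, hy⟩, totalDifferential_incl_succ, proj_incl, proj_incl]
  · rw [proj_single_of_ne _ hy, map_zero]
    rcases y with _ | x
    · simp
    · rw [totalDifferential_single_some, proj_incl_of_ne]
      rintro rfl
      simp at hy

lemma totalDifferential_single_mem (x : H.Letter) :
    H.totalDifferential (Finsupp.single (some x) 1) ∈
      homogeneous (intGrading 𝒜.grading) H.wt (unitalDeg H.degree) (H.wt (some x))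
        (H.degree x - 1) := by
  rw [totalDifferential_single_some, H.incl_mem_homogeneous_iff,
    H.wt_of_degree (n := H.deg x + 1) (by simp)]
  exact (R.d _).grad _ _ (H.basis_mem _ _)

lemma exists_totalDifferential_eq (hj : 0 ≤ j) {q : Option H.Letter →₀ 𝒜.A}
    (hq : q ∈ homogeneous (intGrading 𝒜.grading) H.wt (unitalDeg H.degree) N j)
    (hΔ : H.totalDifferential q = 0) :
    ∃ q' ∈ homogeneous (intGrading 𝒜.grading) H.wt (unitalDeg H.degree) N (j + 1),
      H.totalDifferential q' = q := by
  obtain ⟨n, rfl⟩ : ∃ n : ℕ, j = (n + 1 : ℕ) - 1 := ⟨j.toNat, by omega⟩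
  have hproj := H.incl_proj_of_mem_homogeneous hq
  obtain ⟨z, hz, hdz⟩ := exists_mem_grading_of_mem_range (y := H.proj (n + 1) q) (R.d (n + 1))
    (H.incl_mem_homogeneous_iff.1 (by rwa [hproj]))
    (by rw [R.exact, LinearMap.mem_ker, ← proj_totalDifferential, hΔ, map_zero])
  refine ⟨H.incl (n + 2) z, ?_, by rw [totalDifferential_incl_succ, hdz, hproj]⟩
  rw [show ((n + 1 : ℕ) : ℤ) - 1 + 1 = (n + 2 : ℕ) - 1 by omega]
  exact H.incl_mem_homogeneous_iff.2 hz

lemma exists_totalDifferential_eq_single_none (hT : IsTrivialGMod T) (w_zero : w 0 = 0)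
    (hN : N ≠ 0) {r : 𝒜.A} (hr : r ∈ intGrading 𝒜.grading N) :
    ∃ q ∈ homogeneous (intGrading 𝒜.grading) H.wt (unitalDeg H.degree) N 0,
      H.totalDifferential q = Finsupp.single none r := by
  let e : (R.P 0).M := H.basis 0 ⟨none, by simp⟩
  have he : e ∈ (R.P 0).grading 0 := by simpa [w_zero] using H.basis_mem 0 ⟨none, by simp⟩
  obtain ⟨z, hz, hdz⟩ := exists_mem_grading_of_mem_range (y := r • e) (R.d 0)
    (smul_mem_of_mem_intGrading (by rwa [sub_zero]) he) (by
      rw [R.exact_aug, LinearMap.mem_ker, map_smul,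
        smul_eq_zero_of_isTrivialGMod hT r (mem_jideal_of_mem_intGrading hN hr)])
  refine ⟨H.incl 1 z, by simpa using H.incl_mem_homogeneous_iff.2 hz, ?_⟩
  rw [totalDifferential_incl_succ, hdz, map_smul, incl_basis, Finsupp.smul_single, smul_eq_mul,
    mul_one]

lemma isFreeResolution [Nontrivial 𝒜.A] (h0 : 𝒜.grading 0 = Submodule.span F {1})
    (hT : IsTrivialGMod T) (w_zero : w 0 = 0) (hw : StrictMono w) :
    IsFreeResolution (intGrading 𝒜.grading) (fun x => H.wt (some x)) H.degree
      (reducedDifferential H.totalDifferential) (reducedAugmentation H.totalDifferential) :=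
  .of_total (fun _ => intGrading_of_neg _) h0 (algebraMap F 𝒜.A).injective
    (by simp [wt, w_zero])
    (fun x => by
      rw [H.wt_of_degree (n := H.deg x + 1) (by simp)]
      exact_mod_cast (Nat.zero_le _).trans_lt (hw (Nat.succ_pos (H.deg x))))
    (fun _ => Int.natCast_nonneg _) H.totalDifferential_single_none
    H.totalDifferential_totalDifferential H.totalDifferential_single_mem
    (fun _ _ hj _ => H.exists_totalDifferential_eq hj)
    fun _ hN _ => H.exists_totalDifferential_eq_single_none hT w_zero hN

end HomogeneousBasis

end Alphabet

section UnitalModel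

variable {R X A : Type*} [CommRing R] [Ring A] [Algebra R A]

lemma unitalDer_mem_bigraded {wt : Option X → ℤ} {deg : X → ℤ} {c : X → FreeAlgebra R X}
    (wt_none : wt none = 0)
    (hc : ∀ x, c x ∈ bigraded R (fun x => wt (some x)) deg (wt (some x)) (deg x - 1))
    (y : Option X) :
    unitalDer deg c y ∈ bigraded R wt (unitalDeg deg) (wt y) (unitalDeg deg y - 1) := by
  have hnone : ι R none ∈ bigraded R wt (unitalDeg deg) 0 (-1) := by
    simpa [wt_none] using ι_mem_bigraded (R := R) (wt := wt) (deg := unitalDeg deg) none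
  cases y with
  | none => simpa [unitalDer, wt_none] using mul_mem_bigraded hnone hnone
  | some x =>
    have hx := ι_mem_bigraded (R := R) (wt := wt) (deg := unitalDeg deg) (some x)
    have hincl : bigraded R (fun x => wt (some x)) deg (wt (some x)) (deg x - 1) ≤
        (bigraded R wt (unitalDeg deg) (wt (some x)) (deg x - 1)).comap
          (inclSome R X).toLinearMap :=
      bigraded_le fun l hN hj => by
        rw [Submodule.mem_comap, AlgHom.toLinearMap_apply, inclSome_word, ← hN, ← hj]
        simpa [Function.comp_def] using
          word_mem_bigraded (R := R) (wt := wt) (deg := unitalDeg deg) (l.map some)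
    refine sub_mem (add_mem (hincl (hc x)) ?_) (Submodule.smul_mem _ _ ?_)
    · simpa [neg_add_eq_sub] using mul_mem_bigraded hnone hx
    · simpa [sub_eq_add_neg] using mul_mem_bigraded hx hnone

variable {𝒜 : ℤ → Submodule R A} {wt deg : X → ℤ} {D : (X →₀ A) →ₗ[A] (X →₀ A)} {a : X → A}
  {c : X → FreeAlgebra R X}

lemma IsMinimalModel.lift_eq_zero (M : IsMinimalModel wt deg D a c)
    (H : IsFreeResolution 𝒜 wt deg D a) (x : X) : FreeAlgebra.lift R a (c x) = 0 := by
  rw [lift_eq_linearCombination_foxDer_of_augmentation_eq_zero a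
    (algebraMapInv_eq_zero_of_mem_bigraded (H.wt_pos x).ne' (M.mem x)), M.foxDer_eq, H.a_D]

lemma IsMinimalModel.differentialOf_unitalDer {Δ : (Option X →₀ A) →ₗ[A] (Option X →₀ A)}
    (M : IsMinimalModel wt deg (reducedDifferential Δ) (reducedAugmentation Δ) c)
    (H : IsFreeResolution 𝒜 wt deg (reducedDifferential Δ) (reducedAugmentation Δ))
    (hnone : Δ (Finsupp.single none 1) = 0) :
    differentialOf (extendZero (reducedAugmentation Δ)) (unitalDer deg c) = Δ := by
  refine Finsupp.lhom_ext' fun y => LinearMap.ext_ring ?_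
  simp only [LinearMap.comp_apply, Finsupp.lsingle_apply, differentialOf_single, one_smul]
  cases y with
  | none => rw [foxDer_unitalDer_none, hnone]
  | some x =>
    rw [foxDer_unitalDer_some, M.foxDer_eq, Finsupp.smul_single, H.koszulSign_smul,
      ← Finsupp.mapDomain_single, apply_mapDomain_some, Finsupp.linearCombination_single, one_smul]

lemma IsMinimalModel.foxDer_linearCombination (M : IsMinimalModel wt deg D a c) (v : X →₀ R) :
    foxDer a (Finsupp.linearCombination R c v) = D (v.mapRange (algebraMap R A) (map_zero _)) := by
  induction v using Finsupp.induction_linear with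
  | zero => simp
  | add v v' hv hv' => rw [map_add, map_add, hv, hv', Finsupp.mapRange_add (map_add _), map_add]
  | single x r =>
    rw [Finsupp.linearCombination_single, map_smul, M.foxDer_eq, Finsupp.mapRange_single,
      ← LinearMap.map_smul_of_tower, Finsupp.smul_single, Algebra.algebraMap_eq_smul_one]

end UnitalModel

namespace HomogeneousBasis

variable {F : Type} [Field F] {𝒜 : GradedAlg F} {T : 𝒜.GMod} {R : MinRes T} {w : ℕ → ℕ}
  (H : HomogeneousBasis R w) {c : H.Letter → FreeAlgebra F H.Letter}

/-- The free algebra on the letters of `H` with differential `c` is the minimal model of `𝒜`. -/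
abbrev IsModel (c : H.Letter → FreeAlgebra F H.Letter) : Prop :=
  IsMinimalModel (fun x => H.wt (some x)) H.degree (reducedDifferential H.totalDifferential)
    (reducedAugmentation H.totalDifferential) c

lemma neg_one_le_unitalDeg (y : Option H.Letter) : -1 ≤ unitalDeg H.degree y := by
  cases y with
  | none => simp
  | some x => exact (by simp : (-1 : ℤ) ≤ 0).trans (Int.natCast_nonneg _)

lemma two_le_length_of_sum_wt_eq (w_zero : w 0 = 0) (hw : StrictMono w)
    {l : List (Option H.Letter)} {y : Option H.Letter} (hN : (l.map H.wt).sum = H.wt y)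
    (hj : (l.map (unitalDeg H.degree)).sum = unitalDeg H.degree y - 1) : 2 ≤ l.length := by
  have := H.neg_one_le_unitalDeg y
  by_contra! hl
  obtain rfl | ⟨z, rfl⟩ : l = [] ∨ ∃ z, l = [z] := by
    rw [← List.length_eq_zero_iff, ← List.length_eq_one_iff]
    omega
  · simp only [List.map_nil, List.sum_nil, wt, eq_comm (a := (0 : ℤ)), Nat.cast_eq_zero] at hN hj
    have := hw.injective (hN.trans w_zero.symm)
    omega
  · simp only [List.map_singleton, List.sum_singleton, wt, Nat.cast_inj] at hN hj
    have hz := H.neg_one_le_unitalDeg z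
    have := hw.injective hN
    omega

variable {H} in
/-- The cobar differential of the minimal model `c`, with the unit adjoined. -/
def IsModel.cobarDatum [Nontrivial 𝒜.A] (M : H.IsModel c) (w_zero : w 0 = 0) (hw : StrictMono w) :
    CobarDatum F (Option H.Letter) where
  wt := H.wt
  deg := unitalDeg H.degree
  c := unitalDer H.degree c
  c_mem := unitalDer_mem_bigraded (by simp [wt, w_zero]) M.mem
  koszulDer_c := koszulDer_unitalDer (koszulAut_of_mem_bigraded_sub_one M.mem) M.koszulDer_self
  two_le_length _ _ := H.two_le_length_of_sum_wt_eq w_zero hw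
  finite n := by
    have := R.fg (n + 1).toNat
    have hfin : {y | unitalDeg H.degree y + 1 = (n + 1).toNat}.Finite :=
      Module.Finite.finite_basis (H.basis (n + 1).toNat)
    refine hfin.subset fun y hy => ?_
    have := H.neg_one_le_unitalDeg y
    simp only [Set.mem_ofPred_eq] at hy ⊢
    omega

lemma eq_zero_of_totalDifferential_mapRange_eq_zero [Nontrivial 𝒜.A] {v : Option H.Letter →₀ F}
    (hv : H.totalDifferential (v.mapRange (algebraMap F 𝒜.A) (map_zero _)) = 0)
    {y : Option H.Letter} (hy : 0 ≤ unitalDeg H.degree y) : v y = 0 := by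
  obtain ⟨n, hn⟩ : ∃ n : ℕ, unitalDeg H.degree y + 1 = (n + 1 : ℕ) :=
    ⟨(unitalDeg H.degree y).toNat, by omega⟩
  have hcycle := H.proj_totalDifferential (n := n) (v.mapRange (algebraMap F 𝒜.A) (map_zero _))
  rw [hv, map_zero, eq_comm, ← LinearMap.mem_ker, ← R.exact] at hcycle
  simpa [repr_proj, algebraMap_mem_jideal] using
    repr_mem_jideal (H.basis (n + 1)) (R.minimal _ hcycle) ⟨y, hn⟩

variable {H}

lemma IsModel.eq_zero_of_repr_linearCombination_eq_zero [Nontrivial 𝒜.A]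
    (h0 : 𝒜.grading 0 = Submodule.span F {1}) (hT : IsTrivialGMod T) (w_zero : w 0 = 0)
    (hw : StrictMono w) (M : H.IsModel c) {n : ℤ} (hn : 2 ≤ n) {u : Option H.Letter →₀ F}
    (hu : u ∈ (M.cobarDatum w_zero hw).degreePart n)
    (h : ∀ l : List (Option H.Letter), (∀ y ∈ l, 0 ≤ unitalDeg H.degree y) →
      (wordBasis F _).repr (Finsupp.linearCombination F (unitalDer H.degree c) u) l = 0) :
    u = 0 := by
  have hdeg : ∀ y, u y ≠ 0 → unitalDeg H.degree y + 1 = n := CobarDatum.mem_degreePart.1 hu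
  have hnone : u none = 0 := by
    by_contra hne
    have := hdeg none hne
    simp only [unitalDeg_none] at this
    omega
  obtain ⟨v, rfl⟩ : ∃ v : H.Letter →₀ F, v.mapDomain some = u :=
    ⟨_, by rw [mapDomain_some_comapDomain, hnone, Finsupp.single_zero, sub_zero]⟩
  have hc : Finsupp.linearCombination F c v = 0 := (wordBasis F H.Letter).ext_elem fun l => by
    rw [map_zero, Finsupp.zero_apply, ← h (l.map some) (by simp),
      Finsupp.linearCombination_mapDomain]
    simp [Finsupp.linearCombination_apply, Finsupp.sum, map_sum, repr_unitalDer_map_some]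
  have hD := M.foxDer_linearCombination v
  have ha : Finsupp.linearCombination 𝒜.A (reducedAugmentation H.totalDifferential)
      (v.mapRange (algebraMap F 𝒜.A) (map_zero _)) = 0 := by
    rw [Finsupp.linearCombination_apply, Finsupp.sum_mapRange_index (by simp)]
    refine Finset.sum_eq_zero fun x hx => ?_
    have hx' := hdeg (some x) (by
      rwa [Finsupp.mapDomain_apply (Option.some_injective _), ← Finsupp.mem_support_iff])
    simp only [unitalDeg_some] at hx'
    dsimp only
    rw [(H.isFreeResolution h0 hT w_zero hw).a_eq_zero x (by omega), smul_zero]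
  ext y
  by_contra hy
  refine hy (H.eq_zero_of_totalDifferential_mapRange_eq_zero ?_ (by linarith [hdeg y hy]))
  rw [← Finsupp.mapDomain_mapRange _ _ _ _ (map_add _), apply_mapDomain_some, ← hD, hc, ha]
  simp

end HomogeneousBasis

/-! ### Comparison with `Ext` -/

section DualCochain

variable {R Y A T : Type*} [CommRing R] [Ring A] [AddCommGroup T] [Module R T] [Module A T]

/-- The cochain on the free module on the letters with values `φ y • u`. -/
def dualCochain (u : T) (φ : Y → R) : (Y →₀ A) →ₗ[A] T :=
  Finsupp.linearCombination A fun y => φ y • u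

lemma dualCochain_single (u : T) (φ : Y → R) (y : Y) (r : A) :
    dualCochain u φ (Finsupp.single y r) = r • φ y • u :=
  Finsupp.linearCombination_single _ _ _

lemma dualEval_append_mul_ι (L : List (Y → R)) (f : Y → R) (t : FreeAlgebra R Y) (y : Y) :
    dualEval (L ++ [f]) (t * ι R y) = f y * dualEval L t := by
  have hι (g : Y → R) : contract g (ι R y) = g y • 1 := by rw [← mul_one (ι R y), contract_ι_mul]
  induction L generalizing t with
  | nil => simp [dualEval_cons, contract_mul, hι, mul_comm]
  | cons g L ih =>
    rw [List.cons_append, dualEval_cons, dualEval_cons, contract_mul, map_add, ih, hι, map_smul,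
      map_smul, dualEval_of_ne_nil_one (by simp), smul_zero, smul_zero, add_zero]

variable [Algebra R A] [IsScalarTower R A T] {a : Y → A} {u : T}

lemma lift_smul_of_smul_eq_zero (ha : ∀ y, a y • u = 0) (t : FreeAlgebra R Y) :
    FreeAlgebra.lift R a t • u = algebraMapInv t • u := by
  induction t using word_mul_ι_induction with
  | zero => simp
  | add t t' h h' => simp only [map_add, add_smul, h, h']
  | smul r t h => simp only [map_smul, smul_assoc, h]
  | one => simp
  | mul_ι l y => simp [mul_smul, ha]

variable [SMulCommClass A R T]

lemma dualCochain_foxDer (ha : ∀ y, a y • u = 0) (φ : Y → R) (t : FreeAlgebra R Y) :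
    dualCochain u φ (foxDer a t) = dualEval [φ] t • u := by
  induction t using word_mul_ι_induction with
  | zero => simp
  | add t t' h h' => simp only [map_add, add_smul, h, h']
  | smul r t h => rw [map_smul, LinearMap.map_smul_of_tower, h, map_smul, smul_assoc]
  | one => simp [dualEval_of_ne_nil_one]
  | mul_ι l y =>
    rw [foxDer_mul_ι, dualCochain_single, smul_comm, lift_smul_of_smul_eq_zero ha, smul_smul,
      ← dualEval_nil, ← dualEval_append_mul_ι, List.nil_append]

lemma dualCochain_secondFoxDer (ha : ∀ y, a y • u = 0) (φ g : Y → R) (t : FreeAlgebra R Y) :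
    dualCochain u φ (secondFoxDer a g t) = dualEval [φ, g] t • u := by
  induction t using word_mul_ι_induction with
  | zero => simp
  | add t t' h h' => simp only [map_add, add_smul, h, h']
  | smul r t h => rw [map_smul, LinearMap.map_smul_of_tower, h, map_smul, smul_assoc]
  | one => simp [dualEval_of_ne_nil_one]
  | mul_ι l y =>
    rw [secondFoxDer_mul_ι, LinearMap.map_smul_of_tower, dualCochain_foxDer ha, smul_smul,
      ← dualEval_append_mul_ι, List.singleton_append]

end DualCochain

namespace CobarDatum

variable {R Y : Type*} [CommRing R] {Z : CobarDatum R Y}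

variable (Z) in
lemma algebraMapInv_foxCoeff_c (x y : Y) : algebraMapInv (foxCoeff (Z.c x) y) = 0 := by
  suffices h : bigraded R Z.wt Z.deg (Z.wt x) (Z.deg x - 1) ≤
      LinearMap.ker (algebraMapInv.toLinearMap ∘ₗ Finsupp.lapply y ∘ₗ foxCoeff) from h (Z.c_mem x)
  refine bigraded_le fun l hN hj => ?_
  have hl := Z.two_le_length l x hN hj
  obtain rfl | ⟨l, z, rfl⟩ := l.eq_nil_or_concat
  · simp at hl
  · obtain ⟨x, l, rfl⟩ := l.exists_cons_of_length_pos (by simpa [Nat.lt_iff_add_one_le] using hl)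
    rw [LinearMap.mem_ker, List.concat_eq_append, word_append, word_singleton]
    simp only [LinearMap.comp_apply, foxCoeff_mul_ι]
    classical
    simp only [Finsupp.lapply_apply, Finsupp.single_apply]
    split_ifs <;> simp [word_cons]

lemma ainfOp_two_apply {i j : ℤ} {f g : Y →₀ R} (hf : f ∈ Z.degreePart i)
    (hg : g ∈ Z.degreePart j) (y : Y) :
    Z.ainfOp 2 ![f, g] y = koszulSign R i * dualEval [⇑f, ⇑g] (Z.c y) := by
  rw [ainfOp_apply (I := ![i, j]) (by simp [Fin.forall_fin_two, hf, hg]), Finsupp.smul_apply,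
    coe_barOp]
  simp [suspensionExponent, dualOp]

end CobarDatum

section Cocycles

variable {F : Type} [Field F] {𝒜 : GradedAlg F} {T M : 𝒜.GMod} {n : ℕ}

lemma precompF_d_eq_zero (hT : IsTrivialGMod T) (R : MinRes M) (f : HomSp T R n) :
    precompF T (R.d n).lin f = 0 :=
  LinearMap.ext fun _ => map_eq_zero_of_mem_jideal_smul_top (smul_eq_zero_of_isTrivialGMod hT) f
    (R.minimal n ⟨_, rfl⟩)

lemma cocyc_eq_top (hT : IsTrivialGMod T) (R : MinRes M) (n : ℕ) : cocyc T R n = ⊤ :=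
  eq_top_iff.2 fun f _ => precompF_d_eq_zero hT R f

lemma cobound_eq_bot (hT : IsTrivialGMod T) (R : MinRes M) (n : ℕ) : cobound T R n = ⊥ := by
  cases n with
  | zero => rfl
  | succ n =>
    rw [eq_bot_iff]
    rintro _ ⟨f, rfl⟩
    exact precompF_d_eq_zero hT R f

lemma extRel_eq_bot (hT : IsTrivialGMod T) (R : MinRes M) (n : ℕ) : extRel T R n = ⊥ := by
  rw [extRel, cobound_eq_bot hT, Submodule.comap_bot, Submodule.ker_subtype]

/-- `Ext` into the trivial module is the space of all cochains on a minimal resolution. -/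
def extEquiv (hT : IsTrivialGMod T) (R : MinRes M) (n : ℕ) : HomSp T R n ≃ₗ[F] ExtQ T R n :=
  (LinearEquiv.ofTop _ (cocyc_eq_top hT R n)).symm ≪≫ₗ
    (Submodule.quotEquivOfEqBot _ (extRel_eq_bot hT R n)).symm

lemma extEquiv_apply (hT : IsTrivialGMod T) (R : MinRes M) {f : HomSp T R n}
    (hf : f ∈ cocyc T R n) : extEquiv hT R n f = extCls T hf := rfl

lemma map_extEquiv_homDeg (hT : IsTrivialGMod T) (R : MinRes M) (n : ℕ) (j : ℤ) :
    (homDeg T R n j).map (extEquiv hT R n).toLinearMap = extComp T R n j := by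
  ext e
  constructor
  · rintro ⟨f, hf, rfl⟩
    exact ⟨⟨f, cocyc_eq_top hT R n ▸ Submodule.mem_top⟩, hf, rfl⟩
  · rintro ⟨⟨f, _⟩, hf, rfl⟩
    exact ⟨f, hf, rfl⟩

end Cocycles

namespace HomogeneousBasis

section Cochains

variable {F : Type} [Field F] {𝒜 : GradedAlg F} {T : 𝒜.GMod} {R : MinRes T} {w : ℕ → ℕ}
  (H : HomogeneousBasis R w) {n : ℕ} {j : ℤ}

/-- The image in the trivial module of the generator of `P_0`. -/
def unitClass : T.M := R.aug.lin (H.basis 0 ⟨none, by simp⟩)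

/-- The cochain on `P_n` with value `φ y • unitClass` on the basis element `y`. -/
def cochain (n : ℕ) (φ : Option H.Letter → F) : HomSp T R n :=
  dualCochain H.unitClass φ ∘ₗ H.incl n

lemma cochain_basis (φ : Option H.Letter → F) (y) :
    H.cochain n φ (H.basis n y) = φ y • H.unitClass := by
  rw [cochain, LinearMap.comp_apply, incl_basis, dualCochain_single, one_smul]

lemma cochain_proj {φ : Option H.Letter → F} (hφ : ∀ y, φ y ≠ 0 → unitalDeg H.degree y + 1 = n)
    (p : Option H.Letter →₀ 𝒜.A) : H.cochain n φ (H.proj n p) = dualCochain H.unitClass φ p := by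
  refine LinearMap.congr_fun (f := H.cochain n φ ∘ₗ H.proj n) (g := dualCochain H.unitClass φ)
    (Finsupp.lhom_ext' fun y => LinearMap.ext_ring ?_) p
  simp only [LinearMap.comp_apply, Finsupp.lsingle_apply, dualCochain_single, one_smul]
  by_cases hy : unitalDeg H.degree y + 1 = n
  · rw [H.proj_single_one ⟨y, hy⟩, cochain_basis]
  · rw [H.proj_single_of_ne hy, map_zero, not_imp_comm.1 (hφ y) hy, zero_smul]

lemma aug_proj (p : Option H.Letter →₀ 𝒜.A) :
    R.aug.lin (H.proj 0 p) = p none • H.unitClass := by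
  refine LinearMap.congr_fun (f := R.aug.lin ∘ₗ H.proj 0)
    (g := (LinearMap.toSpanSingleton 𝒜.A T.M H.unitClass) ∘ₗ Finsupp.lapply none)
    (Finsupp.lhom_ext' fun y => LinearMap.ext_ring ?_) p
  simp only [LinearMap.comp_apply, Finsupp.lsingle_apply]
  cases y with
  | none =>
    rw [H.proj_single_one (n := 0) ⟨none, by simp⟩]
    simp [unitClass]
  | some x =>
    have hx := Int.natCast_nonneg (H.deg x)
    rw [H.proj_single_of_ne (n := 0) (by rw [unitalDeg_some, degree]; omega)]
    simp

include H in
lemma homDeg_weight (hT : IsTrivialGMod T) (n : ℕ) : homDeg T R n (w n) = ⊤ := by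
  refine eq_top_iff.2 fun f _ i hi x hx =>
    map_eq_zero_of_mem_jideal_smul_top (smul_eq_zero_of_isTrivialGMod hT) f ?_
  rw [← (H.basis n).linearCombination_repr x]
  exact Submodule.sum_mem _ fun y _ => Submodule.smul_mem_smul
    (mem_jideal_of_mem_intGrading (sub_ne_zero.2 hi)
      ((mem_grading_iff_repr_mem (H.basis_mem n)).1 hx y)) Submodule.mem_top

include H in
lemma homDeg_of_ne_weight (hj : j ≠ w n) : homDeg T R n j = ⊥ :=
  eq_bot_iff.2 fun _ hf => (H.basis n).ext fun y => hf _ hj.symm _ (H.basis_mem n y)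

variable [Nontrivial 𝒜.A] (h0 : 𝒜.grading 0 = Submodule.span F {1}) (hT : IsTrivialGMod T)

include h0 hT

lemma unitClass_ne_zero : H.unitClass ≠ 0 := by
  rw [unitClass, ← augBasis_apply h0 hT]
  exact (augBasis h0 hT R (H.basis 0)).ne_zero _

lemma exists_smul_unitClass_eq (x : T.M) : ∃ r : F, r • H.unitClass = x := by
  induction x using basis_induction (augBasis h0 hT R (H.basis 0)) with
  | zero => exact ⟨0, zero_smul _ _⟩
  | add x x' hx hx' =>
    obtain ⟨r, rfl⟩ := hx
    obtain ⟨r', rfl⟩ := hx'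
    exact ⟨r + r', add_smul _ _ _⟩
  | smul r y =>
    obtain ⟨_ | x, hx⟩ := y
    · exact ⟨r, by rw [augBasis_apply, unitClass]⟩
    · simp only [unitalDeg_some] at hx
      omega

/-- The trivial module is one-dimensional over `F`. -/
def unitClassEquiv : F ≃ₗ[F] T.M :=
  .ofBijective (LinearMap.toSpanSingleton F T.M H.unitClass)
    ⟨LinearMap.ker_eq_bot.1 (LinearMap.ker_toSpanSingleton F (H.unitClass_ne_zero h0 hT)),
      H.exists_smul_unitClass_eq h0 hT⟩

/-- Cochains on `P_n` correspond to the functionals supported on the letters of degree `n`. -/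
def cochainEquiv (n : ℕ) :
    Finsupp.supported F F {y : Option H.Letter | unitalDeg H.degree y + 1 = n} ≃ₗ[F]
      HomSp T R n :=
  have := R.fg n
  have : Finite {y : Option H.Letter | unitalDeg H.degree y + 1 = n} :=
    Module.Finite.finite_basis (H.basis n)
  Finsupp.supportedEquivFinsupp _ ≪≫ₗ Finsupp.linearEquivFunOnFinite F F _ ≪≫ₗ
    LinearEquiv.piCongrRight (fun _ => H.unitClassEquiv h0 hT) ≪≫ₗ (H.basis n).constr F

lemma cochainEquiv_apply (φ) : H.cochainEquiv h0 hT n φ = H.cochain n φ.1 :=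
  (H.basis n).ext fun y => by
    rw [cochain_basis]
    exact (H.basis n).constr_basis F _ y

end Cochains

section Yoneda

variable {F : Type} [Field F] {𝒜 : GradedAlg F} {T : 𝒜.GMod} {R : MinRes T}
  {w : ℕ → ℕ} {H : HomogeneousBasis R w} {c : H.Letter → FreeAlgebra F H.Letter}

/-- The lift of the cochain `φ` to the free module on all generators. -/
def totalLift (H : HomogeneousBasis R w) (c : H.Letter → FreeAlgebra F H.Letter)
    (φ : Option H.Letter → F) : (Option H.Letter →₀ 𝒜.A) →ₗ[𝒜.A] (Option H.Letter →₀ 𝒜.A) :=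
  liftOf (extendZero (reducedAugmentation H.totalDifferential)) (unitalDer H.degree c) φ

lemma totalLift_single (φ : Option H.Letter → F) (y) :
    totalLift H c φ (Finsupp.single y 1) = secondFoxDer
      (extendZero (reducedAugmentation H.totalDifferential)) φ (unitalDer H.degree c y) := by
  rw [totalLift, liftOf_single, one_smul]

variable [Nontrivial 𝒜.A] (h0 : 𝒜.grading 0 = Submodule.span F {1}) (hT : IsTrivialGMod T)
  (w_zero : w 0 = 0) (hw : StrictMono w)

include h0 hT w_zero hw

lemma IsModel.totalDifferential_totalLift (M : H.IsModel c) (φ : Option H.Letter → F) (p) :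
    H.totalDifferential (totalLift H c φ p) = -totalLift H c φ (H.totalDifferential p) := by
  have HR := H.isFreeResolution h0 hT w_zero hw
  let Z := M.cobarDatum w_zero hw
  rw [← M.differentialOf_unitalDer HR (by simp)]
  refine differentialOf_liftOf (deg := unitalDeg H.degree) ?_ Z.algebraMapInv_c
    Z.algebraMapInv_foxCoeff_c (lift_unitalDer (M.lift_eq_zero HR)) Z.koszulDer_c φ p
  rintro (_ | x)
  · simp
  · exact HR.koszulSign_smul x

/-- The Yoneda lift of a cochain; the sign makes the anticommuting `totalLift` a chain map. -/
def IsModel.chainLift (M : H.IsModel c) (j : ℕ) (φ : Option H.Letter → F) :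
    ChainLift T R R j (H.cochain j φ) where
  ℓ m k _ := (-1 : ℤ) ^ k • (H.proj k ∘ₗ totalLift H c φ ∘ₗ H.incl m)
  comm_aug := (H.basis j).ext fun y => by
    simp only [pow_zero, one_smul, LinearMap.comp_apply]
    rw [incl_basis, aug_proj, totalLift_single, secondFoxDer_unitalDer_none, algebraMap_smul,
      cochain_basis]
  comm k := LinearMap.ext fun m => by
    simp only [LinearMap.comp_apply, LinearMap.smul_apply]
    rw [map_zsmul, ← proj_totalDifferential,
      M.totalDifferential_totalLift h0 hT w_zero hw, totalDifferential_incl_succ, map_neg, pow_succ,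
      mul_neg_one, neg_smul_neg]

lemma extendZero_reducedAugmentation_smul_unitClass (y : Option H.Letter) :
    extendZero (reducedAugmentation H.totalDifferential) y • H.unitClass = 0 := by
  have HR := H.isFreeResolution h0 hT w_zero hw
  cases y with
  | none => simp
  | some x =>
    exact smul_eq_zero_of_isTrivialGMod hT _
      (mem_jideal_of_mem_intGrading (HR.wt_pos x).ne' (HR.a_mem x)) _

lemma IsModel.cochain_ainfOp_two (M : H.IsModel c) {i j : ℕ} {f g : Option H.Letter →₀ F}
    (hf : f ∈ (M.cobarDatum w_zero hw).degreePart i)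
    (hg : g ∈ (M.cobarDatum w_zero hw).degreePart j) :
    H.cochain (i + j) ((M.cobarDatum w_zero hw).ainfOp 2 ![f, g]) =
      H.cochain i f ∘ₗ (M.chainLift h0 hT w_zero hw j g).ℓ (i + j) i rfl :=
  (H.basis (i + j)).ext fun y => by
    simp only [chainLift, LinearMap.comp_apply, LinearMap.smul_apply]
    rw [cochain_basis, CobarDatum.ainfOp_two_apply hf hg, map_zsmul, incl_basis,
      H.cochain_proj (CobarDatum.mem_degreePart.1 hf), totalLift_single,
      dualCochain_secondFoxDer (extendZero_reducedAugmentation_smul_unitClass h0 hT w_zero hw),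
      mul_smul, koszulSign_natCast_smul]
    rfl

end Yoneda

end HomogeneousBasis

section AInftyOnExt

variable {F : Type} [Field F] {𝒜 : GradedAlg F} {T : 𝒜.GMod} {R : MinRes T}
  {μ : ∀ i j : ℕ, ExtQ T R i →ₗ[F] ExtQ T R j →ₗ[F] ExtQ T R (i + j)}

/-- The components of `Z.toAInfty` are the graded pieces of `Z`. -/
def CobarDatum.edegEquiv {Y : Type} (Z : CobarDatum F Y) (n : ℤ) :
    AInf.Edeg Z.toAInfty n ≃ₗ[F] Z.degreePart n where
  toFun f := ⟨f.1, edeg_toAInfty Z n ▸ f.2⟩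
  invFun f := ⟨f.1, (edeg_toAInfty Z n).symm ▸ f.2⟩
  map_add' _ _ := rfl
  map_smul' _ _ := rfl
  left_inv _ := rfl
  right_inv _ := rfl

/-- Identifications of the graded pieces of a cobar datum with `Ext` exhibit its `A_∞`-algebra as
a structure on the Koszul dual. -/
def CobarDatum.ainftyOnExt {Y : Type} (Z : CobarDatum F Y)
    (ψ : ∀ n : ℕ, Z.degreePart n ≃ₗ[F] ExtQ T R n)
    (comp_neg : ∀ n j : ℤ, n < 0 → Z.comp n j = ⊥)
    (ψ_comp : ∀ (n : ℕ) (j : ℤ),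
      ((Z.comp n j).comap (Z.degreePart n).subtype).map (ψ n).toLinearMap = extComp T R n j)
    (ψ_mul : ∀ (i j : ℕ) (f g : Y →₀ F) (hf : f ∈ Z.degreePart i) (hg : g ∈ Z.degreePart j)
      (hm : Z.ainfOp 2 ![f, g] ∈ Z.degreePart (i + j : ℕ)),
      ψ (i + j) ⟨_, hm⟩ = μ i j (ψ i ⟨f, hf⟩) (ψ j ⟨g, hg⟩)) :
    AInf.AInftyOnExt 𝒜 T R μ Z.toAInfty where
  comp_neg := comp_neg
  ψ n := Z.edegEquiv n ≪≫ₗ ψ n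
  ψ_comp n j := by
    rw [← ψ_comp n j]
    ext e
    constructor
    · rintro ⟨⟨f, hf⟩, hf', rfl⟩
      exact ⟨⟨f, edeg_toAInfty Z n ▸ hf⟩, hf', rfl⟩
    · rintro ⟨⟨f, hf⟩, hf', rfl⟩
      exact ⟨⟨f, (edeg_toAInfty Z n).symm ▸ hf⟩, hf', rfl⟩
  ψ_mul i j f g hf hg hm := ψ_mul i j f g (edeg_toAInfty Z i ▸ hf) (edeg_toAInfty Z j ▸ hg)
    (edeg_toAInfty Z _ ▸ hm)

namespace HomogeneousBasis

variable {w : ℕ → ℕ} {H : HomogeneousBasis R w} {c : H.Letter → FreeAlgebra F H.Letter}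
  [Nontrivial 𝒜.A] {w_zero : w 0 = 0} {hw : StrictMono w}

lemma IsModel.comp_cobarDatum_eq_bot (M : H.IsModel c) {n j : ℤ} (hn : n < 0) :
    (M.cobarDatum w_zero hw).comp n j = ⊥ :=
  eq_bot_iff.2 fun _ hf => Finsupp.ext fun y => by_contra fun hy => by
    have hdeg : unitalDeg H.degree y + 1 = n := (CobarDatum.mem_comp.1 hf y hy).1
    linarith [H.neg_one_le_unitalDeg y]

lemma IsModel.comp_cobarDatum_weight (M : H.IsModel c) (n : ℕ) :
    (M.cobarDatum w_zero hw).comp n (w n) = (M.cobarDatum w_zero hw).degreePart n :=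
  CobarDatum.comp_le_degreePart.antisymm fun _ hf => CobarDatum.mem_comp.2 fun y hy =>
    have hdeg := CobarDatum.mem_degreePart.1 hf y hy
    ⟨hdeg, H.wt_of_degree hdeg⟩

lemma IsModel.comp_cobarDatum_of_ne_weight (M : H.IsModel c) {n : ℕ} {j : ℤ} (hj : j ≠ w n) :
    (M.cobarDatum w_zero hw).comp n j = ⊥ :=
  eq_bot_iff.2 fun _ hf => Finsupp.ext fun y => by_contra fun hy =>
    have ⟨hdeg, hwt⟩ := CobarDatum.mem_comp.1 hf y hy
    hj (hwt.symm.trans (H.wt_of_degree hdeg))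

/-- The elements of cohomological degree `n` are the cochains on `P_n`. -/
def IsModel.cochainEquiv (M : H.IsModel c) (w_zero : w 0 = 0) (hw : StrictMono w)
    (h0 : 𝒜.grading 0 = Submodule.span F {1}) (hT : IsTrivialGMod T) (n : ℕ) :
    (M.cobarDatum w_zero hw).degreePart n ≃ₗ[F] HomSp T R n :=
  H.cochainEquiv h0 hT n

lemma IsModel.cochainEquiv_apply (M : H.IsModel c) (h0 : 𝒜.grading 0 = Submodule.span F {1})
    (hT : IsTrivialGMod T) (n : ℕ) (f) :
    M.cochainEquiv w_zero hw h0 hT n f = H.cochain n f.1 :=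
  H.cochainEquiv_apply h0 hT f

lemma IsModel.map_cochainEquiv_comp (M : H.IsModel c)
    (h0 : 𝒜.grading 0 = Submodule.span F {1}) (hT : IsTrivialGMod T) (n : ℕ) (j : ℤ) :
    (((M.cobarDatum w_zero hw).comp n j).comap
      ((M.cobarDatum w_zero hw).degreePart n).subtype).map
        (M.cochainEquiv w_zero hw h0 hT n).toLinearMap = homDeg T R n j := by
  obtain rfl | hj := eq_or_ne j (w n)
  · rw [M.comp_cobarDatum_weight, Submodule.comap_subtype_self, H.homDeg_weight hT,
      Submodule.map_top, LinearEquiv.range]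
  · rw [M.comp_cobarDatum_of_ne_weight hj, Submodule.comap_bot, Submodule.ker_subtype,
      H.homDeg_of_ne_weight hj, Submodule.map_bot]

/-- The `A_∞`-algebra dual to the minimal model is a structure on the Koszul dual. -/
def IsModel.ainftyOnExt (M : H.IsModel c) (h0 : 𝒜.grading 0 = Submodule.span F {1})
    (hT : IsTrivialGMod T) (hμ : IsYonedaMul T R R μ) :
    AInf.AInftyOnExt 𝒜 T R μ (M.cobarDatum w_zero hw).toAInfty :=
  (M.cobarDatum w_zero hw).ainftyOnExt
    (fun n => M.cochainEquiv w_zero hw h0 hT n ≪≫ₗ extEquiv hT R n)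
    (fun _ _ => M.comp_cobarDatum_eq_bot)
    (fun n j => by
      rw [LinearEquiv.coe_trans, Submodule.map_comp, M.map_cochainEquiv_comp,
        map_extEquiv_homDeg hT])
    (fun i j f g hf hg hm => by
      have hcocyc (n : ℕ) (f : HomSp T R n) : f ∈ cocyc T R n :=
        cocyc_eq_top hT R n ▸ Submodule.mem_top
      have hYoneda := hμ i j _ (hcocyc i (H.cochain i f)) _ (hcocyc j (H.cochain j g))
        (M.chainLift h0 hT w_zero hw j g) (hcocyc _ _)
      simp only [LinearEquiv.trans_apply, cochainEquiv_apply]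
      simp only [← extEquiv_apply hT R, ← M.cochain_ainfOp_two h0 hT w_zero hw hf hg] at hYoneda
      exact hYoneda.symm)

end HomogeneousBasis

end AInftyOnExt

section Arithmetic

/-- There are indices `i_1, …, i_q` with `q ≥ 2`, `i_1 + ⋯ + i_q + 2 - q = n` and
`w i_1 + ⋯ + w i_q = w n`, as there must be for an operation `m_q` of bidegree `(2 - q, 0)` to be
nonzero when `E^n` is concentrated in shift-degree `w n`. -/
def AdmitsArity (w : ℕ → ℕ) (q : ℕ) : Prop :=
  2 ≤ q ∧ ∃ (n : ℕ) (l : List ℕ), l.length = q ∧ (l.map w).sum = w n ∧ l.sum + 2 = n + q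

lemma jump_three_eq {d : ℕ} (hd : 3 < d) (n : ℕ) : jump d 3 n = n + n / 3 * (d - 3) := by
  obtain ⟨e, rfl⟩ := Nat.exists_eq_add_of_lt hd
  rw [jump, show (n - n % 3) / 3 = n / 3 by omega, show 3 + e + 1 - 3 = e + 1 by omega,
    show 3 + e + 1 = 3 + (e + 1) by omega, mul_add]
  omega

lemma jump_three_strictMono {d : ℕ} (hd : 3 < d) : StrictMono (jump d 3) :=
  strictMono_nat_of_lt_succ fun n => by
    rw [jump_three_eq hd, jump_three_eq hd]
    exact Nat.add_lt_add_of_lt_of_le n.lt_succ_self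
      (Nat.mul_le_mul_right _ (Nat.div_le_div_right n.le_succ))

lemma sum_map_jump_three {d : ℕ} (hd : 3 < d) (l : List ℕ) :
    (l.map (jump d 3)).sum = l.sum + (l.map (· / 3)).sum * (d - 3) := by
  induction l with
  | nil => simp
  | cons n l ih =>
    simp only [List.map_cons, List.sum_cons, ih, jump_three_eq hd]
    ring

lemma AdmitsArity.exists_eq_mul_add_two {d q : ℕ} (hd : 3 < d) (h : AdmitsArity (jump d 3) q) :
    ∃ k, q = k * (d - 3) + 2 := by
  obtain ⟨hq, n, l, -, hw, hn⟩ := h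
  rw [sum_map_jump_three hd, jump_three_eq hd] at hw
  have : (l.map (· / 3)).sum * (d - 3) ≤ n / 3 * (d - 3) := by omega
  refine ⟨n / 3 - (l.map (· / 3)).sum, ?_⟩
  rw [Nat.sub_mul]
  omega

end Arithmetic

section Main

variable {F : Type} [Field F] {𝒜 : GradedAlg F} {T : 𝒜.GMod} {R : MinRes T}
  {μ : ∀ i j : ℕ, ExtQ T R i →ₗ[F] ExtQ T R j →ₗ[F] ExtQ T R (i + j)}
  {w : ℕ → ℕ}

lemma HomogeneousBasis.IsModel.ainfOp_eq_zero [Nontrivial 𝒜.A] {H : HomogeneousBasis R w}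
    {c : H.Letter → FreeAlgebra F H.Letter} (M : H.IsModel c) {w_zero : w 0 = 0}
    {hw : StrictMono w} {q : ℕ} (hq : ¬ AdmitsArity w q) :
    (M.cobarDatum w_zero hw).ainfOp q = 0 := by
  let index (y : Option H.Letter) : ℕ := (unitalDeg H.degree y + 1).toNat
  have index_cast (y : Option H.Letter) : (index y : ℤ) = unitalDeg H.degree y + 1 :=
    Int.toNat_of_nonneg (by linarith [H.neg_one_le_unitalDeg y])
  have sum_index (l : List (Option H.Letter)) :
      ((l.map index).sum : ℤ) = (l.map (unitalDeg H.degree)).sum + l.length := by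
    induction l with
    | nil => rfl
    | cons y l ih =>
      simp only [List.map_cons, List.sum_cons, List.length_cons, Nat.cast_add, ih, index_cast]
      push_cast
      ring
  refine (M.cobarDatum w_zero hw).ainfOp_eq_zero <|
    (M.cobarDatum w_zero hw).barOp_eq_zero fun l y hwt hdeg hl => hq ?_
  change (l.map fun z => (w (index z) : ℤ)).sum = w (index y) at hwt
  change (l.map (unitalDeg H.degree)).sum = unitalDeg H.degree y - 1 at hdeg
  refine ⟨hl ▸ H.two_le_length_of_sum_wt_eq w_zero hw hwt hdeg, index y, l.map index,
    by rw [List.length_map, hl], ?_, ?_⟩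
  · rw [← Nat.cast_inj (R := ℤ), Nat.cast_list_sum, List.map_map, List.map_map]
    exact hwt
  · have := sum_index l
    have := index_cast y
    omega

lemma exists_ainfty_of_nontrivial [Nontrivial 𝒜.A] (h0 : 𝒜.grading 0 = Submodule.span F {1})
    (hT : IsTrivialGMod T) (w_zero : w 0 = 0) (hw : StrictMono w)
    (hgen : ∀ n, (R.P n).GenInDeg (w n)) (hμ : IsYonedaMul T R R μ) :
    ∃ S : AInf.BigradedAInfty F, Nonempty (AInf.AInftyOnExt 𝒜 T R μ S) ∧
      (∀ q, ¬ AdmitsArity w q → S.m q = 0) ∧ AInf.GeneratedByE1 S := by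
  obtain ⟨H⟩ := nonempty_homogeneousBasis h0 hT hgen
  obtain ⟨c, M⟩ : ∃ c, H.IsModel c := (H.isFreeResolution h0 hT w_zero hw).exists_isMinimalModel
  exact ⟨(M.cobarDatum w_zero hw).toAInfty, ⟨M.ainftyOnExt h0 hT hμ⟩,
    fun _ hq => M.ainfOp_eq_zero hq,
    (M.cobarDatum w_zero hw).generatedByE1_toAInfty
      fun _ hn _ hu h => M.eq_zero_of_repr_linearCombination_eq_zero h0 hT w_zero hw hn hu h⟩

/-- The cobar datum without generators; its `A_∞`-algebra is `0`. -/
def emptyCobarDatum (F : Type) [Field F] : CobarDatum F Empty where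
  wt := nofun
  deg := nofun
  c := nofun
  c_mem := nofun
  koszulDer_c := nofun
  two_le_length _ := nofun
  finite _ := Set.toFinite _

lemma exists_ainfty_of_subsingleton [Subsingleton 𝒜.A] :
    ∃ S : AInf.BigradedAInfty F, Nonempty (AInf.AInftyOnExt 𝒜 T R μ S) ∧
      (∀ q, S.m q = 0) ∧ AInf.GeneratedByE1 S := by
  have : Subsingleton T.M := Module.subsingleton 𝒜.A T.M
  have (n : ℕ) : Subsingleton (cocyc T R n) :=
    ⟨fun _ _ => Subtype.ext (LinearMap.ext fun _ => Subsingleton.elim _ _)⟩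
  have (n : ℕ) : Subsingleton (ExtQ T R n) := inferInstance
  have : Subsingleton (emptyCobarDatum F).toAInfty.V :=
    inferInstanceAs (Subsingleton (Empty →₀ F))
  exact ⟨(emptyCobarDatum F).toAInfty,
    ⟨(emptyCobarDatum F).ainftyOnExt (fun _ => 0) (fun _ _ _ => Subsingleton.elim _ _)
      (fun _ _ => Subsingleton.elim _ _) (fun _ _ _ _ _ _ _ => Subsingleton.elim _ _)⟩,
    fun _ => MultilinearMap.ext fun _ => Subsingleton.elim _ _, fun _ _ => Subsingleton.elim _ _⟩

end Main

end PiecewiseKoszul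

open GradedAlg AInf PiecewiseKoszul in
theorem exists_ainfty_structure_generated_by_E1_general
    {F : Type} [Field F] (𝒜 : GradedAlg F) (h0 : 𝒜.grading 0 = Submodule.span F {1})
    (w : ℕ → ℕ) (w_zero : w 0 = 0) (hw : StrictMono w)
    (T : 𝒜.GMod) (hT : IsTrivialGMod T)
    (hpure : ∃ R' : MinRes T, ∀ n, (R'.P n).GenInDeg (w n))
    (R : MinRes T)
    (μ : ∀ i j : ℕ, ExtQ T R i →ₗ[F] ExtQ T R j →ₗ[F] ExtQ T R (i + j))
    (hμ : IsYonedaMul T R R μ) :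
    ∃ S : BigradedAInfty F, Nonempty (AInftyOnExt 𝒜 T R μ S) ∧
      (∀ q : ℕ, ¬ AdmitsArity w q → S.m q = 0) ∧
      GeneratedByE1 S := by
  cases subsingleton_or_nontrivial 𝒜.A with
  | inl _ =>
    obtain ⟨S, hS, hm, hgen⟩ := exists_ainfty_of_subsingleton (R := R) (μ := μ)
    exact ⟨S, hS, fun q _ => hm q, hgen⟩
  | inr _ =>
    obtain ⟨R', hR'⟩ := hpure
    exact exists_ainfty_of_nontrivial h0 hT w_zero hw (genInDeg_of_genInDeg h0 R' R hR') hμ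

open GradedAlg AInf in
/-- **Theorem 5.6(1).** Let `A = F ⊕ A_1 ⊕ A_2 ⊕ ⋯` be a graded algebra generated in
degree `1` which is piecewise-Koszul with period `3` and jump degree `d > 3`.  Then
there is a bigraded `A_∞`-structure `{m_q}` on the Koszul dual `E(A)` — with `m_1 = 0`,
`m_2` the Yoneda product and `m_q = 0` unless `q = k(d−3)+2` for some `k ∈ ℕ` — under
which `E(A)` is generated by `E^1(A) = Ext^1_A(F,F)`. -/
theorem exists_ainfty_structure_generated_by_E1
    {F : Type} [Field F] (𝒜 : GradedAlg F) (hA : 𝒜.Standing)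
    (h0 : 𝒜.grading 0 = Submodule.span F {1})
    (d : ℕ) (hd : 3 < d)
    (T : 𝒜.GMod) (hT : IsTrivialGMod T) (hpk : 𝒜.IsPKAlg 3 d T)
    (R : MinRes T)
    (μ : ∀ i j : ℕ, ExtQ T R i →ₗ[F] ExtQ T R j →ₗ[F] ExtQ T R (i + j))
    (hμ : IsYonedaMul T R R μ) :
    ∃ S : BigradedAInfty F, Nonempty (AInftyOnExt 𝒜 T R μ S) ∧
      (∀ q : ℕ, (¬ ∃ k : ℕ, q = k * (d - 3) + 2) → S.m q = 0) ∧
      GeneratedByE1 S := by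
  obtain ⟨S, hS, hm, hgen⟩ := exists_ainfty_structure_generated_by_E1_general 𝒜 h0 (jump d 3)
    (by simp [jump]) (PiecewiseKoszul.jump_three_strictMono hd) T hT
    (by simpa [IsPKAlg, IsPKMod] using hpk) R μ hμ
  exact ⟨S, hS, fun q hq => hm q fun h => hq (h.exists_eq_mul_add_two hd), hgen⟩
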